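/- Let α > −1 and 0 < r < 1 satisfy 1 ≤ (α + 1) log(1/r). Then for every f ∈ 𝒮 with logarithmic coefficients γ_n, the inequality ∑_{n=1}^∞ n(n+α) |γ_n|² r^{2n} ≤ r²/(1−r²) + α log(1/(1−r²)) holds; the inequality is strict unless f(z) = z/(1−e^{iθ}z)² for some θ ∈ ℝ. -/

import Mathlib

/-!
The proof is a discrete form of Löwner's method, applied to a weighted energy whose weights move
along the flow of the Koebe function.

A bounded normalized univalent function with values in the disk of radius `M` is factored by
Koebe's square-root construction: as long as it omits values of modulus `c ^ 2` (after division
by `M`), it is lifted through a rotated Blaschke product `z (a - z) / (1 - a z)`,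
`a = 2 c / (1 + c ^ 2)` (`SM.lift`, `exists_factor`). As `c → 1` the logarithm of `F z / z` becomes
a limit of logarithms of compositions of such Blaschke products (`Chain`, `exists_chain_seq`); the
dilations `f (s z) / s` reduce the class `𝒮` to bounded functions (`dilate_seq`).

With `c_n` the Taylor coefficients of `log (f z / z)`, the energy is
`∑ T_n(w) (4 / n - n |c_n| ^ 2)`. One Blaschke step is, up to `O((1 - a) ^ 2)`, one Euler step of
Löwner's equation (`step_error`), and while it is performed the parameter `w` moves along
`w' = -w (1 - w) / (1 + w)`. If the decay rates `n d_n` of the weights satisfy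
`T_n - T_{n+1} = d_n + d_{n+1}` and `d_n ≥ 0`, the first-order change of the energy telescopes to
`∑ d_n |s_n + s_{n-1}| ^ 2 ≥ 0`, where `s_n = 1 + ∑_{i ≤ n} i c_i` (`energy_step`). A chain has
`O(1 / (1 - a))` links, so the errors vanish in the limit and the energy of every `f` in `𝒮` is
nonnegative (`chain_energy`, `energy_S`).

For `ρ = r ^ 2` there are such weights with `T_n(ρ) = ρ ^ n (n + α)`, and then nonnegativity of
the energy is the asserted inequality. Nonnegativity of `d_n` amounts to
`2 ρ / (1 - ρ ^ 2) ≤ 1 + α`; by `x < sinh x` the hypothesis on `α` and `r` gives this with strict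
inequality (`cond_rho`). The slack allows the first weight to be decreased by `η w / (1 - w) ^ 2`
with some `η > 0` (`exists_weights`), so the inequality improves by a positive multiple of
`4 - |c_1| ^ 2` (`sum_le_with_gain`).

Hence equality forces `|c_1| = 2`, the equality case of Bieberbach's inequality. The bounds
`|c_1| ≤ 2` and `|c_1 ^ 2 / 2 - c_2| ≤ 1` pass from chains to `𝒮` (`two_bound_S`); transported to
the points of `(-1, 1)` by Koebe transforms they become a differential inequality that determines
the pre-Schwarzian derivative of `f` once `|c_1| = 2` (`pre_rigid`), and integrating twice gives a
rotation of the Koebe function (`koebe_of_co_one`).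
-/

open Complex Metric Real

/-- The class `𝒮` of normalized univalent (analytic and injective) functions
on the unit disk. -/
def InClassS (f : ℂ → ℂ) : Prop :=
  AnalyticOnNhd ℂ f (ball (0 : ℂ) 1) ∧ Set.InjOn f (ball (0 : ℂ) 1) ∧
    f 0 = 0 ∧ deriv f 0 = 1

/-- `γ` are the logarithmic coefficients of `f`: there is an analytic branch `g`
of `log (f z / z)` on the unit disk with `g 0 = 0` whose Taylor coefficients at `0`
are `2 * γ n` for `n ≥ 1`. -/
def IsLogCoeffs (f : ℂ → ℂ) (γ : ℕ → ℂ) : Prop :=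
  ∃ g : ℂ → ℂ, AnalyticOnNhd ℂ g (ball (0 : ℂ) 1) ∧ g 0 = 0 ∧
    (∀ z ∈ ball (0 : ℂ) 1, z ≠ 0 → Complex.exp (g z) = f z / z) ∧
    ∀ n : ℕ, 1 ≤ n → iteratedDeriv n g 0 = (n.factorial : ℂ) * (2 * γ n)

/-- `f` coincides on the unit disk with a rotation `z / (1 - e^{iθ} z)^2`
of the Koebe function. -/
def IsKoebeRotation (f : ℂ → ℂ) : Prop :=
  ∃ θ : ℝ, Set.EqOn f
    (fun z => z / (1 - Complex.exp (θ * Complex.I) * z) ^ 2) (ball (0 : ℂ) 1)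

namespace LogCoeff

/-! ### Analytic logarithms and Taylor coefficients -/

/-- A zero-free analytic function on the unit disk has an analytic logarithm. -/
lemma exists_log {h : ℂ → ℂ} (hd : DifferentiableOn ℂ h (ball 0 1))
    (hne : ∀ z ∈ ball (0 : ℂ) 1, h z ≠ 0) (l₀ : ℂ) (hl : Complex.exp l₀ = h 0) :
    ∃ l : ℂ → ℂ, DifferentiableOn ℂ l (ball 0 1) ∧ l 0 = l₀ ∧
      ∀ z ∈ ball (0 : ℂ) 1, Complex.exp (l z) = h z := by
  have h0 : (0 : ℂ) ∈ ball (0 : ℂ) 1 := by simp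
  have hq : DifferentiableOn ℂ (fun z => deriv h z / h z) (ball 0 1) :=
    (hd.deriv isOpen_ball).div hd hne
  obtain ⟨l, hl0, hl'⟩ := hq.isExactOn_ball.with_val_at 0 l₀
  have hld : DifferentiableOn ℂ l (ball 0 1) := fun z hz =>
    (hl' z hz).differentiableAt.differentiableWithinAt
  refine ⟨l, hld, hl0, fun z hz => ?_⟩
  have hconst : ∀ w ∈ ball (0 : ℂ) 1, HasDerivAt (fun w => h w * Complex.exp (-l w)) 0 w := by
    intro w hw
    have h1 := (hd.differentiableAt (isOpen_ball.mem_nhds hw)).hasDerivAt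
    have h2 := (hl' w hw).fun_neg.cexp
    refine (h1.mul h2).congr_deriv ?_
    field_simp [hne w hw]
    ring
  have := (convex_ball (0 : ℂ) 1).is_const_of_fderivWithin_eq_zero (𝕜 := ℂ)
    (f := fun w => h w * Complex.exp (-l w))
    (fun w hw => (hconst w hw).differentiableAt.differentiableWithinAt)
    (fun w hw => by
      rw [((hconst w hw).hasFDerivAt.hasFDerivWithinAt).fderivWithin
        (isOpen_ball.uniqueDiffWithinAt hw)]
      ext; simp) hz h0
  simp only [hl0, ← hl, Complex.exp_neg] at this
  have e1 := Complex.exp_ne_zero (l z)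
  have e2 := Complex.exp_ne_zero l₀
  field_simp at this
  exact this.symm

/-- The `k`-th Taylor coefficient of `g` at the origin. -/
noncomputable def co (g : ℂ → ℂ) (k : ℕ) : ℂ := iteratedDeriv k g 0 / (k.factorial : ℂ)

lemma hasSum_co {g : ℂ → ℂ} {R : ℝ} (hg : DifferentiableOn ℂ g (ball 0 R)) {z : ℂ}
    (hz : ‖z‖ < R) : HasSum (fun k => co g k * z ^ k) (g z) := by
  have := Complex.hasSum_taylorSeries_on_ball hg (z := z) (by simpa using hz)
  refine this.congr_fun ?_ |> fun h => h
  intro k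
  simp [co]
  ring

lemma co_unique {g : ℂ → ℂ} {c : ℕ → ℂ} {R : ℝ} (hR : 0 < R)
    (h : ∀ z : ℂ, ‖z‖ < R → HasSum (fun k => c k * z ^ k) (g z)) (k : ℕ) : co g k = c k := by
  have hp : HasFPowerSeriesOnBall g (FormalMultilinearSeries.ofScalars ℂ c) 0
      (ENNReal.ofReal R) := by
    refine ⟨?_, by simpa using hR, fun {y} hy => ?_⟩
    · refine ENNReal.le_of_forall_nnreal_lt fun r hr => ?_
      have hr' : (r : ℝ) < R := by
        have := (ENNReal.lt_ofReal_iff_toReal_lt ENNReal.coe_ne_top).1 hr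
        simpa using this
      refine FormalMultilinearSeries.le_radius_of_tendsto _ (l := 0) ?_
      have h1 := (h (r : ℂ) (by simpa using hr')).summable.tendsto_atTop_zero.norm
      simpa [FormalMultilinearSeries.ofScalars_norm] using h1
    · have : ‖y‖ < R := by
        rw [Metric.mem_eball, edist_zero_right, ← ofReal_norm] at hy
        exact (ENNReal.ofReal_lt_ofReal_iff hR).1 hy
      simpa [FormalMultilinearSeries.ofScalars_apply_eq, mul_comm] using h y this
  have := hp.factorial_smul 1 k
  simp only [FormalMultilinearSeries.ofScalars_apply_eq, one_pow, smul_eq_mul, mul_one] at this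
  rw [co, iteratedDeriv_eq_iteratedFDeriv, ← this]
  have : (k.factorial : ℂ) ≠ 0 := by exact_mod_cast k.factorial_ne_zero
  simp
  field_simp

lemma co_bound {g : ℂ → ℂ} {R R₁ B : ℝ} (hg : DifferentiableOn ℂ g (ball 0 R)) (h0 : 0 < R₁)
    (h1 : R₁ < R) (hB : ∀ z : ℂ, ‖z‖ ≤ R₁ → ‖g z‖ ≤ B) (k : ℕ) : ‖co g k‖ ≤ B / R₁ ^ k := by
  have hd : DiffContOnCl ℂ g (ball 0 R₁) := by
    refine (hg.mono ?_).diffContOnCl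
    rw [closure_ball _ h0.ne']
    exact closedBall_subset_ball h1
  have := Complex.norm_iteratedDeriv_le_of_forall_mem_sphere_norm_le k h0 hd (C := B)
    (fun z hz => hB z (by simpa using (mem_sphere_zero_iff_norm.1 hz).le))
  rw [co, norm_div]
  have hk : (0 : ℝ) < k.factorial := by exact_mod_cast k.factorial_pos
  rw [div_le_iff₀ (by simpa using hk)]
  calc _ ≤ _ := this
    _ = _ := by simp; ring

lemma co_add {F G : ℂ → ℂ} {R : ℝ} (hR : 0 < R) (hF : DifferentiableOn ℂ F (ball 0 R))
    (hG : DifferentiableOn ℂ G (ball 0 R)) (k : ℕ) :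
    co (fun z => F z + G z) k = co F k + co G k :=
  co_unique (c := fun k => co F k + co G k) hR (fun z hz => by
    simpa [add_mul] using (hasSum_co hF hz).add (hasSum_co hG hz)) k

lemma co_const_mul {F : ℂ → ℂ} {R : ℝ} (hR : 0 < R) (hF : DifferentiableOn ℂ F (ball 0 R))
    (b : ℂ) (k : ℕ) : co (fun z => b * F z) k = b * co F k :=
  co_unique (c := fun k => b * co F k) hR (fun z hz => by
    simpa [mul_assoc] using (hasSum_co hF hz).mul_left b) k

lemma co_rot {F : ℂ → ℂ} {R : ℝ} (hR : 0 < R) (hF : DifferentiableOn ℂ F (ball 0 R))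
    {b : ℂ} (hb : ‖b‖ ≤ 1) (k : ℕ) : co (fun z => F (b * z)) k = b ^ k * co F k :=
  co_unique (c := fun k => b ^ k * co F k) hR (fun z hz => by
    have : ‖b * z‖ < R := by
      rw [norm_mul]; nlinarith [norm_nonneg z, norm_nonneg b]
    refine (hasSum_co hF this).congr_fun fun k => ?_
    ring) k

lemma co_shift {F : ℂ → ℂ} {R : ℝ} (hR : 0 < R) (hF : DifferentiableOn ℂ F (ball 0 R)) :
    co (fun z => z * F z) 0 = 0 ∧ ∀ k, co (fun z => z * F z) (k + 1) = co F k := by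
  have key := co_unique (g := fun z => z * F z)
    (c := fun k => match k with | 0 => 0 | k + 1 => co F k) hR (fun z hz => by
    rw [← hasSum_nat_add_iff' 1]
    simp only [Finset.range_one, Finset.sum_singleton, zero_mul, sub_zero]
    refine ((hasSum_co hF hz).mul_left z).congr_fun fun k => ?_
    ring)
  exact ⟨key 0, fun k => key (k + 1)⟩

lemma co_mul_deriv {g : ℂ → ℂ} {R : ℝ} (hR : 0 < R) (hg : DifferentiableOn ℂ g (ball 0 R))
    (k : ℕ) : co (fun z => z * deriv g z) k = k * co g k := by
  have hs := co_shift hR (hg.deriv isOpen_ball)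
  rcases k with _ | k
  · simpa using hs.1
  · rw [hs.2, co, co, ← iteratedDeriv_succ', Nat.factorial_succ]
    have : (k.factorial : ℂ) ≠ 0 := by exact_mod_cast k.factorial_ne_zero
    have : (k : ℂ) + 1 ≠ 0 := by exact_mod_cast k.succ_ne_zero
    push_cast
    field_simp

lemma co_zero (g : ℂ → ℂ) : co g 0 = g 0 := by simp [co]

lemma co_const (b : ℂ) (k : ℕ) : co (fun _ => b) k = if k = 0 then b else 0 := by
  refine co_unique (c := fun k => if k = 0 then b else 0) one_pos (fun z _ => ?_) k
  convert hasSum_ite_eq 0 b using 2 with j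
  split_ifs with h <;> simp [h]

lemma co_congr {F G : ℂ → ℂ} {R : ℝ} (hR : 0 < R) (hG : DifferentiableOn ℂ G (ball 0 R))
    (h : ∀ z : ℂ, ‖z‖ < R → F z = G z) (k : ℕ) : co F k = co G k :=
  co_unique hR (fun z hz => by rw [h z hz]; exact hasSum_co hG hz) k

/-! ### The elementary quadratic Blaschke step -/

/-- The Blaschke product `z (a - z) / (1 - a z)`. -/
noncomputable def bp (a : ℝ) (z : ℂ) : ℂ := z * (a - z) / (1 - a * z)

/-- The branch of `log (bp a z / (a z))` vanishing at the origin. -/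
noncomputable def bL (a : ℝ) (z : ℂ) : ℂ := Complex.log (1 - z / a) - Complex.log (1 - a * z)

lemma one_sub_ne {z : ℂ} (hz : ‖z‖ < 1) : 1 - z ≠ 0 := by
  intro h
  have : z = 1 := by linear_combination -h
  simp [this] at hz

lemma one_sub_mul_ne {a : ℝ} (ha0 : 0 < a) (ha1 : a < 1) {z : ℂ} (hz : ‖z‖ < 1) :
    1 - a * z ≠ 0 := by
  refine one_sub_ne ?_
  rw [norm_mul, Complex.norm_real, Real.norm_of_nonneg ha0.le]
  nlinarith [norm_nonneg z]

lemma one_sub_slit {z : ℂ} (hz : ‖z‖ < 1) : 1 - z ∈ slitPlane := by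
  have := Complex.mem_slitPlane_of_norm_lt_one (z := -z) (by simpa using hz)
  simpa [sub_eq_add_neg] using this

lemma one_sub_mul_slit {a : ℝ} (ha0 : 0 < a) (ha1 : a < 1) {z : ℂ} (hz : ‖z‖ < 1) :
    1 - a * z ∈ slitPlane := by
  refine one_sub_slit ?_
  rw [norm_mul, Complex.norm_real, Real.norm_of_nonneg ha0.le]
  nlinarith [norm_nonneg z]

lemma one_sub_div_slit {a : ℝ} (ha0 : 0 < a) {z : ℂ} (hz : ‖z‖ < a) :
    1 - z / a ∈ slitPlane := by
  refine one_sub_slit ?_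
  rw [norm_div, Complex.norm_real, Real.norm_of_nonneg ha0.le, div_lt_one ha0]
  exact hz

lemma bp_norm_aux {a : ℝ} (ha0 : 0 < a) (ha1 : a < 1) {z : ℂ} (hz : ‖z‖ < 1) :
    ‖(a - z) / (1 - a * z)‖ ≤ 1 := by
  rw [norm_div, div_le_one (norm_pos_iff.2 (one_sub_mul_ne ha0 ha1 hz))]
  refine le_of_sq_le_sq ?_ (norm_nonneg _)
  rw [← Complex.normSq_eq_norm_sq, ← Complex.normSq_eq_norm_sq]
  have hz2 : Complex.normSq z < 1 := by
    rw [Complex.normSq_eq_norm_sq]; nlinarith [norm_nonneg z]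
  simp only [Complex.normSq_apply] at *
  simp
  nlinarith [mul_pos (sub_pos.2 hz2) (by nlinarith : 0 < 1 - a ^ 2)]

lemma bp_norm_le {a : ℝ} (ha0 : 0 < a) (ha1 : a < 1) {z : ℂ} (hz : ‖z‖ < 1) :
    ‖bp a z‖ ≤ ‖z‖ := by
  rw [bp, mul_div_assoc, norm_mul]
  exact mul_le_of_le_one_right (norm_nonneg _) (bp_norm_aux ha0 ha1 hz)

lemma bp_diff {a : ℝ} (ha0 : 0 < a) (ha1 : a < 1) : DifferentiableOn ℂ (bp a) (ball 0 1) := by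
  intro z hz
  have := one_sub_mul_ne ha0 ha1 (z := z) (by simpa using hz)
  unfold bp
  refine DifferentiableAt.differentiableWithinAt ?_
  fun_prop (disch := assumption)

lemma bL_hasDerivAt {a : ℝ} (ha0 : 0 < a) (ha1 : a < 1) {z : ℂ} (hz : ‖z‖ < a) :
    HasDerivAt (bL a) (-(1 / (a - z)) + a / (1 - a * z)) z := by
  have h1 := ((hasDerivAt_const z (1 : ℂ)).sub ((hasDerivAt_id z).div_const (a : ℂ))).clog
    (one_sub_div_slit ha0 hz)
  have h2 := ((hasDerivAt_const z (1 : ℂ)).sub ((hasDerivAt_id z).const_mul (a : ℂ))).clog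
    (one_sub_mul_slit ha0 ha1 (hz.trans ha1))
  refine (h1.sub h2).congr_deriv ?_
  have haC : (a : ℂ) ≠ 0 := by exact_mod_cast ha0.ne'
  have e1 := slitPlane_ne_zero (one_sub_div_slit ha0 hz)
  have e2 := one_sub_mul_ne ha0 ha1 (hz.trans ha1)
  have e3 : (a : ℂ) - z ≠ 0 := by
    intro h; apply e1; field_simp; simpa using h
  simp only [Pi.sub_apply, id]
  field_simp
  ring

lemma bL_diff {a : ℝ} (ha0 : 0 < a) (ha1 : a < 1) : DifferentiableOn ℂ (bL a) (ball 0 a) :=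
  fun _ hz => (bL_hasDerivAt ha0 ha1 (by simpa using hz)).differentiableAt.differentiableWithinAt

lemma bL_zero (a : ℝ) : bL a 0 = 0 := by simp [bL]

lemma exp_bL {a : ℝ} (ha0 : 0 < a) (ha1 : a < 1) {z : ℂ} (hz : ‖z‖ < a) :
    Complex.exp (bL a z) = (a - z) / (1 - a * z) / a := by
  rw [bL, Complex.exp_sub, Complex.exp_log (slitPlane_ne_zero (one_sub_div_slit ha0 hz)),
    Complex.exp_log (one_sub_mul_ne ha0 ha1 (hz.trans ha1))]
  have haC : (a : ℂ) ≠ 0 := by exact_mod_cast ha0.ne'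
  field_simp

lemma bp_eq {a : ℝ} (ha0 : 0 < a) (ha1 : a < 1) {z : ℂ} (hz : ‖z‖ < a) :
    bp a z = a * z * Complex.exp (bL a z) := by
  rw [exp_bL ha0 ha1 hz, bp]
  have haC : (a : ℂ) ≠ 0 := by exact_mod_cast ha0.ne'
  field_simp

lemma norm_exp_bL {a : ℝ} (ha0 : 0 < a) (ha1 : a < 1) {z : ℂ} (hz : ‖z‖ < a) :
    ‖Complex.exp (bL a z)‖ ≤ 1 / a := by
  rw [exp_bL ha0 ha1 hz, norm_div, Complex.norm_real, Real.norm_of_nonneg ha0.le]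
  gcongr
  exact bp_norm_aux ha0 ha1 (hz.trans ha1)

/-- `Chain a j g` says that `w ↦ a ^ j * w * exp (g w)` is a composition of `j` rotated copies of
the Blaschke product `bp a`; the function `g` is the associated analytic logarithm. -/
inductive Chain (a : ℝ) : ℕ → (ℂ → ℂ) → Prop
  | zero : Chain a 0 (fun _ => 0)
  | step {j : ℕ} {g : ℂ → ℂ} {κ : ℂ} (h : Chain a j g) (hκ : ‖κ‖ = 1) :
      Chain a (j + 1) (fun z => g (star κ * bp a (κ * z)) + bL a (κ * z))

lemma norm_step {a : ℝ} (ha0 : 0 < a) (ha1 : a < 1) {κ z : ℂ} (hκ : ‖κ‖ = 1) (hz : ‖z‖ < 1) :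
    ‖star κ * bp a (κ * z)‖ ≤ ‖z‖ := by
  have h1 : ‖κ * z‖ = ‖z‖ := by rw [norm_mul, hκ, one_mul]
  rw [norm_mul, norm_star, hκ, one_mul, ← h1]
  exact bp_norm_le ha0 ha1 (h1 ▸ hz)

lemma Chain.spec {a : ℝ} (ha0 : 0 < a) (ha1 : a < 1) {j : ℕ} {g : ℂ → ℂ} (h : Chain a j g) :
    DifferentiableOn ℂ g (ball 0 a) ∧ g 0 = 0 ∧
      ∀ z : ℂ, ‖z‖ < a → ‖Complex.exp (g z)‖ ≤ (1 / a) ^ j := by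
  induction h with
  | zero => exact ⟨differentiableOn_const _, rfl, fun z _ => by simp⟩
  | @step j g κ h hκ ih =>
    obtain ⟨h1, h2, h3⟩ := ih
    have hk : ∀ z : ℂ, ‖κ * z‖ = ‖z‖ := fun z => by rw [norm_mul, hκ, one_mul]
    have hlt : ∀ z : ℂ, ‖z‖ < a → ‖star κ * bp a (κ * z)‖ < a := fun z hz =>
      (norm_step ha0 ha1 hκ (hz.trans ha1)).trans_lt hz
    refine ⟨?_, by simp [bp, bL_zero, h2], fun z hz => ?_⟩
    · refine DifferentiableOn.add (h1.comp (DifferentiableOn.const_mul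
        ((bp_diff ha0 ha1).comp (by fun_prop) ?_) _) ?_) ((bL_diff ha0 ha1).comp (by fun_prop) ?_)
      · intro z hz
        simp only [mem_ball_zero_iff, hk] at *
        exact hz.trans ha1
      · intro z hz
        simp only [mem_ball_zero_iff] at *
        exact hlt z hz
      · intro z hz
        simp only [mem_ball_zero_iff, hk] at *
        exact hz
    · rw [Complex.exp_add, norm_mul, pow_succ]
      gcongr
      · exact h3 _ (hlt z hz)
      · exact norm_exp_bL ha0 ha1 (by rw [hk]; exact hz)

/-- Borel–Carathéodory bound for the logarithms of a chain of bounded length. -/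
lemma Chain.bound {a : ℝ} (ha0 : 0 < a) (ha1 : a < 1) {j : ℕ} {g : ℂ → ℂ} (h : Chain a j g)
    {M R₂ R₃ : ℝ} (hM : 1 < M) (hj : (1 / a) ^ j ≤ M) (h0 : 0 < R₂) (h23 : R₂ < R₃) (h3 : R₃ ≤ a)
    {z : ℂ} (hz : ‖z‖ ≤ R₂) : ‖g z‖ ≤ 2 * Real.log M * R₂ / (R₃ - R₂) := by
  obtain ⟨h1, h2, hb⟩ := h.spec ha0 ha1
  have hl : 0 < Real.log M := Real.log_pos hM
  have := Complex.borelCaratheodory_zero (f := g) (R := R₃) (z := z) hl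
    (h1.mono (ball_subset_ball h3)) (fun w hw => by
      have := hb w ((mem_ball_zero_iff.1 hw).trans_le h3)
      rw [Complex.norm_exp] at this
      simp only [Set.mem_ofPred_eq]
      rw [Real.le_log_iff_exp_le (by linarith)]
      exact this.trans hj) (by linarith) (by simpa using hz.trans_lt h23) h2
  refine this.trans ?_
  have : 0 < R₃ - R₂ := by linarith
  gcongr

/-! ### First-order expansion of one Blaschke step -/

/-- Cauchy estimate for the derivative and second-order Taylor estimate. -/
lemma taylor_two {g : ℂ → ℂ} {R B δ R₁ : ℝ} (hδ : 0 < δ) (hR : R₁ + 2 * δ < R)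
    (hg : DifferentiableOn ℂ g (ball 0 R)) (hB : ∀ z : ℂ, ‖z‖ ≤ R₁ + 2 * δ → ‖g z‖ ≤ B)
    {z w : ℂ} (hz : ‖z‖ ≤ R₁) (hw : ‖w‖ ≤ R₁) :
    ‖deriv g z‖ ≤ B / δ ∧ ‖g w - g z - (w - z) * deriv g z‖ ≤ B / δ / δ * ‖w - z‖ * ‖w - z‖ := by
  have cauchy : ∀ (G : ℂ → ℂ) (C S : ℝ), S + δ < R → DifferentiableOn ℂ G (ball 0 R) →
      (∀ z : ℂ, ‖z‖ ≤ S + δ → ‖G z‖ ≤ C) → ∀ z : ℂ, ‖z‖ ≤ S → ‖deriv G z‖ ≤ C / δ := by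
    intro G C S hS hG hC z hz
    refine Complex.norm_deriv_le_of_forall_mem_sphere_norm_le hδ ?_ (fun u hu => hC u ?_)
    · refine (hG.mono ?_).diffContOnCl
      rw [closure_ball _ hδ.ne']
      intro u hu
      have : ‖u - z‖ ≤ δ := by simpa [dist_eq_norm] using hu
      have := norm_le_norm_add_norm_sub' u z
      simp only [mem_ball_zero_iff]
      linarith
    · have : ‖u - z‖ = δ := by simpa [dist_eq_norm] using hu
      have := norm_le_norm_add_norm_sub' u z
      linarith
  have h1 : ∀ z : ℂ, ‖z‖ ≤ R₁ + δ → ‖deriv g z‖ ≤ B / δ :=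
    cauchy g B (R₁ + δ) (by linarith) hg (fun z hz => hB z (by linarith))
  have h2 : ∀ z : ℂ, ‖z‖ ≤ R₁ → ‖deriv (deriv g) z‖ ≤ B / δ / δ :=
    cauchy (deriv g) (B / δ) R₁ (by linarith) (hg.deriv isOpen_ball) h1
  have hconv : Convex ℝ (closedBall (0 : ℂ) R₁) := convex_closedBall _ _
  have hsub : ∀ u ∈ closedBall (0 : ℂ) R₁, ball (0 : ℂ) R ∈ nhds u := fun u hu =>
    isOpen_ball.mem_nhds (by
      simp only [mem_ball_zero_iff, mem_closedBall_zero_iff] at *; linarith)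
  refine ⟨h1 z (by linarith), ?_⟩
  have hseg : segment ℝ z w ⊆ closedBall (0 : ℂ) R₁ :=
    hconv.segment_subset (by simpa using hz) (by simpa using hw)
  have key := (convex_segment (𝕜 := ℝ) z w).norm_image_sub_le_of_norm_deriv_le (𝕜 := ℂ)
    (f := fun u => g u - u * deriv g z) (C := B / δ / δ * ‖w - z‖) (x := z) (y := w)
    (fun u hu => ((hg.differentiableAt (hsub u (hseg hu))).sub (by fun_prop)))
    (fun u hu => by
      have hd : HasDerivAt (fun u => g u - u * deriv g z) (deriv g u - 1 * deriv g z) u :=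
        (hg.differentiableAt (hsub u (hseg hu))).hasDerivAt.sub
          ((hasDerivAt_id u).mul_const _)
      rw [hd.deriv, one_mul]
      have k2 := hconv.norm_image_sub_le_of_norm_deriv_le (𝕜 := ℂ) (f := deriv g) (C := B / δ / δ)
        (x := z) (y := u)
        (fun v hv => (hg.deriv isOpen_ball).differentiableAt (hsub v hv))
        (fun v hv => h2 v (by simpa using hv)) (by simpa using hz) (hseg hu)
      refine k2.trans ?_
      have : ‖u - z‖ ≤ ‖w - z‖ := by
        obtain ⟨t, ht, rfl⟩ := (segment_eq_image' ℝ z w).subset hu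
        simp only [add_sub_cancel_left, norm_smul, Real.norm_of_nonneg ht.1]
        exact mul_le_of_le_one_left (norm_nonneg _) ht.2
      have : 0 ≤ B / δ / δ := (norm_nonneg _).trans (h2 z hz)
      gcongr) (left_mem_segment _ _ _) (right_mem_segment _ _ _)
  refine le_trans (le_of_eq ?_) key
  congr 1
  ring

lemma norm_one_sub_ge (z : ℂ) {S : ℝ} (hz : ‖z‖ ≤ S) : 1 - S ≤ ‖1 - z‖ := by
  have := norm_sub_norm_le (1 : ℂ) z
  rw [norm_one] at this
  linarith

/-- One Blaschke step changes `g` by `-(1 - a)` times the right-hand side of Löwner's equation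
for `log (f z / z)` with kernel `(1 + z) / (1 - z)`, up to an error of second order that is uniform
in `g`. -/
lemma step_error {B R₁ R₂ : ℝ} (hB0 : 0 ≤ B) (h0 : 0 < R₁) (h12 : R₁ < R₂) (h2 : R₂ < 1) :
    ∃ C : ℝ, 0 ≤ C ∧ ∀ a : ℝ, R₂ < a → a < 1 → ∀ g : ℂ → ℂ, DifferentiableOn ℂ g (ball 0 a) →
      (∀ z : ℂ, ‖z‖ ≤ R₂ → ‖g z‖ ≤ B) → ∀ z : ℂ, ‖z‖ ≤ R₁ →
      ‖g (bp a z) + bL a z - g z + (1 - a) * ((1 + z) * ((1 + z * deriv g z) / (1 - z)) - 1)‖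
        ≤ C * (1 - a) ^ 2 := by
  set δ := (R₂ - R₁) / 2 with hδ
  have hδ0 : 0 < δ := by simp only [hδ]; linarith
  have hR : R₁ + 2 * δ = R₂ := by simp only [hδ]; ring
  have hd : 0 < 1 - R₁ := by linarith
  have hd2 : 0 < R₂ - R₁ := by linarith
  refine ⟨B / δ / δ * (2 / (1 - R₁)) * (2 / (1 - R₁)) + 2 * (B / δ) / (1 - R₁) ^ 2 +
    4 / ((R₂ - R₁) * (1 - R₁) * (1 - R₁) ^ 2), by positivity, ?_⟩
  intro a ha ha1 g hg hgB z hz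
  have ha0 : 0 < a := by linarith
  have hε : 0 < 1 - a := by linarith
  have hz1 : ‖z‖ < 1 := by linarith
  have hza : ‖z‖ < a := by linarith
  have hp := bp_norm_le ha0 ha1 hz1
  obtain ⟨T1, T2⟩ := taylor_two (g := g) (R := a) (B := B) (R₁ := R₁) hδ0 (by rw [hR]; exact ha) hg
    (by rw [hR]; exact hgB) hz (hp.trans hz)
  have n1 : ∀ u : ℂ, ‖u‖ ≤ R₁ → 1 - R₁ ≤ ‖1 - a * u‖ := fun u hu => norm_one_sub_ge _ (by
    rw [norm_mul, Complex.norm_real, Real.norm_of_nonneg ha0.le]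
    nlinarith [norm_nonneg u])
  have n2 : ∀ u : ℂ, ‖u‖ ≤ R₁ → 1 - R₁ ≤ ‖1 - u‖ := fun u hu => norm_one_sub_ge _ hu
  have n3 : ∀ u : ℂ, ‖u‖ ≤ R₁ → R₂ - R₁ ≤ ‖(a : ℂ) - u‖ := fun u hu => by
    have := norm_sub_norm_le (a : ℂ) u
    rw [Complex.norm_real, Real.norm_of_nonneg ha0.le] at this
    linarith
  have z1 : ∀ u : ℂ, ‖u‖ ≤ R₁ → 1 - a * u ≠ 0 := fun u hu =>
    norm_pos_iff.1 (hd.trans_le (n1 u hu))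
  have z2 : ∀ u : ℂ, ‖u‖ ≤ R₁ → 1 - u ≠ 0 := fun u hu => norm_pos_iff.1 (hd.trans_le (n2 u hu))
  have z3 : ∀ u : ℂ, ‖u‖ ≤ R₁ → (a : ℂ) - u ≠ 0 := fun u hu =>
    norm_pos_iff.1 (hd2.trans_le (n3 u hu))
  have nε : ‖(1 - a : ℂ)‖ = 1 - a := by
    rw [show (1 - a : ℂ) = ((1 - a : ℝ) : ℂ) by push_cast; ring, Complex.norm_real,
      Real.norm_of_nonneg hε.le]
  have n4 : ‖1 + z‖ ≤ 2 := (norm_add_le _ _).trans (by rw [norm_one]; linarith)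
  have hpz : bp a z - z = -((1 - a) * (z * (1 + z)) / (1 - a * z)) := by
    have := z1 z hz
    rw [bp, sub_eq_iff_eq_add, ← neg_div, div_add' _ _ _ this]
    congr 1
    ring
  have npz : ‖bp a z - z‖ ≤ 2 / (1 - R₁) * (1 - a) := by
    rw [hpz, norm_neg, norm_div, norm_mul, norm_mul, nε, mul_comm (2 / (1 - R₁)), mul_div_assoc]
    have := n1 z hz
    gcongr
    calc ‖z‖ * ‖1 + z‖ ≤ 1 * 2 := by gcongr
      _ = 2 := by ring
  have m2 : ‖(1 - a : ℂ) ^ 2 * (z * z * (1 + z) * deriv g z) / ((1 - z) * (1 - a * z))‖ ≤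
      2 * (B / δ) / (1 - R₁) ^ 2 * (1 - a) ^ 2 := by
    rw [norm_div, norm_mul, norm_pow, nε, mul_comm ((1 - a) ^ 2), mul_div_right_comm]
    refine mul_le_mul_of_nonneg_right ?_ (by positivity)
    have e1 := n1 z hz
    have e2 := n2 z hz
    have hBδ : 0 ≤ B / δ := by positivity
    rw [norm_mul, norm_mul, norm_mul, norm_mul, pow_two]
    gcongr
    calc ‖z‖ * ‖z‖ * ‖1 + z‖ ≤ 1 * 1 * 2 := by gcongr
      _ = 2 := by ring
  have m3 : ‖bL a z + 2 * (1 - a) * (z / (1 - z))‖ ≤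
      4 / ((R₂ - R₁) * (1 - R₁) * (1 - R₁) ^ 2) * (1 - a) ^ 2 := by
    have hD : ∀ u ∈ closedBall (0 : ℂ) R₁, HasDerivWithinAt
        (fun u => bL a u + 2 * (1 - a) * (u / (1 - u)))
        (-((1 - a : ℂ) ^ 2 * (1 - 2 * a * u + u ^ 2)) /
          ((a - u) * (1 - a * u) * (1 - u) ^ 2)) (closedBall (0 : ℂ) R₁) u := by
      intro u hu
      have hu' : ‖u‖ ≤ R₁ := by simpa using hu
      have e1 := z1 u hu'
      have e2 := z2 u hu'
      have e3 := z3 u hu'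
      have := (bL_hasDerivAt ha0 ha1 (z := u) (by linarith)).add
        (((hasDerivAt_id u).div ((hasDerivAt_const u (1 : ℂ)).sub (hasDerivAt_id u)) e2).const_mul
          (2 * (1 - a : ℂ)))
      refine (this.congr_deriv ?_).hasDerivWithinAt
      simp only [id, Pi.sub_apply]
      field_simp
      ring
    have := (convex_closedBall (0 : ℂ) R₁).norm_image_sub_le_of_norm_hasDerivWithin_le hD
      (C := 4 / ((R₂ - R₁) * (1 - R₁) * (1 - R₁) ^ 2) * (1 - a) ^ 2)
      (fun u hu => by
        have hu' : ‖u‖ ≤ R₁ := by simpa using hu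
        have e1 := n1 u hu'
        have e2 := n2 u hu'
        have e3 := n3 u hu'
        have hnum : ‖1 - 2 * a * u + u ^ 2‖ ≤ 4 := by
          have hu1 : ‖u‖ ≤ 1 := by linarith
          calc ‖1 - 2 * a * u + u ^ 2‖ ≤ ‖(1 : ℂ)‖ + ‖2 * a * u‖ + ‖u ^ 2‖ :=
                (norm_add_le _ _).trans (by gcongr; exact norm_sub_le _ _)
            _ ≤ 1 + 2 * 1 * 1 + 1 ^ 2 := by
                simp only [norm_one, norm_mul, Complex.norm_ofNat, Complex.norm_real,
                  Real.norm_of_nonneg ha0.le, norm_pow]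
                gcongr
            _ = 4 := by norm_num
        rw [norm_div, norm_neg, norm_mul, norm_pow, nε, mul_comm ((1 - a) ^ 2), mul_div_right_comm,
          norm_mul, norm_mul, norm_pow]
        gcongr)
      (x := 0) (y := z) (by simpa using h0.le) (by simpa using hz)
    simp only [bL_zero, zero_div, mul_zero, add_zero, sub_zero] at this
    refine this.trans (mul_le_of_le_one_right (by positivity) hz1.le)
  have split : g (bp a z) + bL a z - g z +
      (1 - a) * ((1 + z) * ((1 + z * deriv g z) / (1 - z)) - 1) =
      (g (bp a z) - g z - (bp a z - z) * deriv g z) +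
      (1 - a : ℂ) ^ 2 * (z * z * (1 + z) * deriv g z) / ((1 - z) * (1 - a * z)) +
      (bL a z + 2 * (1 - a) * (z / (1 - z))) := by
    have e1 := z1 z hz
    have e2 := z2 z hz
    rw [hpz]
    field_simp
    ring
  rw [split]
  refine (norm_add₃_le).trans ?_
  have m1 : ‖g (bp a z) - g z - (bp a z - z) * deriv g z‖ ≤
      B / δ / δ * (2 / (1 - R₁)) * (2 / (1 - R₁)) * (1 - a) ^ 2 := by
    refine T2.trans ?_
    calc _ ≤ B / δ / δ * (2 / (1 - R₁) * (1 - a)) * (2 / (1 - R₁) * (1 - a)) := by gcongr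
      _ = _ := by ring
  linarith

/-- The partial sums `1 + ∑_{i ≤ k} i c_i`, that is, the Taylor coefficients of
`(1 + z * deriv g z) / (1 - z)` when `c` are those of `g`. -/
noncomputable def sg (c : ℕ → ℂ) : ℕ → ℂ
  | 0 => 1
  | k + 1 => sg c k + (k + 1) * c (k + 1)

/-- Coefficient form of `step_error`. -/
lemma step_coeff {B R₁ R₂ : ℝ} (hB0 : 0 ≤ B) (h0 : 0 < R₁) (h12 : R₁ < R₂) (h2 : R₂ < 1) :
    ∃ C : ℝ, 0 ≤ C ∧ ∀ a : ℝ, R₂ < a → a < 1 → ∀ g : ℂ → ℂ, DifferentiableOn ℂ g (ball 0 a) →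
      g 0 = 0 → (∀ z : ℂ, ‖z‖ ≤ R₂ → ‖g z‖ ≤ B) → ∀ k : ℕ,
      ‖co (fun z => g (bp a z) + bL a z) (k + 1) - (co g (k + 1) -
        (1 - a) * (sg (co g) (k + 1) + sg (co g) k))‖ ≤ C * (1 - a) ^ 2 / R₁ ^ (k + 1) := by
  obtain ⟨C, hC, H⟩ := step_error hB0 h0 h12 h2
  refine ⟨C, hC, fun a ha ha1 g hg hg0 hgB k => ?_⟩
  have ha0 : 0 < a := by linarith
  set S : ℂ → ℂ := fun z => (1 + z * deriv g z) / (1 - z) with hS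
  have ne : ∀ z ∈ ball (0 : ℂ) a, 1 - z ≠ 0 := fun z hz =>
    one_sub_ne ((mem_ball_zero_iff.1 hz).trans ha1)
  have dg' := hg.deriv isOpen_ball
  have dzg : DifferentiableOn ℂ (fun z => z * deriv g z) (ball 0 a) := differentiableOn_id.mul dg'
  have d1 : DifferentiableOn ℂ (fun z => 1 + z * deriv g z) (ball 0 a) :=
    (differentiableOn_const 1).add dzg
  have dS : DifferentiableOn ℂ S (ball 0 a) := d1.div (by fun_prop) ne
  have dzS : DifferentiableOn ℂ (fun z => z * S z) (ball 0 a) := differentiableOn_id.mul dS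
  have dG : DifferentiableOn ℂ (fun z => g (bp a z) + bL a z) (ball 0 a) := by
    refine (hg.comp ((bp_diff ha0 ha1).mono (ball_subset_ball ha1.le)) ?_).add (bL_diff ha0 ha1)
    intro z hz
    simp only [mem_ball_zero_iff] at *
    exact (bp_norm_le ha0 ha1 (hz.trans ha1)).trans_lt hz
  have rec0 : ∀ k, co S k - co (fun z => z * S z) k = co (fun z => 1 + z * deriv g z) k := by
    intro k
    rw [sub_eq_iff_eq_add, ← co_add ha0 d1 dzS]
    refine co_congr ha0 (d1.fun_add dzS) (fun z hz => ?_) k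
    have := ne z (by simpa using hz)
    simp only [hS]
    field_simp
    ring
  have cs := co_shift ha0 dS
  have hsg : ∀ k, co S k = sg (co g) k := by
    intro k
    induction k with
    | zero => simp [co_zero, hS, sg]
    | succ k ih =>
      have := rec0 (k + 1)
      rw [cs.2, co_add ha0 (differentiableOn_const 1) dzg, co_mul_deriv ha0 hg, co_const] at this
      rw [sg, ← ih]
      simp at this
      linear_combination this
  have dh : DifferentiableOn ℂ (fun z => S z + z * S z) (ball 0 a) := dS.add dzS
  have dA : DifferentiableOn ℂ (fun z => (-1 : ℂ) * g z) (ball 0 a) := hg.const_mul _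
  have dB : DifferentiableOn ℂ (fun z => (1 - a : ℂ) * (S z + z * S z)) (ball 0 a) := dh.const_mul _
  have dE := ((dG.fun_add dA).fun_add dB).fun_add (differentiableOn_const (c := -(1 - a : ℂ)))
  have e := co_bound (k := k + 1) dE h0 (h12.trans ha) (B := C * (1 - a) ^ 2) (fun z hz => by
    refine le_trans (le_of_eq ?_) (H a ha ha1 g hg hgB z hz)
    congr 1
    simp only [hS]
    ring)
  rw [co_add ha0 ((dG.fun_add dA).fun_add dB) (differentiableOn_const _),
    co_add ha0 (dG.fun_add dA) dB,
    co_add ha0 dG dA, co_const_mul ha0 hg, co_const_mul ha0 dh, co_add ha0 dS dzS, cs.2, hsg, hsg,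
    co_const] at e
  refine le_trans (le_of_eq ?_) e
  congr 1
  simp
  ring

/-! ### The weighted energy and its behaviour under one step -/

/-- The point to which a weight parameter `w` is moved by a step of size `ε`: one Euler step of
`dw/dt = -w (1 - w) / (1 + w)`, along which `w / (1 - w) ^ 2` decays like `exp (-t)`. -/
noncomputable def wp (w ε : ℝ) : ℝ := w * (1 - ε * ((1 - w) / (1 + w)))

lemma wp_mem {ρ w ε : ℝ} (hρ : ρ < 1) (h0 : 0 < w) (h1 : w ≤ ρ) (hε : 0 ≤ ε) (hε1 : ε ≤ 1) :
    0 < wp w ε ∧ wp w ε ≤ w := by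
  have hw : 0 ≤ (1 - w) / (1 + w) := div_nonneg (by linarith) (by linarith)
  have hw1 : (1 - w) / (1 + w) < 1 := by rw [div_lt_one (by linarith)]; linarith
  have := mul_nonneg hε hw
  have : ε * ((1 - w) / (1 + w)) < 1 := by nlinarith
  refine ⟨mul_pos h0 (by linarith), ?_⟩
  rw [wp]
  nlinarith

/-- Families of weights `T w k` (attached to the coefficient of index `k + 1`) which evolve,
to first order, by `-(k + 1) d` along `w ↦ wp w ε`, where `d ≥ 0` satisfies the recursion that
makes the first-order change of the energy a nonnegative quantity. -/
structure Weights (ρ y A : ℝ) (T d : ℝ → ℕ → ℝ) : Prop where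
  T_nonneg : ∀ w, 0 < w → w ≤ ρ → ∀ k, 0 ≤ T w k
  d_nonneg : ∀ w, 0 < w → w ≤ ρ → ∀ k, 0 ≤ d w k
  T_le : ∀ w, 0 < w → w ≤ ρ → ∀ k, T w k ≤ A * y ^ (k + 1)
  d_le : ∀ w, 0 < w → w ≤ ρ → ∀ k, d w k ≤ A * y ^ (k + 1)
  recur : ∀ w, 0 < w → w ≤ ρ → ∀ k, T w k - T w (k + 1) = d w k + d w (k + 1)
  taylor : ∀ w, 0 < w → w ≤ ρ → ∀ ε, 0 ≤ ε → ε ≤ 1 → ∀ k,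
    |T (wp w ε) k - T w k + ε * (k + 1) * d w k| ≤ A * ε ^ 2 * y ^ (k + 1)

/-- The summand of index `k + 1` of the energy. -/
noncomputable def tm (T : ℝ → ℕ → ℝ) (w : ℝ) (c : ℕ → ℂ) (k : ℕ) : ℝ :=
  T w k * (4 / ((k : ℝ) + 1) - ((k : ℝ) + 1) * ‖c (k + 1)‖ ^ 2)

lemma sg_bound {c : ℕ → ℂ} {B R : ℝ} (hB : 0 ≤ B) (hR0 : 0 < R) (hR1 : R ≤ 1)
    (hc : ∀ k, ‖c k‖ ≤ B / R ^ k) (k : ℕ) :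
    ‖sg c k‖ ≤ (1 + B) * ((k : ℝ) + 1) ^ 2 / R ^ k := by
  induction k with
  | zero => simp [sg, hB]
  | succ k ih =>
    rw [sg]
    refine (norm_add_le _ _).trans ?_
    have h1 : ‖((k : ℂ) + 1) * c (k + 1)‖ ≤ ((k : ℝ) + 1) * (B / R ^ (k + 1)) := by
      rw [norm_mul]
      have : ‖(k : ℂ) + 1‖ = (k : ℝ) + 1 := by
        rw [show (k : ℂ) + 1 = ((k + 1 : ℕ) : ℂ) by push_cast; ring, Complex.norm_natCast]
        push_cast; ring
      rw [this]
      gcongr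
      exact hc _
    have h2 : (1 + B) * ((k : ℝ) + 1) ^ 2 / R ^ k ≤ (1 + B) * ((k : ℝ) + 1) ^ 2 / R ^ (k + 1) := by
      have : R ^ (k + 1) ≤ R ^ k := pow_le_pow_of_le_one hR0.le hR1 (by omega)
      gcongr
    refine (add_le_add (ih.trans h2) h1).trans ?_
    rw [← mul_div_assoc, ← add_div]
    gcongr
    push_cast
    have : (0 : ℝ) ≤ k := by positivity
    nlinarith [mul_nonneg hB this]

/-- Bounds for one summand under one step; `D` bounds the coefficients, `x` stands for
`R ^ (-n)`, and `Y` for `y ^ n`. -/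
lemma term_step {n A D C ε T Tp d Y x : ℝ} {c h e : ℂ} (hn : 1 ≤ n) (hA : 0 ≤ A) (hD : 0 ≤ D)
    (hC : 0 ≤ C) (hε : 0 ≤ ε) (hε1 : ε ≤ 1) (hx : 1 ≤ x) (hY : 0 ≤ Y) (hT0 : 0 ≤ T)
    (hT : T ≤ A * Y) (hTp : |Tp - T + ε * n * d| ≤ A * ε ^ 2 * Y)
    (hc : ‖c‖ ≤ D * n ^ 2 * x) (hh : ‖h‖ ≤ D * n ^ 2 * x) (he : ‖e‖ ≤ C * ε ^ 2 * x) :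
    Tp * (4 / n - n * ‖c‖ ^ 2) + ε * (d * (4 - n ^ 2 * ‖c‖ ^ 2) + 2 * T * (n * (c * star h).re))
      - A * (2 * D ^ 2 + 4 * D * C + C ^ 2 + 4) * ε ^ 2 * (n ^ 5 * (Y * x ^ 2)) ≤
    T * (4 / n - n * ‖c - ε * h + e‖ ^ 2) := by
  have hn0 : 0 < n := by linarith
  have hn2 : 1 ≤ n ^ 2 := one_le_pow₀ hn
  have hn4 : 1 ≤ n ^ 4 := one_le_pow₀ hn
  have hx2 : 1 ≤ x ^ 2 := one_le_pow₀ hx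
  have hn5 : n ≤ n ^ 5 := le_self_pow₀ hn (by norm_num)
  have q1 : ‖c - ε * h‖ ^ 2 = ‖c‖ ^ 2 - 2 * ε * (c * star h).re + ε ^ 2 * ‖h‖ ^ 2 := by
    simp only [← Complex.normSq_eq_norm_sq, Complex.normSq_apply]
    simp
    ring
  have hεx : ε ^ 2 ≤ 1 := pow_le_one₀ hε hε1
  have nu : ‖c - ε * h‖ ≤ 2 * (D * n ^ 2 * x) := by
    refine (norm_sub_le _ _).trans ?_
    rw [norm_mul, Complex.norm_real, Real.norm_of_nonneg hε]
    nlinarith [norm_nonneg h]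
  have q2 : ‖c - ε * h + e‖ ^ 2 ≤ ‖c - ε * h‖ ^ 2 + ε ^ 2 * (4 * D * C + C ^ 2) * (n ^ 4 * x ^ 2) := by
    have t : ‖c - ε * h + e‖ ≤ ‖c - ε * h‖ + ‖e‖ := norm_add_le _ _
    have t2 : ‖c - ε * h + e‖ ^ 2 ≤ (‖c - ε * h‖ + ‖e‖) ^ 2 := by gcongr
    have t3 : 2 * ‖c - ε * h‖ * ‖e‖ ≤ 2 * (2 * (D * n ^ 2 * x)) * (C * ε ^ 2 * x) := by gcongr
    have t4 : ‖e‖ ^ 2 ≤ (C * ε ^ 2 * x) ^ 2 := by gcongr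
    have t5 : 2 * (2 * (D * n ^ 2 * x)) * (C * ε ^ 2 * x) ≤ ε ^ 2 * (4 * D * C) * (n ^ 4 * x ^ 2) := by
      have : n ^ 2 ≤ n ^ 4 := pow_le_pow_right₀ hn (by norm_num)
      calc _ = ε ^ 2 * (4 * D * C) * (n ^ 2 * x ^ 2) := by ring
        _ ≤ _ := by gcongr
    have t6 : (C * ε ^ 2 * x) ^ 2 ≤ ε ^ 2 * C ^ 2 * (n ^ 4 * x ^ 2) := by
      calc _ = ε ^ 2 * C ^ 2 * (ε ^ 2 * x ^ 2) := by ring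
        _ ≤ ε ^ 2 * C ^ 2 * (n ^ 4 * x ^ 2) := by gcongr; linarith
    linarith
  have q3 : ε ^ 2 * ‖h‖ ^ 2 ≤ ε ^ 2 * D ^ 2 * (n ^ 4 * x ^ 2) := by
    calc ε ^ 2 * ‖h‖ ^ 2 ≤ ε ^ 2 * (D * n ^ 2 * x) ^ 2 := by gcongr
      _ = _ := by ring
  have q4 : n * ‖c - ε * h + e‖ ^ 2 ≤ n * ‖c‖ ^ 2 - 2 * ε * (n * (c * star h).re) +
      ε ^ 2 * (D ^ 2 + 4 * D * C + C ^ 2) * (n ^ 5 * x ^ 2) := by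
    have := mul_le_mul_of_nonneg_left (q2.trans (by rw [q1]; linarith :
      _ ≤ ‖c‖ ^ 2 - 2 * ε * (c * star h).re + ε ^ 2 * (D ^ 2 + 4 * D * C + C ^ 2) * (n ^ 4 * x ^ 2)))
      hn0.le
    linarith
  have q5 : T * (4 / n - n * ‖c‖ ^ 2) + 2 * ε * T * (n * (c * star h).re) -
      A * (D ^ 2 + 4 * D * C + C ^ 2) * ε ^ 2 * (n ^ 5 * (Y * x ^ 2)) ≤
      T * (4 / n - n * ‖c - ε * h + e‖ ^ 2) := by
    have s1 := mul_le_mul_of_nonneg_left q4 hT0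
    have s2 : T * (ε ^ 2 * (D ^ 2 + 4 * D * C + C ^ 2) * (n ^ 5 * x ^ 2)) ≤
      (A * Y) * (ε ^ 2 * (D ^ 2 + 4 * D * C + C ^ 2) * (n ^ 5 * x ^ 2)) := by gcongr
    linarith
  have b1 : |4 / n - n * ‖c‖ ^ 2| ≤ (4 + D ^ 2) * (n ^ 5 * x ^ 2) := by
    have l1 : 4 / n ≤ 4 * (n ^ 5 * x ^ 2) := by
      have : 4 / n ≤ 4 := div_le_self (by norm_num) hn
      have : 1 ≤ n ^ 5 * x ^ 2 := one_le_mul_of_one_le_of_one_le (hn.trans hn5) hx2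
      linarith
    have l2 : n * ‖c‖ ^ 2 ≤ D ^ 2 * (n ^ 5 * x ^ 2) := by
      calc n * ‖c‖ ^ 2 ≤ n * (D * n ^ 2 * x) ^ 2 := by gcongr
        _ = _ := by ring
    have l3 : 0 ≤ 4 / n := by positivity
    have l4 : 0 ≤ n * ‖c‖ ^ 2 := by positivity
    have l5 : 0 ≤ D ^ 2 * (n ^ 5 * x ^ 2) := by positivity
    rw [abs_le]
    constructor <;> linarith
  have b2 : |(Tp - T + ε * n * d) * (4 / n - n * ‖c‖ ^ 2)| ≤
      A * ε ^ 2 * Y * ((4 + D ^ 2) * (n ^ 5 * x ^ 2)) := by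
    rw [abs_mul]; gcongr
  have b3 := (abs_le.1 b2).2
  have id1 : (ε * n * d) * (4 / n - n * ‖c‖ ^ 2) = ε * (d * (4 - n ^ 2 * ‖c‖ ^ 2)) := by
    field_simp
  linarith

set_option maxHeartbeats 1000000 in
/-- Energy monotonicity under one step, up to an error of second order. With `s = sg c`, the
first-order change of the summand of index `k + 1` is `P (k + 1) - P k + d_k |s_{k+1} + s_k| ^ 2`
with `P` as in the proof: this is the parallelogram law combined with `Weights.recur`. -/
lemma energy_step {ρ y A R B C : ℝ} {T d : ℝ → ℕ → ℝ} (hW : Weights ρ y A T d) (hρ1 : ρ < 1)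
    (hy0 : 0 < y) (hA : 0 ≤ A) (hR0 : 0 < R) (hR1 : R < 1) (hyR : y < R ^ 2) (hB : 0 ≤ B)
    (hC : 0 ≤ C) :
    ∃ K : ℝ, 0 ≤ K ∧ (∀ w, 0 < w → w ≤ ρ → ∀ c : ℕ → ℂ, (∀ k, ‖c k‖ ≤ B / R ^ k) →
      Summable (tm T w c)) ∧ ∀ w, 0 < w → w ≤ ρ → ∀ ε : ℝ, 0 ≤ ε → ε ≤ 1 → ∀ c c' : ℕ → ℂ,
      (∀ k, ‖c k‖ ≤ B / R ^ k) → (∀ k, ‖c' k‖ ≤ B / R ^ k) →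
      (∀ k, ‖c' (k + 1) - (c (k + 1) - ε * (sg c (k + 1) + sg c k))‖ ≤ C * ε ^ 2 / R ^ (k + 1)) →
      ∑' k, tm T (wp w ε) c k - K * ε ^ 2 ≤ ∑' k, tm T w c' k := by
  set q := y / R ^ 2 with hq
  have hq0 : 0 < q := by positivity
  have hq1 : q < 1 := by rw [hq, div_lt_one (by positivity)]; exact hyR
  set D := 8 * (1 + B) with hD
  have hD0 : 0 ≤ D := by positivity
  have hsum0 : Summable (fun k : ℕ => ((k : ℝ) + 1) ^ 5 * q ^ (k + 1)) := by
    have := summable_pow_mul_geometric_of_norm_lt_one 5 (r := q)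
      (by rwa [Real.norm_of_nonneg hq0.le])
    have := (summable_nat_add_iff 1).2 this
    simpa using this
  have hyx : ∀ k : ℕ, y ^ (k + 1) * (1 / R ^ (k + 1)) ^ 2 = q ^ (k + 1) := fun k => by
    rw [hq, div_pow y, ← pow_mul, mul_comm 2, pow_mul, div_pow, one_pow, mul_one_div]
  have hx : ∀ k : ℕ, 1 ≤ 1 / R ^ (k + 1) := fun k =>
    (one_le_div (by positivity)).2 (pow_le_one₀ hR0.le hR1.le)
  have hn : ∀ k : ℕ, (1 : ℝ) ≤ (k : ℝ) + 1 := fun k => by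
    have : (0 : ℝ) ≤ k := by positivity
    linarith
  have hcb : ∀ c : ℕ → ℂ, (∀ k, ‖c k‖ ≤ B / R ^ k) → ∀ k : ℕ,
      ‖c (k + 1)‖ ≤ D * ((k : ℝ) + 1) ^ 2 * (1 / R ^ (k + 1)) := by
    intro c hc k
    refine (hc (k + 1)).trans ?_
    rw [mul_one_div]
    gcongr
    have : 1 ≤ ((k : ℝ) + 1) ^ 2 := one_le_pow₀ (hn k)
    nlinarith
  have hterm : ∀ w, 0 < w → w ≤ ρ → ∀ c : ℕ → ℂ, (∀ k, ‖c k‖ ≤ B / R ^ k) → ∀ k : ℕ,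
      ‖tm T w c k‖ ≤ A * (4 + D ^ 2) * (((k : ℝ) + 1) ^ 5 * q ^ (k + 1)) := by
    intro w hw0 hw1 c hc k
    have h1 := hcb c hc k
    have hx2 : 1 ≤ (1 / R ^ (k + 1)) ^ 2 := one_le_pow₀ (hx k)
    have hn5 : 1 ≤ ((k : ℝ) + 1) ^ 5 := one_le_pow₀ (hn k)
    rw [tm, norm_mul, Real.norm_of_nonneg (hW.T_nonneg w hw0 hw1 k), Real.norm_eq_abs]
    have b1 : |4 / ((k : ℝ) + 1) - ((k : ℝ) + 1) * ‖c (k + 1)‖ ^ 2| ≤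
        (4 + D ^ 2) * (((k : ℝ) + 1) ^ 5 * (1 / R ^ (k + 1)) ^ 2) := by
      have l1 : 4 / ((k : ℝ) + 1) ≤ 4 * (((k : ℝ) + 1) ^ 5 * (1 / R ^ (k + 1)) ^ 2) := by
        have : 4 / ((k : ℝ) + 1) ≤ 4 := div_le_self (by norm_num) (hn k)
        have := one_le_mul_of_one_le_of_one_le hn5 hx2
        linarith
      have l2 : ((k : ℝ) + 1) * ‖c (k + 1)‖ ^ 2 ≤
          D ^ 2 * (((k : ℝ) + 1) ^ 5 * (1 / R ^ (k + 1)) ^ 2) := by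
        calc ((k : ℝ) + 1) * ‖c (k + 1)‖ ^ 2 ≤
            ((k : ℝ) + 1) * (D * ((k : ℝ) + 1) ^ 2 * (1 / R ^ (k + 1))) ^ 2 := by gcongr
          _ = _ := by ring
      have l3 : 0 ≤ 4 / ((k : ℝ) + 1) := by positivity
      have l4 : 0 ≤ ((k : ℝ) + 1) * ‖c (k + 1)‖ ^ 2 := by positivity
      have l5 : 0 ≤ D ^ 2 * (((k : ℝ) + 1) ^ 5 * (1 / R ^ (k + 1)) ^ 2) := by positivity
      rw [abs_le]
      constructor <;> linarith
    calc _ ≤ (A * y ^ (k + 1)) * ((4 + D ^ 2) * (((k : ℝ) + 1) ^ 5 * (1 / R ^ (k + 1)) ^ 2)) := by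
          gcongr
          exact hW.T_le w hw0 hw1 k
      _ = A * (4 + D ^ 2) * (((k : ℝ) + 1) ^ 5 * (y ^ (k + 1) * (1 / R ^ (k + 1)) ^ 2)) := by ring
      _ = _ := by rw [hyx]
  have hsummable : ∀ w, 0 < w → w ≤ ρ → ∀ c : ℕ → ℂ, (∀ k, ‖c k‖ ≤ B / R ^ k) →
      Summable (tm T w c) := fun w hw0 hw1 c hc =>
    Summable.of_norm_bounded (hsum0.mul_left _) (hterm w hw0 hw1 c hc)
  set K0 := A * (2 * D ^ 2 + 4 * D * C + C ^ 2 + 4) with hK0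
  refine ⟨K0 * ∑' k : ℕ, ((k : ℝ) + 1) ^ 5 * q ^ (k + 1),
    mul_nonneg (by positivity) (tsum_nonneg fun k => by positivity), hsummable, ?_⟩
  intro w hw0 hw1 ε hε hε1 c c' hc hc' hstep
  obtain ⟨hp0, hp1⟩ := wp_mem hρ1 hw0 hw1 hε hε1
  set P : ℕ → ℝ := fun k => match k with
    | 0 => 0
    | k + 1 => 2 * (T w k - d w k) * (‖sg c (k + 1)‖ ^ 2 - 1) with hP
  have hPb : ∀ k : ℕ, ‖P (k + 1)‖ ≤ 4 * A * (D ^ 2 + 1) * (((k : ℝ) + 1) ^ 5 * q ^ (k + 1)) := by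
    intro k
    have hs := sg_bound hB hR0 hR1.le hc (k + 1)
    have hs2 : ‖sg c (k + 1)‖ ≤ D * ((k : ℝ) + 1) ^ 2 * (1 / R ^ (k + 1)) := by
      refine hs.trans ?_
      rw [mul_one_div]
      refine div_le_div_of_nonneg_right ?_ (by positivity)
      have := hn k
      push_cast
      rw [hD]
      nlinarith [mul_nonneg hB (by nlinarith : 0 ≤ 8 * ((k : ℝ) + 1) ^ 2 - ((k : ℝ) + 1 + 1) ^ 2)]
    have hx2 : 1 ≤ (1 / R ^ (k + 1)) ^ 2 := one_le_pow₀ (hx k)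
    have hn5 : 1 ≤ ((k : ℝ) + 1) ^ 5 := one_le_pow₀ (hn k)
    have b1 : |‖sg c (k + 1)‖ ^ 2 - 1| ≤
        (D ^ 2 + 1) * (((k : ℝ) + 1) ^ 5 * (1 / R ^ (k + 1)) ^ 2) := by
      have l2 : ‖sg c (k + 1)‖ ^ 2 ≤
          D ^ 2 * (((k : ℝ) + 1) ^ 5 * (1 / R ^ (k + 1)) ^ 2) := by
        calc ‖sg c (k + 1)‖ ^ 2 ≤ (D * ((k : ℝ) + 1) ^ 2 * (1 / R ^ (k + 1))) ^ 2 := by gcongr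
          _ = D ^ 2 * (((k : ℝ) + 1) ^ 4 * (1 / R ^ (k + 1)) ^ 2) := by ring
          _ ≤ _ := by
            gcongr
            · exact hn k
            · norm_num
      have l1 := one_le_mul_of_one_le_of_one_le hn5 hx2
      have l4 : 0 ≤ ‖sg c (k + 1)‖ ^ 2 := by positivity
      have l5 : 0 ≤ D ^ 2 * (((k : ℝ) + 1) ^ 5 * (1 / R ^ (k + 1)) ^ 2) := by positivity
      rw [abs_le]
      constructor <;> linarith
    have b2 : |T w k - d w k| ≤ 2 * (A * y ^ (k + 1)) := by
      have := hW.T_nonneg w hw0 hw1 k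
      have := hW.d_nonneg w hw0 hw1 k
      have := hW.T_le w hw0 hw1 k
      have := hW.d_le w hw0 hw1 k
      rw [abs_le]
      constructor <;> linarith
    simp only [hP, norm_mul, Real.norm_eq_abs]
    calc |(2 : ℝ)| * |T w k - d w k| * |‖sg c (k + 1)‖ ^ 2 - 1| ≤ 2 * (2 * (A * y ^ (k + 1))) *
        ((D ^ 2 + 1) * (((k : ℝ) + 1) ^ 5 * (1 / R ^ (k + 1)) ^ 2)) := by
          rw [abs_of_pos (by norm_num : (0 : ℝ) < 2)]
          gcongr
      _ = 4 * A * (D ^ 2 + 1) * (((k : ℝ) + 1) ^ 5 * (y ^ (k + 1) * (1 / R ^ (k + 1)) ^ 2)) := by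
          ring
      _ = _ := by rw [hyx]
  have hPs : Summable P :=
    (summable_nat_add_iff 1).1 (Summable.of_norm_bounded (hsum0.mul_left _) hPb)
  have hPlim : Filter.Tendsto P Filter.atTop (nhds 0) := hPs.tendsto_atTop_zero
  have main : ∀ k : ℕ, tm T (wp w ε) c k + ε * (P (k + 1) - P k) -
      K0 * ε ^ 2 * (((k : ℝ) + 1) ^ 5 * q ^ (k + 1)) ≤ tm T w c' k := by
    intro k
    set e := c' (k + 1) - (c (k + 1) - ε * (sg c (k + 1) + sg c k)) with he
    have hc'e : c' (k + 1) = c (k + 1) - ε * (sg c (k + 1) + sg c k) + e := by rw [he]; ring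
    have hh : ‖sg c (k + 1) + sg c k‖ ≤ D * ((k : ℝ) + 1) ^ 2 * (1 / R ^ (k + 1)) := by
      have s1 := sg_bound hB hR0 hR1.le hc (k + 1)
      have s2 := sg_bound hB hR0 hR1.le hc k
      have s3 : (1 + B) * ((k : ℝ) + 1) ^ 2 / R ^ k ≤ (1 + B) * ((k : ℝ) + 1) ^ 2 / R ^ (k + 1) := by
        have : R ^ (k + 1) ≤ R ^ k := pow_le_pow_of_le_one hR0.le hR1.le (by omega)
        gcongr
      refine (norm_add_le _ _).trans ((add_le_add s1 (s2.trans s3)).trans ?_)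
      rw [mul_one_div, ← add_div]
      gcongr
      have := hn k
      push_cast
      rw [hD]
      nlinarith [mul_nonneg hB (by nlinarith : 0 ≤ 7 * ((k : ℝ) + 1) ^ 2 - ((k : ℝ) + 1 + 1) ^ 2)]
    have ts := term_step (n := (k : ℝ) + 1) (A := A) (D := D) (C := C) (ε := ε) (T := T w k)
      (Tp := T (wp w ε) k) (d := d w k) (Y := y ^ (k + 1)) (x := 1 / R ^ (k + 1))
      (c := c (k + 1)) (h := sg c (k + 1) + sg c k) (e := e) (hn k) hA hD0 hC hε hε1 (hx k)
      (by positivity) (hW.T_nonneg w hw0 hw1 k) (hW.T_le w hw0 hw1 k)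
      (hW.taylor w hw0 hw1 ε hε hε1 k) (hcb c hc k) hh (by rw [mul_one_div]; exact hstep k)
    rw [hyx] at ts
    rw [tm, tm, hc'e]
    refine le_trans ?_ ts
    refine sub_le_sub_right (add_le_add_right (mul_le_mul_of_nonneg_left ?_ hε) _) _
    have hsk : sg c (k + 1) - sg c k = ((k : ℝ) + 1 : ℝ) * c (k + 1) := by
      simp only [sg]; push_cast; ring
    have f1 : ((k : ℝ) + 1) * (c (k + 1) * star (sg c (k + 1) + sg c k)).re =
        ‖sg c (k + 1)‖ ^ 2 - ‖sg c k‖ ^ 2 := by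
      rw [← Complex.re_ofReal_mul, ← mul_assoc, ← hsk]
      simp only [← Complex.normSq_eq_norm_sq, Complex.normSq_apply]
      simp
      ring
    have f2 : ((k : ℝ) + 1) ^ 2 * ‖c (k + 1)‖ ^ 2 = 2 * ‖sg c (k + 1)‖ ^ 2 + 2 * ‖sg c k‖ ^ 2 -
        ‖sg c (k + 1) + sg c k‖ ^ 2 := by
      have : ((k : ℝ) + 1) ^ 2 * ‖c (k + 1)‖ ^ 2 = ‖sg c (k + 1) - sg c k‖ ^ 2 := by
        rw [hsk, norm_mul, Complex.norm_real, Real.norm_of_nonneg (by positivity)]; ring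
      rw [this]
      simp only [← Complex.normSq_eq_norm_sq, Complex.normSq_apply]
      simp
      ring
    rw [f1, f2]
    have hd0 := mul_nonneg (hW.d_nonneg w hw0 hw1 k) (sq_nonneg ‖sg c (k + 1) + sg c k‖)
    rcases k with _ | k
    · simp only [hP, sg, norm_one] at hd0 ⊢
      linarith
    · have := hW.recur w hw0 hw1 k
      have e1 : T w k - d w k = T w (k + 1) + d w (k + 1) := by linarith
      simp only [hP]
      rw [e1]
      linarith
  have tel : HasSum (fun k => P (k + 1) - P k) 0 := by
    have hs : Summable (fun k => P (k + 1) - P k) :=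
      ((summable_nat_add_iff 1).2 hPs).sub hPs
    have := hs.hasSum.tendsto_sum_nat
    simp only [Finset.sum_range_sub] at this
    have h2 := tendsto_nhds_unique this (by simpa [hP] using hPlim)
    rw [← h2]
    simpa [hP] using hs.hasSum
  have S1 := hsummable (wp w ε) hp0 (hp1.trans hw1) c hc
  have S2 := hsummable w hw0 hw1 c' hc'
  have HL := (S1.hasSum.add (tel.mul_left ε)).sub (hsum0.hasSum.mul_left (K0 * ε ^ 2))
  have := hasSum_le main HL S2.hasSum
  linarith

/-! ### The energy of a chain -/

lemma tm_congr {T : ℝ → ℕ → ℝ} {w : ℝ} {c c' : ℕ → ℂ} (h : ∀ k, ‖c k‖ = ‖c' k‖) :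
    tm T w c = tm T w c' := by
  funext k
  rw [tm, tm, h]

/-- The energy of a chain with `j` links is nonnegative up to `j` second-order errors. -/
lemma chain_energy {ρ y A M : ℝ} {T d : ℝ → ℕ → ℝ} (hW : Weights ρ y A T d) (hρ0 : 0 < ρ)
    (hρ1 : ρ < 1) (hy0 : 0 < y) (hy1 : y < 1) (hA : 0 ≤ A) (hM : 1 < M) :
    ∃ K a₀ : ℝ, 0 ≤ K ∧ 0 < a₀ ∧ a₀ < 1 ∧ ∀ a, a₀ < a → a < 1 → ∀ j g, Chain a j g →
      (1 / a) ^ j ≤ M → ∀ N : ℕ,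
      ∑ k ∈ Finset.range N, T ρ k * (((k : ℝ) + 1) * ‖co g (k + 1)‖ ^ 2) ≤
        ∑' k : ℕ, T ρ k * (4 / ((k : ℝ) + 1)) + j * (K * (1 - a) ^ 2) := by
  obtain ⟨R₁, hyR, hR1⟩ := exists_between (Real.sqrt_lt_sqrt hy0.le hy1)
  rw [Real.sqrt_one] at hR1
  have hR0 : 0 < R₁ := (Real.sqrt_nonneg _).trans_lt hyR
  have hyR2 : y < R₁ ^ 2 := (Real.sqrt_lt' hR0).1 hyR
  obtain ⟨R₂, h12, hR2⟩ := exists_between hR1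
  obtain ⟨R₃, h23, hR3⟩ := exists_between hR2
  have hlM : 0 < Real.log M := Real.log_pos hM
  set B := 2 * Real.log M * R₂ / (R₃ - R₂) with hB
  have hB0 : 0 ≤ B := div_nonneg (by nlinarith) (by linarith)
  obtain ⟨C, hC, hstep⟩ := step_coeff hB0 hR0 h12 hR2
  obtain ⟨K, hK, hsum, hen⟩ := energy_step hW hρ1 hy0 hA hR0 hR1 hyR2 hB0 hC
  refine ⟨K, R₃, hK, by linarith, hR3, fun a ha ha1 j g hg hj N => ?_⟩
  have ha0 : 0 < a := by linarith
  have hcb : ∀ j g, Chain a j g → (1 / a) ^ j ≤ M → ∀ k, ‖co g k‖ ≤ B / R₁ ^ k := by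
    intro j g hg hj k
    exact co_bound (hg.spec ha0 ha1).1 hR0 (by linarith) (fun z hz =>
      hg.bound ha0 ha1 hM hj (by linarith) h23 ha.le (hz.trans h12.le)) k
  have h1a : 1 ≤ 1 / a := (one_le_div ha0).2 ha1.le
  have key : ∀ j g, Chain a j g → (1 / a) ^ j ≤ M → ∀ w, 0 < w → w ≤ ρ →
      -(j * (K * (1 - a) ^ 2)) ≤ ∑' k, tm T w (co g) k := by
    intro j g hg
    induction hg with
    | zero =>
      intro _ w hw0 hw1
      simp only [Nat.cast_zero, zero_mul, neg_zero]
      refine tsum_nonneg fun k => ?_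
      rw [tm, co_const]
      simp only [Nat.add_eq_zero_iff, one_ne_zero, and_false, if_false, norm_zero]
      refine mul_nonneg (hW.T_nonneg w hw0 hw1 k) ?_
      have : (0 : ℝ) ≤ 4 / ((k : ℝ) + 1) := by positivity
      simpa using this
    | @step j g κ hg hκ ih =>
      intro hj w hw0 hw1
      have hj' : (1 / a) ^ j ≤ M := (pow_le_pow_right₀ h1a (Nat.le_succ j)).trans hj
      obtain ⟨hgd, hg0, -⟩ := hg.spec ha0 ha1
      set g1 : ℂ → ℂ := fun z => g (star κ * z) with hg1
      have hκ' : ‖star κ‖ = 1 := by rw [norm_star, hκ]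
      have nb : ∀ z, ‖star κ * z‖ = ‖z‖ := fun z => by rw [norm_mul, hκ', one_mul]
      have g1d : DifferentiableOn ℂ g1 (ball 0 a) := hgd.comp (by fun_prop) (fun z hz => by
        rw [mem_ball_zero_iff] at *; rwa [nb])
      have co1 : ∀ k, ‖co g1 k‖ = ‖co g k‖ := fun k => by
        rw [hg1, co_rot ha0 hgd hκ'.le, norm_mul, norm_pow, hκ', one_pow, one_mul]
      set G1 : ℂ → ℂ := fun z => g1 (bp a z) + bL a z with hG1
      have G1d : DifferentiableOn ℂ G1 (ball 0 a) := by
        refine (g1d.comp ((bp_diff ha0 ha1).mono (ball_subset_ball ha1.le)) ?_).add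
          (bL_diff ha0 ha1)
        intro z hz
        simp only [mem_ball_zero_iff] at *
        exact (bp_norm_le ha0 ha1 (hz.trans ha1)).trans_lt hz
      have co2 : ∀ k, ‖co (fun z => g (star κ * bp a (κ * z)) + bL a (κ * z)) k‖ = ‖co G1 k‖ :=
        fun k => by
          have := co_rot ha0 G1d hκ.le k
          simp only [hG1, hg1] at this ⊢
          rw [this, norm_mul, norm_pow, hκ, one_pow, one_mul]
      have hw' := wp_mem hρ1 hw0 hw1 (sub_nonneg.2 ha1.le) (by linarith : 1 - a ≤ 1)
      have i1 := ih hj' _ hw'.1 (hw'.2.trans hw1)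
      have i2 := hen w hw0 hw1 (1 - a) (sub_nonneg.2 ha1.le) (by linarith) (co g1) (co G1)
        (fun k => by rw [co1]; exact hcb j g hg hj' k)
        (fun k => by rw [← co2]; exact hcb _ _ (hg.step hκ) hj k)
        (fun k => by
          have := hstep a (h23.trans ha) ha1 g1 g1d (by simp [hg1, hg0]) (fun z hz => by
            refine hg.bound ha0 ha1 hM hj' (by linarith) h23 ha.le ?_
            rw [nb]; exact hz) k
          simpa using this)
      rw [tm_congr co1] at i2
      rw [tm_congr co2]
      push_cast
      linarith
  have k1 := key j g hg hj ρ hρ0 le_rfl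
  have S := hsum ρ hρ0 le_rfl (co g) (hcb j g hg hj)
  have ST : Summable (fun k : ℕ => T ρ k * (4 / ((k : ℝ) + 1))) := by
    refine Summable.of_nonneg_of_le (fun k => ?_) (fun k => ?_)
      (((summable_geometric_of_lt_one hy0.le hy1).mul_left (A * y * 4)))
    · have := hW.T_nonneg ρ hρ0 le_rfl k
      positivity
    · have h1 := hW.T_le ρ hρ0 le_rfl k
      have h0 := hW.T_nonneg ρ hρ0 le_rfl k
      have : 4 / ((k : ℝ) + 1) ≤ 4 := div_le_self (by norm_num) (by
        have : (0 : ℝ) ≤ k := by positivity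
        linarith)
      calc _ ≤ A * y ^ (k + 1) * 4 := by gcongr
        _ = _ := by ring
  have SQ : Summable (fun k : ℕ => T ρ k * (((k : ℝ) + 1) * ‖co g (k + 1)‖ ^ 2)) := by
    refine (ST.sub S).congr fun k => ?_
    rw [tm]; ring
  have e1 : ∑' k, tm T ρ (co g) k = ∑' k : ℕ, T ρ k * (4 / ((k : ℝ) + 1)) -
      ∑' k : ℕ, T ρ k * (((k : ℝ) + 1) * ‖co g (k + 1)‖ ^ 2) := by
    rw [← ST.tsum_sub SQ]
    congr 1
    funext k
    rw [tm]; ring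
  have e2 := SQ.sum_le_tsum (Finset.range N) (fun k _ => by
    have := hW.T_nonneg ρ hρ0 le_rfl k
    positivity)
  linarith

/-! ### The weights -/

/-- The weight `Tw` of index `k + 1`, as an analytic function of the parameter. -/
noncomputable def Gw (M₁ α η : ℝ) (k : ℕ) (z : ℂ) : ℂ :=
  z ^ (k + 1) * ((k + 1) * (M₁ * ((1 - z) / (1 + z))) + α) -
    (if k = 0 then (η : ℂ) else 0) * (z / (1 - z) ^ 2)

/-- The real weights. The correction with factor `η` at index one is what makes the final
inequality strict away from the extremal functions. -/
noncomputable def Tw (M₁ α η w : ℝ) (k : ℕ) : ℝ :=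
  w ^ (k + 1) * ((k + 1) * (M₁ * ((1 - w) / (1 + w))) + α) -
    (if k = 0 then η else 0) * (w / (1 - w) ^ 2)

/-- The decay rates of the weights `Tw`, divided by the index `k + 1` (see `Gw_deriv`). -/
noncomputable def dw (M₁ α η w : ℝ) (k : ℕ) : ℝ :=
  (1 - w) / (1 + w) * (w ^ (k + 1) * ((k + 1) * (M₁ * ((1 - w) / (1 + w))) + α -
    2 * M₁ * w / (1 + w) ^ 2)) - (if k = 0 then η else 0) * (w / (1 - w) ^ 2)

lemma Gw_ofReal (M₁ α η w : ℝ) (k : ℕ) : Gw M₁ α η k w = (Tw M₁ α η w k : ℝ) := by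
  rw [Gw, Tw]
  split_ifs <;> push_cast <;> rfl

lemma one_add_ne {z : ℂ} (hz : ‖z‖ < 1) : 1 + z ≠ 0 := by
  have := one_sub_ne (z := -z) (by simpa using hz)
  simpa using this

lemma Gw_diff (M₁ α η : ℝ) (k : ℕ) : DifferentiableOn ℂ (Gw M₁ α η k) (ball 0 1) := by
  intro z hz
  have h1 := one_add_ne (z := z) (by simpa using hz)
  have h2 := pow_ne_zero 2 (one_sub_ne (z := z) (by simpa using hz))
  unfold Gw
  refine DifferentiableAt.differentiableWithinAt ?_
  fun_prop (disch := assumption)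

lemma Gw_deriv (M₁ α η w : ℝ) (h0 : 0 < w) (h1 : w < 1) (k : ℕ) :
    (w * ((1 - w) / (1 + w)) : ℝ) * deriv (Gw M₁ α η k) w = (((k : ℝ) + 1) * dw M₁ α η w k : ℝ) := by
  have hw : ‖(w : ℂ)‖ < 1 := by rw [Complex.norm_real, Real.norm_of_nonneg h0.le]; exact h1
  have e1 := one_add_ne hw
  have e2 := one_sub_ne hw
  have a1 : HasDerivAt (fun z : ℂ => (1 - z) / (1 + z)) (-2 / (1 + w) ^ 2) (w : ℂ) := by
    have := ((hasDerivAt_const (w : ℂ) (1 : ℂ)).sub (hasDerivAt_id (w : ℂ))).div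
      ((hasDerivAt_const (w : ℂ) (1 : ℂ)).add (hasDerivAt_id (w : ℂ))) e1
    refine this.congr_deriv ?_
    simp only [Pi.sub_apply, Pi.add_apply, id]
    congr 1
    ring
  have a2 : HasDerivAt (fun z : ℂ => z / (1 - z) ^ 2) ((1 + (w : ℂ)) / (1 - (w : ℂ)) ^ 3) (w : ℂ) := by
    have := (hasDerivAt_id (w : ℂ)).div
      (((hasDerivAt_const (w : ℂ) (1 : ℂ)).sub (hasDerivAt_id (w : ℂ))).pow 2) (pow_ne_zero 2 e2)
    refine this.congr_deriv ?_
    simp only [Pi.sub_apply, Pi.pow_apply, id]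
    field_simp
    ring
  have a3 : HasDerivAt (Gw M₁ α η k) ((k + 1) * (w : ℂ) ^ k *
      ((k + 1) * (M₁ * ((1 - w) / (1 + w))) + α) + (w : ℂ) ^ (k + 1) * ((k + 1) *
      (M₁ * (-2 / (1 + w) ^ 2))) - (if k = 0 then (η : ℂ) else 0) * ((1 + w) / (1 - w) ^ 3)) w := by
    have := ((hasDerivAt_pow (k + 1) (w : ℂ)).mul
      (((a1.const_mul (M₁ : ℂ)).const_mul ((k : ℂ) + 1)).add_const (α : ℂ))).sub
      (a2.const_mul (if k = 0 then (η : ℂ) else 0))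
    refine this.congr_deriv ?_
    simp
  rw [a3.deriv, dw]
  rcases k with _ | k
  · simp only [if_true]
    push_cast
    field_simp
    ring
  · simp only [Nat.add_eq_zero_iff, one_ne_zero, and_false, if_false]
    push_cast
    field_simp
    ring

lemma Gw_bound {M₁ α η y : ℝ} (hM : 0 ≤ M₁) (hη : 0 ≤ η) (hy0 : 0 < y) (hy1 : y < 1) (k : ℕ)
    {z : ℂ} (hz : ‖z‖ ≤ y) : ‖Gw M₁ α η k z‖ ≤
      (2 * M₁ / (1 - y) + |α| + η / (1 - y) ^ 2) * (((k : ℝ) + 1) * y ^ (k + 1)) := by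
  have hd : 0 < 1 - y := by linarith
  have b1 : 1 - y ≤ ‖1 - z‖ := norm_one_sub_ge z hz
  have b2 : 1 - y ≤ ‖1 + z‖ := by
    have := norm_one_sub_ge (-z) (S := y) (by simpa using hz)
    simpa using this
  have b3 : ‖1 - z‖ ≤ 2 := (norm_sub_le _ _).trans (by rw [norm_one]; linarith)
  have hk : (0 : ℝ) ≤ k := by positivity
  have nk : ‖(k : ℂ) + 1‖ = (k : ℝ) + 1 := by
    rw [show (k : ℂ) + 1 = ((k + 1 : ℕ) : ℂ) by push_cast; ring, Complex.norm_natCast]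
    push_cast; ring
  have p1 : ‖z ^ (k + 1) * ((k + 1) * (M₁ * ((1 - z) / (1 + z))) + α)‖ ≤
      y ^ (k + 1) * (((k : ℝ) + 1) * (M₁ * (2 / (1 - y))) + |α|) := by
    rw [norm_mul, norm_pow]
    gcongr
    refine (norm_add_le _ _).trans ?_
    rw [norm_mul, norm_mul, norm_div, nk, Complex.norm_real, Complex.norm_real,
      Real.norm_of_nonneg hM, Real.norm_eq_abs]
    gcongr
  have p2 : ‖(if k = 0 then (η : ℂ) else 0) * (z / (1 - z) ^ 2)‖ ≤
      η / (1 - y) ^ 2 * (((k : ℝ) + 1) * y ^ (k + 1)) := by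
    rcases k with _ | k
    · simp only [if_true, norm_mul, norm_div, norm_pow, Complex.norm_real, Real.norm_of_nonneg hη]
      calc η * (‖z‖ / ‖1 - z‖ ^ 2) ≤ η * (y / (1 - y) ^ 2) := by gcongr
        _ = _ := by push_cast; ring
    · simp only [Nat.add_eq_zero_iff, one_ne_zero, and_false, if_false, zero_mul, norm_zero]
      positivity
  rw [Gw]
  refine (norm_sub_le _ _).trans ((add_le_add p1 p2).trans ?_)
  have hα : |α| * y ^ (k + 1) ≤ |α| * (((k : ℝ) + 1) * y ^ (k + 1)) := by
    have : 0 < y ^ (k + 1) := by positivity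
    have := abs_nonneg α
    gcongr
    nlinarith
  have : y ^ (k + 1) * (((k : ℝ) + 1) * (M₁ * (2 / (1 - y))) + |α|) =
    2 * M₁ / (1 - y) * (((k : ℝ) + 1) * y ^ (k + 1)) + |α| * y ^ (k + 1) := by ring
  rw [this]
  linarith

lemma Tw_recur (M₁ α η : ℝ) {w : ℝ} (h0 : 0 < w) (h1 : w < 1) (k : ℕ) :
    Tw M₁ α η w k - Tw M₁ α η w (k + 1) = dw M₁ α η w k + dw M₁ α η w (k + 1) := by
  have e1 : 1 - w ≠ 0 := by linarith
  have e2 : 1 + w ≠ 0 := by linarith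
  simp only [Tw, dw, Nat.add_eq_zero_iff, one_ne_zero, and_false, if_false, zero_mul, sub_zero]
  have key : w ^ (k + 1) * ((k + 1) * (M₁ * ((1 - w) / (1 + w))) + α) -
      w ^ (k + 1) * w * (((k + 1 : ℕ) + 1) * (M₁ * ((1 - w) / (1 + w))) + α) =
      (1 - w) / (1 + w) * (w ^ (k + 1) * ((k + 1) * (M₁ * ((1 - w) / (1 + w))) + α -
        2 * M₁ * w / (1 + w) ^ 2)) +
      (1 - w) / (1 + w) * (w ^ (k + 1) * w * (((k + 1 : ℕ) + 1) * (M₁ * ((1 - w) / (1 + w))) + α -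
        2 * M₁ * w / (1 + w) ^ 2)) := by
    generalize w ^ (k + 1) = W
    push_cast
    generalize (k : ℝ) = n
    field_simp
    ring
  rw [pow_succ w (k + 1)]
  linarith

set_option maxHeartbeats 1000000 in
/-- Admissible weights that at `w = ρ` are those of the theorem, up to a decrease of the first one.
They are `Tw` with `M₁ = (1 + ρ) / (1 - ρ)`, so that `M₁ (1 - ρ) / (1 + ρ) = 1`. -/
lemma exists_weights {α ρ : ℝ} (hρ0 : 0 < ρ) (hρ1 : ρ < 1) (hα : 2 * ρ / (1 - ρ ^ 2) < 1 + α) :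
    ∃ (η y A : ℝ) (T d : ℝ → ℕ → ℝ), 0 < η ∧ 0 < y ∧ y < 1 ∧ 0 ≤ A ∧ Weights ρ y A T d ∧
      ∀ k : ℕ, T ρ k = ρ ^ (k + 1) * ((k : ℝ) + 1 + α) -
        (if k = 0 then η else 0) * (ρ / (1 - ρ) ^ 2) := by
  obtain ⟨y', hρy, hy'1⟩ := exists_between hρ1
  obtain ⟨y, hyy, hy1⟩ := exists_between hy'1
  have hy'0 : 0 < y' := by linarith
  have hy0 : 0 < y := by linarith
  set τ := 1 + α - 2 * ρ / (1 - ρ ^ 2) with hτ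
  have hτ0 : 0 < τ := by linarith
  have hr : 0 < 1 - ρ := by linarith
  have hr2 : 0 < 1 + ρ := by linarith
  set M₁ := (1 + ρ) / (1 - ρ) with hM₁
  have hM : 0 < M₁ := by positivity
  obtain ⟨η, hη⟩ : ∃ η, η = τ * (1 - ρ) ^ 3 / 2 := ⟨_, rfl⟩
  have hη0 : 0 < η := by rw [hη]; positivity
  set q := y' / y with hq
  have hq0 : 0 < q := by positivity
  have hq1 : q < 1 := by rw [hq, div_lt_one hy0]; exact hyy
  have hsum0 : Summable (fun k : ℕ => ((k : ℝ) + 1) * q ^ (k + 1)) := by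
    have := summable_pow_mul_geometric_of_norm_lt_one 1 (r := q)
      (by rwa [Real.norm_of_nonneg hq0.le])
    have := (summable_nat_add_iff 1).2 this
    simpa using this
  set A' := ∑' k : ℕ, ((k : ℝ) + 1) * q ^ (k + 1) with hA'
  have hA'0 : 0 ≤ A' := tsum_nonneg fun k => by positivity
  have hA'k : ∀ k : ℕ, ((k : ℝ) + 1) * y' ^ (k + 1) ≤ A' * y ^ (k + 1) := fun k => by
    have := hsum0.le_tsum k (fun j _ => by positivity)
    rw [hq, div_pow, ← mul_div_assoc, div_le_iff₀ (by positivity)] at this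
    exact this
  set D := 2 * M₁ / (1 - y') + |α| + η / (1 - y') ^ 2 with hD
  have hD0 : 0 ≤ D := by
    have : 0 < 1 - y' := by linarith
    positivity
  set δ := (y' - ρ) / 2 / 2 with hδ
  have hδ0 : 0 < δ := by rw [hδ]; linarith
  have hδ1 : ρ + 2 * δ < 1 := by rw [hδ]; linarith
  have hδ2 : ρ + 2 * δ ≤ y' := by rw [hδ]; linarith
  have hτw : ∀ w, 0 < w → w ≤ ρ → τ ≤ M₁ * ((1 - w) / (1 + w)) + α - 2 * M₁ * w / (1 + w) ^ 2 := by
    intro w hw0 hw1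
    have e1 : M₁ * ((1 - w) / (1 + w)) - 2 * M₁ * w / (1 + w) ^ 2 = M₁ * (2 / (1 + w) ^ 2 - 1) := by
      field_simp
      ring
    have e2 : M₁ * (2 / (1 + ρ) ^ 2 - 1) = 1 - 2 * ρ / (1 - ρ ^ 2) := by
      have : (1 - ρ ^ 2) ≠ 0 := by nlinarith
      rw [hM₁, show 1 - ρ ^ 2 = (1 - ρ) * (1 + ρ) by ring]
      field_simp
      ring
    have e3 : M₁ * (2 / (1 + ρ) ^ 2 - 1) ≤ M₁ * (2 / (1 + w) ^ 2 - 1) := by gcongr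
    linarith
  have hmw : ∀ w, 0 < w → w ≤ ρ → 0 ≤ M₁ * ((1 - w) / (1 + w)) := fun w hw0 hw1 =>
    mul_nonneg hM.le (div_nonneg (by linarith) (by linarith))
  have hτk : ∀ w, 0 < w → w ≤ ρ → ∀ k : ℕ,
      τ ≤ ((k : ℝ) + 1) * (M₁ * ((1 - w) / (1 + w))) + α - 2 * M₁ * w / (1 + w) ^ 2 := by
    intro w hw0 hw1 k
    have h1 := hτw w hw0 hw1
    have h2 := hmw w hw0 hw1
    have : 0 ≤ (k : ℝ) * (M₁ * ((1 - w) / (1 + w))) := by positivity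
    nlinarith
  have hηw : ∀ w, 0 < w → w ≤ ρ → ∀ k : ℕ,
      (if k = 0 then η else 0) * (w / (1 - w) ^ 2) ≤ (1 - w) / (1 + w) * (w ^ (k + 1) * τ) := by
    intro w hw0 hw1 k
    have : 0 < 1 - w := by linarith
    rcases k with _ | k
    · simp only [if_true, zero_add, pow_one]
      rw [div_mul_eq_mul_div, show η * (w / (1 - w) ^ 2) = (η * w) / (1 - w) ^ 2 by ring,
        div_le_div_iff₀ (by positivity) (by positivity)]
      have k1 : (1 - ρ) ^ 3 ≤ (1 - w) ^ 3 := by gcongr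
      have k2 : η * (1 + w) ≤ τ * (1 - w) ^ 3 := by
        rw [hη]
        have : τ * (1 - ρ) ^ 3 ≤ τ * (1 - w) ^ 3 := by gcongr
        have : 0 ≤ τ * (1 - ρ) ^ 3 := by positivity
        nlinarith
      nlinarith [mul_le_mul_of_nonneg_left k2 hw0.le]
    · simp only [Nat.add_eq_zero_iff, one_ne_zero, and_false, if_false, zero_mul]
      positivity
  have hBk : ∀ k : ℕ, ∀ z : ℂ, ‖z‖ ≤ ρ + 2 * δ → ‖Gw M₁ α η k z‖ ≤ D * (A' * y ^ (k + 1)) :=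
    fun k z hz => (Gw_bound hM.le hη0.le hy'0 hy'1 k (hz.trans hδ2)).trans
      (mul_le_mul_of_nonneg_left (hA'k k) hD0)
  set A := D * A' * (1 + 1 / δ + 1 / δ / δ) with hA
  have hDA : 0 ≤ D * A' := by positivity
  have nw : ∀ w : ℝ, 0 < w → w ≤ ρ → ‖(w : ℂ)‖ ≤ ρ := fun w h0 h1 => by
    rw [Complex.norm_real, Real.norm_of_nonneg h0.le]; exact h1
  have i1 : 0 ≤ 1 / δ := by positivity
  have i2 : 0 ≤ 1 / δ / δ := by positivity
  have leA : ∀ s : ℝ, s ≤ 1 + 1 / δ + 1 / δ / δ → ∀ k : ℕ, D * (A' * y ^ (k + 1)) * s ≤ A * y ^ (k + 1) := by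
    intro s hs k
    calc D * (A' * y ^ (k + 1)) * s ≤ D * (A' * y ^ (k + 1)) * (1 + 1 / δ + 1 / δ / δ) := by gcongr
      _ = _ := by rw [hA]; ring
  refine ⟨η, y, A, fun w k => Tw M₁ α η w k, fun w k => dw M₁ α η w k, hη0, hy0, hy1,
    by positivity, ⟨?_, ?_, ?_, ?_, ?_, ?_⟩, ?_⟩
  · intro w hw0 hw1 k
    have t1 := hτk w hw0 hw1 k
    have t2 := hηw w hw0 hw1 k
    have t3 : (1 - w) / (1 + w) ≤ 1 := by rw [div_le_one (by linarith)]; linarith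
    have t4 : 0 ≤ 2 * M₁ * w / (1 + w) ^ 2 := by positivity
    have t5 : w ^ (k + 1) * τ ≤ w ^ (k + 1) * (((k : ℝ) + 1) * (M₁ * ((1 - w) / (1 + w))) + α) := by
      gcongr; linarith
    have t6 : (1 - w) / (1 + w) * (w ^ (k + 1) * τ) ≤ 1 * (w ^ (k + 1) * τ) := by gcongr
    rw [Tw]
    linarith
  · intro w hw0 hw1 k
    have t1 := hτk w hw0 hw1 k
    have t2 := hηw w hw0 hw1 k
    have t3 : 0 ≤ (1 - w) / (1 + w) := div_nonneg (by linarith) (by linarith)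
    have t4 : (1 - w) / (1 + w) * (w ^ (k + 1) * τ) ≤ (1 - w) / (1 + w) * (w ^ (k + 1) *
      (((k : ℝ) + 1) * (M₁ * ((1 - w) / (1 + w))) + α - 2 * M₁ * w / (1 + w) ^ 2)) := by gcongr
    rw [dw]
    linarith
  · intro w hw0 hw1 k
    have := hBk k w ((nw w hw0 hw1).trans (by linarith))
    rw [Gw_ofReal, Complex.norm_real, Real.norm_eq_abs] at this
    have h2 := leA 1 (by linarith) k
    rw [mul_one] at h2
    exact (le_abs_self _).trans (this.trans h2)
  · intro w hw0 hw1 k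
    obtain ⟨T1, -⟩ := taylor_two hδ0 hδ1 (Gw_diff M₁ α η k) (hBk k) (nw w hw0 hw1) (nw w hw0 hw1)
    have h1 := Gw_deriv M₁ α η w hw0 (by linarith) k
    have h2 := congrArg norm h1
    have t3 : 0 ≤ (1 - w) / (1 + w) := div_nonneg (by linarith) (by linarith)
    have t3' : (1 - w) / (1 + w) ≤ 1 := by rw [div_le_one (by linarith)]; linarith
    rw [norm_mul, Complex.norm_real, Complex.norm_real, Real.norm_of_nonneg (by positivity),
      Real.norm_eq_abs, abs_mul] at h2
    have hk : (1 : ℝ) ≤ |(k : ℝ) + 1| := by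
      rw [abs_of_nonneg (by positivity)]
      have : (0 : ℝ) ≤ k := by positivity
      linarith
    have h3 : |dw M₁ α η w k| ≤ ‖deriv (Gw M₁ α η k) w‖ := by
      have : w * ((1 - w) / (1 + w)) ≤ 1 * 1 := by gcongr; linarith
      have h4 : w * ((1 - w) / (1 + w)) * ‖deriv (Gw M₁ α η k) w‖ ≤ 1 * ‖deriv (Gw M₁ α η k) w‖ := by
        gcongr; linarith
      nlinarith [abs_nonneg (dw M₁ α η w k)]
    have h5 := leA (1 / δ) (by linarith) k
    rw [mul_one_div] at h5
    exact (le_abs_self _).trans (h3.trans (T1.trans h5))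
  · intro w hw0 hw1 k
    exact Tw_recur M₁ α η hw0 (by linarith) k
  · intro w hw0 hw1 ε hε hε1 k
    obtain ⟨hp0, hp1⟩ := wp_mem hρ1 hw0 hw1 hε hε1
    obtain ⟨-, T2⟩ := taylor_two hδ0 hδ1 (Gw_diff M₁ α η k) (hBk k) (nw w hw0 hw1)
      (nw _ hp0 (hp1.trans hw1))
    have h1 := Gw_deriv M₁ α η w hw0 (by linarith) k
    have e1 : ((wp w ε : ℝ) : ℂ) - w = -(ε * (w * ((1 - w) / (1 + w)) : ℝ)) := by
      rw [wp]; push_cast; ring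
    have t3 : 0 ≤ (1 - w) / (1 + w) := div_nonneg (by linarith) (by linarith)
    have t3' : (1 - w) / (1 + w) ≤ 1 := by rw [div_le_one (by linarith)]; linarith
    have e2 : ‖((wp w ε : ℝ) : ℂ) - w‖ ≤ ε := by
      rw [e1, norm_neg, norm_mul, Complex.norm_real, Complex.norm_real, Real.norm_of_nonneg hε,
        Real.norm_of_nonneg (by positivity)]
      refine mul_le_of_le_one_right hε ?_
      calc w * ((1 - w) / (1 + w)) ≤ 1 * 1 := by gcongr; linarith
        _ = 1 := one_mul 1
    have e3 : (((wp w ε : ℝ) : ℂ) - w) * deriv (Gw M₁ α η k) w =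
        ((-(ε * ((k + 1) * dw M₁ α η w k)) : ℝ) : ℂ) := by
      rw [e1, neg_mul, mul_assoc, h1]; push_cast; ring
    rw [e3, Gw_ofReal, Gw_ofReal, ← Complex.ofReal_sub, ← Complex.ofReal_sub, Complex.norm_real,
      Real.norm_eq_abs] at T2
    have h5 := leA (1 / δ / δ) (by linarith) k
    have hDy : 0 ≤ D * (A' * y ^ (k + 1)) := by positivity
    calc _ = |Tw M₁ α η (wp w ε) k - Tw M₁ α η w k - -(ε * ((k + 1) * dw M₁ α η w k))| := by
          congr 1; ring
      _ ≤ _ := T2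
      _ ≤ D * (A' * y ^ (k + 1)) / δ / δ * ε * ε := by gcongr
      _ = D * (A' * y ^ (k + 1)) * (1 / δ / δ) * ε ^ 2 := by ring
      _ ≤ A * y ^ (k + 1) * ε ^ 2 := by gcongr
      _ = _ := by ring
  · intro k
    have : M₁ * ((1 - ρ) / (1 + ρ)) = 1 := by rw [hM₁]; field_simp
    simp only [Tw, this, mul_one]

/-- The hypothesis on `α` and `r` in the form in which the weights use it. -/
lemma cond_rho {α r : ℝ} (hr0 : 0 < r) (hr1 : r < 1) (h : 1 ≤ (α + 1) * Real.log (1 / r)) :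
    2 * r ^ 2 / (1 - (r ^ 2) ^ 2) < 1 + α := by
  set x := Real.log (1 / r) with hx
  have hx0 : 0 < x := Real.log_pos ((one_lt_div hr0).2 hr1)
  have hex : Real.exp x = 1 / r := Real.exp_log (by positivity)
  have hs := Real.self_lt_sinh_iff.2 (show 0 < 2 * x by linarith)
  rw [Real.sinh_eq] at hs
  have e2 : Real.exp (2 * x) = 1 / r ^ 2 := by
    rw [two_mul, Real.exp_add, hex]; field_simp
  have e3 : Real.exp (-(2 * x)) = r ^ 2 := by
    rw [Real.exp_neg, e2]; simp
  rw [e2, e3] at hs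
  have hρ1 : r ^ 2 < 1 := pow_lt_one₀ hr0.le hr1 (by norm_num)
  have hρ0 : 0 < r ^ 2 := by positivity
  have hpos : 0 < 1 - (r ^ 2) ^ 2 := by nlinarith
  have h1 : 1 / x ≤ 1 + α := by
    rw [div_le_iff₀ hx0]; linarith
  refine lt_of_lt_of_le ?_ h1
  rw [div_lt_div_iff₀ hpos hx0]
  have : (1 / r ^ 2 - r ^ 2) * r ^ 2 = 1 - (r ^ 2) ^ 2 := by field_simp
  nlinarith

/-! ### Injective analytic functions -/

/-- An injective analytic function has no critical points: near a critical point it would be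
a constant plus the `n`-th power, `n ≥ 2`, of a local homeomorphism. -/
lemma deriv_ne_zero_of_injOn {f : ℂ → ℂ} {U : Set ℂ} (hU : IsOpen U)
    (hf : DifferentiableOn ℂ f U) (hi : Set.InjOn f U) {z₀ : ℂ} (hz : z₀ ∈ U) :
    deriv f z₀ ≠ 0 := by
  intro hd
  have hUn : U ∈ nhds z₀ := hU.mem_nhds hz
  have hA : AnalyticAt ℂ f z₀ := hf.analyticAt hUn
  have hA' : AnalyticAt ℂ (fun z => f z - f z₀) z₀ := hA.sub analyticAt_const
  have hnt : ¬ ∀ᶠ z in nhds z₀, f z - f z₀ = 0 := by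
    intro h
    have h2 : ∀ᶠ z in nhdsWithin z₀ {z₀}ᶜ, (f z - f z₀ = 0 ∧ z ∈ U) ∧ z ≠ z₀ :=
      ((h.and hUn).filter_mono nhdsWithin_le_nhds).and self_mem_nhdsWithin
    obtain ⟨z, ⟨h3, h4⟩, h5⟩ := h2.exists
    exact h5 (hi h4 hz (sub_eq_zero.1 h3))
  have hord : analyticOrderAt (fun z => f z - f z₀) z₀ ≠ ⊤ := by
    rw [Ne, analyticOrderAt_eq_top]; exact hnt
  obtain ⟨n, hn⟩ := ENat.ne_top_iff_exists.1 hord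
  obtain ⟨h, hh, hh0, hev⟩ := (hA'.analyticOrderAt_eq_natCast).1 hn.symm
  -- the order of vanishing is at least two
  have hn0 : n ≠ 0 := by
    rintro rfl
    have := hev.self_of_nhds
    simp at this
    exact hh0 this.symm
  have hn1 : n ≠ 1 := by
    rintro rfl
    have h1 : HasDerivAt (fun z => (z - z₀) ^ 1 • h z) (h z₀) z₀ := by
      have := ((hasDerivAt_id z₀).sub_const z₀).mul hh.differentiableAt.hasDerivAt
      simp only [pow_one, smul_eq_mul]
      refine this.congr_deriv ?_
      simp
    have h2 := (h1.congr_of_eventuallyEq hev).deriv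
    rw [deriv_sub_const, hd] at h2
    exact hh0 h2.symm
  obtain ⟨u, hu⟩ : ∃ u : ℂ → ℂ, u = fun z => (z - z₀) * Complex.exp (Complex.log (h z / h z₀) / n) :=
    ⟨_, rfl⟩
  have hsl : h z₀ / h z₀ ∈ slitPlane := by rw [div_self hh0]; exact one_mem_slitPlane
  have hua : AnalyticAt ℂ u z₀ := by
    rw [hu]
    exact (analyticAt_id.sub analyticAt_const).mul
      (((hh.div analyticAt_const hh0).clog hsl).div analyticAt_const (by exact_mod_cast hn0)).cexp
  have hud : HasDerivAt u 1 z₀ := by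
    have h1 := (((hh.div analyticAt_const hh0).clog hsl).div analyticAt_const
      (by exact_mod_cast hn0 : (n : ℂ) ≠ 0)).cexp.differentiableAt.hasDerivAt
    have := ((hasDerivAt_id z₀).sub_const z₀).mul h1
    rw [hu]
    refine this.congr_deriv ?_
    simp [div_self hh0]
  have hus : HasStrictDerivAt u 1 z₀ := by
    have := hua.hasStrictDerivAt
    rwa [hud.deriv] at this
  have hmap : Filter.map u (nhds z₀) = nhds (u z₀) := hus.map_nhds_eq one_ne_zero
  have hu0 : u z₀ = 0 := by simp [hu]
  rw [hu0] at hmap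
  have hhev : ∀ᶠ z in nhds z₀, h z ≠ 0 := hh.continuousAt.eventually_ne hh0
  obtain ⟨V, hV⟩ : ∃ V, V = {z | z ∈ U ∧ f z - f z₀ = (z - z₀) ^ n • h z ∧ h z ≠ 0} := ⟨_, rfl⟩
  have hVn : V ∈ nhds z₀ := by
    rw [hV]
    filter_upwards [hUn, hev, hhev] with z h1 h2 h3 using ⟨h1, h2, h3⟩
  have himg : u '' V ∈ nhds (0 : ℂ) := hmap ▸ Filter.image_mem_map hVn
  have hpow : ∀ z ∈ V, f z - f z₀ = h z₀ * u z ^ n := by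
    intro z hzV
    rw [hV] at hzV
    rw [hzV.2.1, hu]
    have : (n : ℂ) ≠ 0 := by exact_mod_cast hn0
    simp only [mul_pow, ← Complex.exp_nat_mul, smul_eq_mul]
    rw [mul_div_cancel₀ _ this, Complex.exp_log (div_ne_zero hzV.2.2 hh0)]
    field_simp
  obtain ⟨ε, hε, hb⟩ := Metric.mem_nhds_iff.1 himg
  have hζ := Complex.isPrimitiveRoot_exp n hn0
  obtain ⟨ζ, hζd⟩ : ∃ ζ, ζ = Complex.exp (2 * π * I / n) := ⟨_, rfl⟩
  rw [← hζd] at hζ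
  have hζn : ‖ζ‖ = 1 := hζ.norm'_eq_one hn0
  have hζ1 : ζ ≠ 1 := hζ.ne_one (by omega)
  have hw : ‖((ε / 2 : ℝ) : ℂ)‖ < ε := by
    rw [Complex.norm_real, Real.norm_of_nonneg (by linarith)]; linarith
  obtain ⟨z₁, hz₁, e₁⟩ := hb (show ((ε / 2 : ℝ) : ℂ) ∈ ball (0 : ℂ) ε by simpa using hw)
  obtain ⟨z₂, hz₂, e₂⟩ := hb (show ζ * ((ε / 2 : ℝ) : ℂ) ∈ ball (0 : ℂ) ε by
    rw [mem_ball_zero_iff, norm_mul, hζn, one_mul]; exact hw)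
  have h1 := hpow z₁ hz₁
  have h2 := hpow z₂ hz₂
  rw [e₁] at h1
  rw [e₂, mul_pow, hζ.pow_eq_one, one_mul, ← h1] at h2
  have hU1 : z₁ ∈ U := by rw [hV] at hz₁; exact hz₁.1
  have hU2 : z₂ ∈ U := by rw [hV] at hz₂; exact hz₂.1
  have : z₂ = z₁ := hi hU2 hU1 (by linear_combination h2)
  rw [this, e₁] at e₂
  have hε' : ((ε / 2 : ℝ) : ℂ) ≠ 0 := by
    exact_mod_cast (by linarith : ε / 2 ≠ 0)
  exact hζ1 (mul_right_cancel₀ hε' (by rw [← e₂, one_mul]))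

/-- The inverse of an injective analytic function is analytic on the (open) image. -/
lemma inverse_hasDerivAt {f : ℂ → ℂ} {U : Set ℂ} (hU : IsOpen U)
    (hf : DifferentiableOn ℂ f U) (hi : Set.InjOn f U) {ψ : ℂ → ℂ}
    (hψ : ∀ z ∈ U, ψ (f z) = z) {z₀ : ℂ} (hz : z₀ ∈ U) :
    HasDerivAt ψ (deriv f z₀)⁻¹ (f z₀) := by
  have hne := deriv_ne_zero_of_injOn hU hf hi hz
  have hs : HasStrictDerivAt f (deriv f z₀) z₀ := (hf.analyticAt (hU.mem_nhds hz)).hasStrictDerivAt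
  have hmap := hs.map_nhds_eq hne
  have hUn := hU.mem_nhds hz
  have hcont : ContinuousAt ψ (f z₀) := by
    rw [ContinuousAt, hψ z₀ hz, ← hmap, Filter.tendsto_map'_iff]
    exact Filter.tendsto_id.congr' (by filter_upwards [hUn] with z h using (hψ z h).symm)
  refine HasDerivAt.of_local_left_inverse (f := f) hcont (by rw [hψ z₀ hz]; exact hs.hasDerivAt) hne ?_
  rw [← hmap, Filter.eventually_map]
  filter_upwards [hUn] with z h
  rw [hψ z h]

/-- If the image of an injective analytic function on the disk contains a circle around
`f 0 = 0`, it contains its interior, and hence `‖f' 0‖` is at least its radius. -/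
lemma radius_le_deriv {f : ℂ → ℂ} (hf : DifferentiableOn ℂ f (ball 0 1))
    (hi : Set.InjOn f (ball 0 1)) (h0 : f 0 = 0) {R : ℝ} (hR : 0 < R)
    (hc : ∀ β : ℂ, ‖β‖ = R → ∃ z ∈ ball (0 : ℂ) 1, f z = β) : R ≤ ‖deriv f 0‖ := by
  obtain ⟨ψ, hψd⟩ : ∃ ψ, ψ = Function.invFunOn f (ball 0 1) := ⟨_, rfl⟩
  have hψ : ∀ z ∈ ball (0 : ℂ) 1, ψ (f z) = z := fun z hz => by
    rw [hψd]; exact hi.leftInvOn_invFunOn hz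
  have hm0 : (0 : ℂ) ∈ ball (0 : ℂ) 1 := by simp
  have hin : ∀ β : ℂ, ‖β‖ < R → ∃ z ∈ ball (0 : ℂ) 1, f z = β := by
    intro β hβ
    by_contra hcon
    push Not at hcon
    have hne : ∀ z ∈ ball (0 : ℂ) 1, f z - β ≠ 0 := fun z hz => sub_ne_zero.2 (hcon z hz)
    obtain ⟨l, hl, -, he⟩ := exists_log (hf.sub_const β) hne (Complex.log (f 0 - β))
      (Complex.exp_log (hne 0 hm0))
    have hdl : ∀ z ∈ ball (0 : ℂ) 1, deriv l z = deriv f z / (f z - β) := by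
      intro z hz
      have h1 := (hl.differentiableAt (isOpen_ball.mem_nhds hz)).hasDerivAt.cexp
      have h2 := ((hf.differentiableAt (isOpen_ball.mem_nhds hz)).hasDerivAt.sub_const β)
      have h3 : HasDerivAt (fun z => Complex.exp (l z)) (deriv f z) z := by
        refine h2.congr_of_eventuallyEq ?_
        filter_upwards [isOpen_ball.mem_nhds hz] with w hw using he w hw
      have h4 := h1.unique h3
      rw [he z hz] at h4
      rw [eq_div_iff (hne z hz)]
      linear_combination h4
    have hcirc : (∮ w in C((0 : ℂ), R), (w - β)⁻¹) = 0 := by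
      refine circleIntegral.integral_eq_zero_of_hasDerivWithinAt (f := fun w => l (ψ w)) hR.le ?_
      intro w hw
      obtain ⟨z, hz, rfl⟩ := hc w (by simpa using hw)
      have h1 := inverse_hasDerivAt isOpen_ball hf hi hψ hz
      have h2 : HasDerivAt l (deriv l z) (ψ (f z)) := by
        rw [hψ z hz]; exact (hl.differentiableAt (isOpen_ball.mem_nhds hz)).hasDerivAt
      have h3 := h2.comp _ h1
      refine (h3.congr_deriv ?_).hasDerivWithinAt
      rw [hdl z hz]
      have := deriv_ne_zero_of_injOn isOpen_ball hf hi hz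
      field_simp
    rw [circleIntegral.integral_sub_inv_of_mem_ball (by simpa using hβ)] at hcirc
    simp [Real.pi_ne_zero] at hcirc
  have hψb : ∀ w ∈ ball (0 : ℂ) R, DifferentiableAt ℂ ψ w ∧ ψ w ∈ ball (0 : ℂ) 1 := by
    intro w hw
    obtain ⟨z, hz, rfl⟩ := hin w (by simpa using hw)
    exact ⟨(inverse_hasDerivAt isOpen_ball hf hi hψ hz).differentiableAt, by rw [hψ z hz]; exact hz⟩
  have hψ0 : ψ 0 = 0 := by have := hψ 0 hm0; rwa [h0] at this
  have hd := inverse_hasDerivAt isOpen_ball hf hi hψ hm0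
  rw [h0] at hd
  have hs := Complex.norm_deriv_le_div_of_mapsTo_ball (f := ψ) (c := 0) (R₁ := R) (R₂ := 1)
    (fun w hw => (hψb w hw).1.differentiableWithinAt)
    (fun w hw => by rw [hψ0]; exact ball_subset_closedBall (hψb w hw).2) hR
  rw [hd.deriv, norm_inv] at hs
  have hp : 0 < ‖deriv f 0‖ := norm_pos_iff.2 (deriv_ne_zero_of_injOn isOpen_ball hf hi hm0)
  rw [inv_eq_one_div, div_le_div_iff₀ hp hR] at hs
  linarith

/-! ### Factoring a bounded univalent function -/

/-- `φ` is an injective analytic self-map of the unit disk with `φ 0 = 0` and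
`deriv φ 0 = b > 0`. -/
structure SM (φ : ℂ → ℂ) (b : ℝ) : Prop where
  diff : DifferentiableOn ℂ φ (ball 0 1)
  inj : Set.InjOn φ (ball 0 1)
  maps : ∀ z : ℂ, ‖z‖ < 1 → ‖φ z‖ < 1
  zero : φ 0 = 0
  der : deriv φ 0 = (b : ℂ)
  pos : 0 < b

lemma SM.le_one {φ : ℂ → ℂ} {b : ℝ} (h : SM φ b) : b ≤ 1 := by
  have hs := Complex.norm_deriv_le_div_of_mapsTo_ball (f := φ) (c := 0) (R₁ := 1) (R₂ := 1)
    h.diff (fun w hw => by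
      rw [h.zero]; exact ball_subset_closedBall (by simpa using h.maps w (by simpa using hw)))
    one_pos
  rw [h.der, Complex.norm_real, Real.norm_of_nonneg h.pos.le] at hs
  simpa using hs

lemma SM.norm_le {φ : ℂ → ℂ} {b : ℝ} (h : SM φ b) {z : ℂ} (hz : ‖z‖ < 1) : ‖φ z‖ ≤ ‖z‖ := by
  refine Complex.norm_le_norm_of_mapsTo_ball (f := φ) (R := 1) h.diff ?_ h.zero hz
  intro w hw
  simpa using (h.maps w (by simpa using hw)).le

lemma mobius_lt {a : ℝ} (ha0 : 0 < a) (ha1 : a < 1) {z : ℂ} (hz : ‖z‖ < 1) :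
    ‖(a - z) / (1 - a * z)‖ < 1 := by
  rw [norm_div, div_lt_one (norm_pos_iff.2 (one_sub_mul_ne ha0 ha1 hz))]
  refine lt_of_pow_lt_pow_left₀ 2 (norm_nonneg _) ?_
  rw [← Complex.normSq_eq_norm_sq, ← Complex.normSq_eq_norm_sq]
  have hz2 : Complex.normSq z < 1 := by
    rw [Complex.normSq_eq_norm_sq]; nlinarith [norm_nonneg z]
  simp only [Complex.normSq_apply, Complex.sub_re, Complex.sub_im, Complex.ofReal_re,
    Complex.ofReal_im, Complex.mul_re, Complex.mul_im, Complex.one_re, Complex.one_im] at hz2 ⊢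
  have : 0 < (1 - a ^ 2) * (1 - (z.re * z.re + z.im * z.im)) :=
    mul_pos (by nlinarith) (by linarith)
  nlinarith

lemma bp_hasDerivAt_zero (a : ℝ) : HasDerivAt (bp a) a 0 := by
  have h1 : HasDerivAt (fun z : ℂ => z * (a - z)) (a : ℂ) 0 := by
    refine ((hasDerivAt_id (0 : ℂ)).mul ((hasDerivAt_id (0 : ℂ)).const_sub (a : ℂ))).congr_deriv ?_
    simp
  have h2 : HasDerivAt (fun z : ℂ => 1 - a * z) (-(a : ℂ)) 0 := by
    refine (((hasDerivAt_id (0 : ℂ)).const_mul (a : ℂ)).const_sub (1 : ℂ)).congr_deriv ?_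
    simp
  refine (h1.div h2 (by simp)).congr_deriv ?_
  simp

/-- The Koebe square-root step: a self-map omitting a value of modulus `c ^ 2` factors through
a rotated copy of `bp a` with `a = 2 c / (1 + c ^ 2)`. -/
lemma SM.lift {φ : ℂ → ℂ} {b c a : ℝ} (h : SM φ b) (hc0 : 0 < c) (hc1 : c < 1)
    (ha : a = 2 * c / (1 + c ^ 2)) {β : ℂ} (hβ : ‖β‖ = c ^ 2)
    (hom : ∀ z : ℂ, ‖z‖ < 1 → φ z ≠ β) :
    ∃ κ : ℂ, ∃ φ₁ : ℂ → ℂ, ‖κ‖ = 1 ∧ SM φ₁ (b / a) ∧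
      ∀ z : ℂ, ‖z‖ < 1 → φ z = star κ * bp a (κ * φ₁ z) := by
  have hc2 : 0 < c ^ 2 := by positivity
  have hc21 : c ^ 2 < 1 := by nlinarith
  have ha0 : 0 < a := by rw [ha]; positivity
  have ha1 : a < 1 := by rw [ha, div_lt_one (by positivity)]; nlinarith [sq_nonneg (1 - c)]
  have hcC : (c : ℂ) ≠ 0 := by exact_mod_cast hc0.ne'
  obtain ⟨κ, hκd⟩ : ∃ κ : ℂ, κ = star β / (c : ℂ) ^ 2 := ⟨_, rfl⟩
  have hβs : star β * β = (c : ℂ) ^ 4 := by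
    have : star β * β = ((‖β‖ ^ 2 : ℝ) : ℂ) := by
      rw [← Complex.normSq_eq_norm_sq, Complex.normSq_eq_conj_mul_self]; rfl
    rw [this, hβ]; push_cast; ring
  have hκβ : κ * β = (c : ℂ) ^ 2 := by
    rw [hκd, div_mul_eq_mul_div, hβs]; field_simp
  have hκ : ‖κ‖ = 1 := by
    rw [hκd, norm_div, norm_star, hβ, norm_pow, Complex.norm_real, Real.norm_of_nonneg hc0.le,
      div_self hc2.ne']
  have hκs : star κ * κ = 1 := by
    have : star κ * κ = ((‖κ‖ ^ 2 : ℝ) : ℂ) := by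
      rw [← Complex.normSq_eq_norm_sq, Complex.normSq_eq_conj_mul_self]; rfl
    rw [this, hκ]; simp
  have hκs' : κ * star κ = 1 := by rw [mul_comm]; exact hκs
  have hψ1 : ∀ z : ℂ, ‖z‖ < 1 → ‖κ * φ z‖ < 1 := fun z hz => by
    rw [norm_mul, hκ, one_mul]; exact h.maps z hz
  have hden : ∀ z : ℂ, ‖z‖ < 1 → 1 - ((c ^ 2 : ℝ) : ℂ) * (κ * φ z) ≠ 0 := fun z hz =>
    one_sub_mul_ne hc2 hc21 (hψ1 z hz)
  obtain ⟨H, hH⟩ : ∃ H : ℂ → ℂ, H = fun z =>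
    (((c ^ 2 : ℝ) : ℂ) - κ * φ z) / (1 - ((c ^ 2 : ℝ) : ℂ) * (κ * φ z)) := ⟨_, rfl⟩
  have hHd : DifferentiableOn ℂ H (ball 0 1) := by
    rw [hH]
    exact ((h.diff.const_mul κ).const_sub _).div (((h.diff.const_mul κ).const_mul _).const_sub _)
      (fun z hz => hden z (by simpa using hz))
  have hHne : ∀ z ∈ ball (0 : ℂ) 1, H z ≠ 0 := by
    intro z hz
    have hz' : ‖z‖ < 1 := by simpa using hz
    rw [hH]
    refine div_ne_zero (fun h0 => hom z hz' ?_) (hden z hz')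
    have h1 : κ * φ z = κ * β := by rw [hκβ]; push_cast at h0; linear_combination -h0
    exact mul_left_cancel₀ (norm_pos_iff.1 (by rw [hκ]; exact one_pos)) h1
  have hH0 : Complex.exp ((2 * Real.log c : ℝ) : ℂ) = H 0 := by
    rw [hH]
    simp only [h.zero, mul_zero, sub_zero, div_one]
    rw [← Complex.ofReal_exp, two_mul, Real.exp_add, Real.exp_log hc0, sq]
  obtain ⟨l, hl, hl0, hle⟩ := exists_log hHd hHne _ hH0
  obtain ⟨q, hq⟩ : ∃ q : ℂ → ℂ, q = fun z => Complex.exp (l z / 2) := ⟨_, rfl⟩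
  have hqd : DifferentiableOn ℂ q (ball 0 1) := by
    rw [hq]; exact (hl.div_const 2).cexp
  have hq2 : ∀ z : ℂ, ‖z‖ < 1 → q z ^ 2 = H z := by
    intro z hz
    rw [← hle z (by simpa using hz), hq]
    simp only [sq, ← Complex.exp_add]
    congr 1; ring
  have hq0 : q 0 = c := by
    rw [hq]
    simp only [hl0]
    push_cast
    rw [mul_div_cancel_left₀ _ two_ne_zero, ← Complex.ofReal_exp, Real.exp_log hc0]
  have hq1 : ∀ z : ℂ, ‖z‖ < 1 → ‖q z‖ < 1 := by
    intro z hz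
    have h1 : ‖q z‖ ^ 2 < 1 := by
      rw [← norm_pow, hq2 z hz, hH]
      exact mobius_lt hc2 hc21 (hψ1 z hz)
    nlinarith [norm_nonneg (q z)]
  obtain ⟨p, hp⟩ : ∃ p : ℂ → ℂ, p = fun z => (c - q z) / (1 - c * q z) := ⟨_, rfl⟩
  have hpd : DifferentiableOn ℂ p (ball 0 1) := by
    rw [hp]
    exact (hqd.const_sub _).div ((hqd.const_mul _).const_sub _)
      (fun z hz => one_sub_mul_ne hc0 hc1 (hq1 z (by simpa using hz)))
  have hp1 : ∀ z : ℂ, ‖z‖ < 1 → ‖p z‖ < 1 := fun z hz => by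
    rw [hp]; exact mobius_lt hc0 hc1 (hq1 z hz)
  have hfac : ∀ z : ℂ, ‖z‖ < 1 → κ * φ z = bp a (p z) := by
    intro z hz
    have e1 := hq2 z hz
    rw [hH] at e1
    have d1 := hden z hz
    simp only at e1
    rw [eq_div_iff d1] at e1
    have d2 : 1 - (c : ℂ) * q z ≠ 0 := one_sub_mul_ne hc0 hc1 (hq1 z hz)
    have d3 : 1 + (c : ℂ) * q z ≠ 0 := by
      have := one_sub_mul_ne hc0 hc1 (z := -q z) (by rw [norm_neg]; exact hq1 z hz)
      simpa using this
    have d4 : 1 - (a : ℂ) * p z ≠ 0 := one_sub_mul_ne ha0 ha1 (hp1 z hz)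
    have d5 : (1 : ℂ) + c ^ 2 ≠ 0 := by
      have : (1 : ℝ) + c ^ 2 ≠ 0 := by positivity
      exact_mod_cast this
    have d6 : (1 : ℂ) - c ^ 2 ≠ 0 := by
      have : (1 : ℝ) - c ^ 2 ≠ 0 := by linarith
      exact_mod_cast this
    have haC : (a : ℂ) = 2 * c / (1 + c ^ 2) := by rw [ha]; push_cast; ring
    have hpz : p z * (1 - c * q z) = c - q z := by
      rw [hp]; exact div_mul_cancel₀ _ d2
    have e2 : ((a : ℂ) - p z) * ((1 + c ^ 2) * (1 - c * q z)) = (1 - c ^ 2) * (c + q z) := by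
      rw [haC]; field_simp; linear_combination -(1 + (c : ℂ) ^ 2) * hpz
    have e3 : (1 - (a : ℂ) * p z) * ((1 + c ^ 2) * (1 - c * q z)) = (1 - c ^ 2) * (1 + c * q z) := by
      rw [haC]; field_simp; linear_combination -(2 * (c : ℂ)) * hpz
    have e4 : ((a : ℂ) - p z) * (1 + c * q z) = (1 - a * p z) * (c + q z) := by
      refine mul_right_cancel₀ (mul_ne_zero d5 d2) ?_
      linear_combination (1 + (c : ℂ) * q z) * e2 - ((c : ℂ) + q z) * e3
    rw [bp, eq_div_iff d4]
    refine mul_right_cancel₀ (mul_ne_zero d2 d3) ?_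
    push_cast at e1
    linear_combination (1 - (a : ℂ) * p z) * e1 - (p z * (1 - c * q z)) * e4
      - (1 - (a : ℂ) * p z) * ((c : ℂ) + q z) * hpz
  have hfac' : ∀ z : ℂ, ‖z‖ < 1 → φ z = star κ * bp a (κ * (star κ * p z)) := by
    intro z hz
    rw [← mul_assoc κ, hκs', one_mul, ← hfac z hz, ← mul_assoc, hκs, one_mul]
  have hz0 : star κ * p 0 = 0 := by rw [hp]; simp [hq0]
  have hφ₁d : DifferentiableOn ℂ (fun z => star κ * p z) (ball 0 1) := hpd.const_mul _
  refine ⟨κ, fun z => star κ * p z, hκ, ⟨hφ₁d, ?_, ?_, hz0, ?_, div_pos h.pos ha0⟩, hfac'⟩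
  · intro z hz w hw hzw
    refine h.inj hz hw ?_
    rw [hfac' z (by simpa using hz), hfac' w (by simpa using hw)]
    simp only at hzw
    rw [hzw]
  · intro z hz
    rw [norm_mul, norm_star, hκ, one_mul]; exact hp1 z hz
  · have hm : ball (0 : ℂ) 1 ∈ nhds (0 : ℂ) := isOpen_ball.mem_nhds (by simp)
    have h1 := (hφ₁d.differentiableAt hm).hasDerivAt
    have h2 : HasDerivAt (bp a) (a : ℂ) (κ * (star κ * p 0)) := by
      rw [hz0, mul_zero]; exact bp_hasDerivAt_zero a
    have h3 := ((h2.comp (0 : ℂ) (h1.const_mul κ)).const_mul (star κ))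
    have h4 : HasDerivAt φ (star κ * (a * (κ * deriv (fun z => star κ * p z) 0))) 0 := by
      refine h3.congr_of_eventuallyEq ?_
      filter_upwards [hm] with z hz using hfac' z (by simpa using hz)
    have h5 := h4.deriv
    rw [h.der] at h5
    have haC : (a : ℂ) ≠ 0 := by exact_mod_cast ha0.ne'
    push_cast
    rw [eq_div_iff haC, h5]
    linear_combination -(a : ℂ) * deriv (fun z => star κ * p z) 0 * hκs

/-- A bounded normalized univalent `F` factors as `M a ^ j φ exp (g ∘ φ)` with a chain `g`
and a self-map `φ` whose derivative at the origin is at least `c ^ 2`: lift through omitted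
values of modulus `c ^ 2` as long as there are any; the derivative of the self-map grows by the
factor `1 / a` each time, so this stops. -/
lemma exists_factor {F : ℂ → ℂ} {M c a : ℝ} (hF : DifferentiableOn ℂ F (ball 0 1))
    (hi : Set.InjOn F (ball 0 1)) (hF0 : F 0 = 0) (hF1 : deriv F 0 = 1) (hM : 1 < M)
    (hb : ∀ z : ℂ, ‖z‖ < 1 → ‖F z‖ < M) (hc0 : 0 < c) (hc1 : c < 1)
    (ha : a = 2 * c / (1 + c ^ 2)) :
    ∃ j g φ b, Chain a j g ∧ SM φ b ∧ c ^ 2 ≤ b ∧ M * a ^ j * b = 1 ∧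
      ∀ z : ℂ, ‖z‖ < a → F z = M * a ^ j * φ z * Complex.exp (g (φ z)) := by
  have ha0 : 0 < a := by rw [ha]; positivity
  have ha1 : a < 1 := by rw [ha, div_lt_one (by positivity)]; nlinarith [sq_nonneg (1 - c)]
  have hM0 : 0 < M := by linarith
  have haC : (a : ℂ) ≠ 0 := by exact_mod_cast ha0.ne'
  have hMC : (M : ℂ) ≠ 0 := by exact_mod_cast hM0.ne'
  by_contra hcon
  have hall : ∀ j : ℕ, ∃ g φ b, Chain a j g ∧ SM φ b ∧ M * a ^ j * b = 1 ∧
      ∀ z : ℂ, ‖z‖ < a → F z = M * a ^ j * φ z * Complex.exp (g (φ z)) := by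
    intro j
    induction j with
    | zero =>
      refine ⟨_, fun z => (1 / M : ℂ) * F z, 1 / M, Chain.zero, ⟨hF.const_mul _, ?_, ?_, ?_, ?_, ?_⟩,
        ?_, ?_⟩
      · intro z hz w hw h
        exact hi hz hw (mul_left_cancel₀ (by simpa using hMC) h)
      · intro z hz
        rw [norm_mul, norm_div, norm_one, Complex.norm_real, Real.norm_of_nonneg hM0.le,
          one_div_mul_eq_div, div_lt_one hM0]
        exact hb z hz
      · simp [hF0]
      · have := (hF.differentiableAt (isOpen_ball.mem_nhds (by simp : (0 : ℂ) ∈ ball (0 : ℂ) 1))).hasDerivAt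
        have h2 := (this.const_mul (1 / M : ℂ)).deriv
        rw [h2, hF1]; push_cast; ring
      · positivity
      · field_simp
      · intro z _
        simp
        field_simp
    | succ j ih =>
      obtain ⟨g, φ, b, hg, hφ, hMb, hfac⟩ := ih
      have hnot : ¬ ∀ β : ℂ, ‖β‖ = c ^ 2 → ∃ z ∈ ball (0 : ℂ) 1, φ z = β := by
        intro hcirc
        have := radius_le_deriv hφ.diff hφ.inj hφ.zero (by positivity : 0 < c ^ 2) hcirc
        rw [hφ.der, Complex.norm_real, Real.norm_of_nonneg hφ.pos.le] at this
        exact hcon ⟨j, g, φ, b, hg, hφ, this, hMb, hfac⟩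
      push Not at hnot
      obtain ⟨β, hβ, hom⟩ := hnot
      obtain ⟨κ, φ₁, hκ, hφ₁, hl⟩ := hφ.lift hc0 hc1 ha hβ
        (fun z hz => hom z (by simpa using hz))
      refine ⟨_, φ₁, b / a, Chain.step hg hκ, hφ₁, ?_, ?_⟩
      · rw [← hMb, pow_succ]; field_simp
      · intro z hz
        have hκs : star κ * κ = 1 := by
          have : star κ * κ = ((‖κ‖ ^ 2 : ℝ) : ℂ) := by
            rw [← Complex.normSq_eq_norm_sq, Complex.normSq_eq_conj_mul_self]; rfl
          rw [this, hκ]; simp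
        have hn : ‖κ * φ₁ z‖ < a := by
          rw [norm_mul, hκ, one_mul]
          exact (hφ₁.norm_le (hz.trans ha1)).trans_lt hz
        rw [hfac z hz, Complex.exp_add, ← hl z (hz.trans ha1)]
        have e1 : φ z = a * φ₁ z * Complex.exp (bL a (κ * φ₁ z)) := by
          rw [hl z (hz.trans ha1), bp_eq ha0 ha1 hn]
          linear_combination (a * φ₁ z * Complex.exp (bL a (κ * φ₁ z))) * hκs
        have e2 : (M : ℂ) * a ^ j * φ z * Complex.exp (g (φ z)) =
            M * a ^ j * Complex.exp (g (φ z)) * (a * φ₁ z * Complex.exp (bL a (κ * φ₁ z))) := by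
          rw [← e1]; ring
        rw [e2, pow_succ]; ring
  have ht := (tendsto_pow_atTop_nhds_zero_of_lt_one ha0.le ha1).eventually
    (gt_mem_nhds (show (0 : ℝ) < 1 / M by positivity))
  obtain ⟨j, hj⟩ := ht.exists
  obtain ⟨g, φ, b, -, hφ, hMb, -⟩ := hall j
  have h1 := hφ.le_one
  rw [lt_div_iff₀ hM0] at hj
  have : M * a ^ j * b ≤ M * a ^ j := mul_le_of_le_one_right (by positivity) h1
  linarith

/-- The chains of `exists_factor` approximate the logarithm of `F z / z` near the origin. -/
lemma approx_bound {F G : ℂ → ℂ} {M : ℝ} (hF : DifferentiableOn ℂ F (ball 0 1))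
    (hi : Set.InjOn F (ball 0 1)) (hF0 : F 0 = 0) (hF1 : deriv F 0 = 1) (hM : 1 < M)
    (hb : ∀ z : ℂ, ‖z‖ < 1 → ‖F z‖ < M) (hG : DifferentiableOn ℂ G (ball 0 1)) (hG0 : G 0 = 0)
    (hGe : ∀ z : ℂ, ‖z‖ < 1 → z ≠ 0 → Complex.exp (G z) = F z / z) :
    ∃ B : ℝ, ∀ c a : ℝ, 1 / 2 ≤ c → c < 1 → a = 2 * c / (1 + c ^ 2) →
      ∃ j g, Chain a j g ∧ (1 / a) ^ j ≤ M ∧ ∀ z : ℂ, ‖z‖ ≤ 1 / 4 →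
        ‖g z - G z‖ ≤ 2 * Real.log (1 / c ^ 2) + B * (1 - c ^ 2) := by
  obtain ⟨B, hBd⟩ : ∃ B, B = 2 * Real.log M * (1 / 2) / (4 / 5 - 1 / 2) := ⟨_, rfl⟩
  refine ⟨4 * B, fun c a hc0 hc1 ha => ?_⟩
  have hcp : 0 < c := by linarith
  obtain ⟨j, g, φ, b, hg, hφ, hcb, hMb, hfac⟩ := exists_factor hF hi hF0 hF1 hM hb hcp hc1 ha
  have ha0 : 0 < a := by rw [ha]; positivity
  have ha1 : a < 1 := by rw [ha, div_lt_one (by positivity)]; nlinarith [sq_nonneg (1 - c)]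
  have ha4 : 4 / 5 ≤ a := by
    rw [ha, div_le_div_iff₀ (by norm_num) (by positivity)]; nlinarith
  have hb1 := hφ.le_one
  have hj : (1 / a) ^ j ≤ M := by
    rw [div_pow, one_pow, div_le_iff₀ (by positivity)]
    have : M * a ^ j * b ≤ M * a ^ j := mul_le_of_le_one_right (by positivity) hb1
    linarith
  refine ⟨j, g, hg, hj, ?_⟩
  obtain ⟨hgd, hg0, -⟩ := hg.spec ha0 ha1
  have hc2 : 0 < c ^ 2 := by positivity
  have hc21 : c ^ 2 < 1 := by nlinarith
  have hB0 : 0 ≤ B := by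
    rw [hBd]; have := Real.log_pos hM; positivity
  obtain ⟨v, hv⟩ : ∃ v : ℂ → ℂ, v = dslope φ 0 := ⟨_, rfl⟩
  have hm : ball (0 : ℂ) 1 ∈ nhds (0 : ℂ) := isOpen_ball.mem_nhds (by simp)
  have hvd : DifferentiableOn ℂ v (ball 0 1) := by
    rw [hv]; exact (Complex.differentiableOn_dslope hm).2 hφ.diff
  have hv0 : v 0 = b := by rw [hv, dslope_same, hφ.der]
  have hvz : ∀ z, φ z = z * v z := by
    intro z
    have := sub_smul_dslope φ 0 z
    rw [hφ.zero, sub_zero, sub_zero, smul_eq_mul] at this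
    rw [hv, this]
  have hv1 : ∀ z : ℂ, ‖z‖ < 1 → ‖v z‖ ≤ 1 := by
    intro z hz
    by_cases h0 : z = 0
    · rw [h0, hv0, Complex.norm_real, Real.norm_of_nonneg hφ.pos.le]; exact hb1
    · have := hφ.norm_le hz
      rw [hvz, norm_mul] at this
      have hp : 0 < ‖z‖ := norm_pos_iff.2 h0
      exact le_of_mul_le_mul_left (by linarith) hp
  have hφa : ∀ z : ℂ, ‖z‖ < a → ‖φ z‖ < a := fun z hz =>
    (hφ.norm_le (hz.trans ha1)).trans_lt hz
  have hbC : (b : ℂ) ≠ 0 := by exact_mod_cast hφ.pos.ne'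
  have hMbC : (M : ℂ) * a ^ j = 1 / b := by
    rw [eq_div_iff hbC]; exact_mod_cast hMb
  -- the difference of the logarithms of `F` and of the chain part is a logarithm of `v / b`
  have hD : ∀ z : ℂ, ‖z‖ < a → Complex.exp (G z - g (φ z)) = v z / b := by
    intro z hz
    by_cases h0 : z = 0
    · rw [h0, hG0, hφ.zero, hg0, hv0, div_self hbC]; simp
    · rw [Complex.exp_sub, hGe z (hz.trans ha1) h0, hfac z hz, hMbC, hvz z]
      have := Complex.exp_ne_zero (g (z * v z))
      field_simp
  have hDd : DifferentiableOn ℂ (fun z => G z - g (φ z)) (ball 0 a) := by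
    refine (hG.mono (ball_subset_ball ha1.le)).sub ?_
    exact hgd.comp (hφ.diff.mono (ball_subset_ball ha1.le)) (fun z hz => by
      simpa using hφa z (by simpa using hz))
  have hlog : 0 < Real.log (1 / c ^ 2) := Real.log_pos (by rw [lt_div_iff₀ hc2]; linarith)
  intro z hz
  have hz1 : ‖z‖ < 1 := by linarith
  have b1 : ‖G z - g (φ z)‖ ≤ 2 * Real.log (1 / c ^ 2) := by
    have := Complex.borelCaratheodory_zero (f := fun z => G z - g (φ z)) (R := 1 / 2) (z := z) hlog
      (hDd.mono (ball_subset_ball (by linarith))) (fun w hw => by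
        have hw' : ‖w‖ < a := by
          have : ‖w‖ < 1 / 2 := by simpa using hw
          linarith
        show (G w - g (φ w)).re ≤ _
        rw [Real.le_log_iff_exp_le (by positivity), ← Complex.norm_exp, hD w hw', norm_div,
          Complex.norm_real, Real.norm_of_nonneg hφ.pos.le]
        exact div_le_div₀ zero_le_one (hv1 w (hw'.trans ha1)) hc2 hcb)
      (by norm_num) (by rw [mem_ball_zero_iff]; linarith) (by simp [hG0, hφ.zero, hg0])
    refine this.trans ?_
    rw [div_le_iff₀ (by linarith)]
    have : Real.log (1 / c ^ 2) * ‖z‖ ≤ Real.log (1 / c ^ 2) * (1 / 2 - ‖z‖) :=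
      mul_le_mul_of_nonneg_left (by linarith) hlog.le
    linarith
  have b2 : ‖v z - b‖ ≤ 1 - c ^ 2 := by
    have hp : 0 < 1 - c ^ 2 := by linarith
    have := Complex.borelCaratheodory_zero (f := fun z => v z - b) (R := 1) (z := z) hp
      (hvd.sub_const _) (fun w hw => by
        have hw' : ‖w‖ < 1 := by simpa using hw
        show (v w - b).re ≤ _
        rw [Complex.sub_re, Complex.ofReal_re]
        have := (Complex.re_le_norm (v w)).trans (hv1 w hw')
        linarith)
      one_pos (by rw [mem_ball_zero_iff]; exact hz1) (by simp [hv0])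
    refine this.trans ?_
    rw [div_le_iff₀ (by linarith)]
    have : (1 - c ^ 2) * (2 * ‖z‖) ≤ (1 - c ^ 2) * (1 - ‖z‖) :=
      mul_le_mul_of_nonneg_left (by linarith) hp.le
    linarith
  have b3 : ‖φ z - z‖ ≤ 1 - c ^ 2 := by
    have e : φ z - z = z * ((v z - b) + ((b - 1 : ℝ) : ℂ)) := by rw [hvz]; push_cast; ring
    rw [e, norm_mul]
    have h1 : ‖(v z - b) + ((b - 1 : ℝ) : ℂ)‖ ≤ 2 * (1 - c ^ 2) := by
      refine (norm_add_le _ _).trans ?_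
      rw [Complex.norm_real, Real.norm_eq_abs, abs_of_nonpos (by linarith)]
      linarith
    calc _ ≤ (1 / 4) * (2 * (1 - c ^ 2)) := mul_le_mul hz h1 (norm_nonneg _) (by norm_num)
      _ ≤ _ := by linarith
  have hder : ∀ w ∈ closedBall (0 : ℂ) (1 / 4), ‖deriv g w‖ ≤ B / (1 / 4) := by
    intro w hw
    have hw' : ‖w‖ ≤ 1 / 4 := by simpa using hw
    have hsub : ∀ u : ℂ, ‖u - w‖ ≤ 1 / 4 → ‖u‖ ≤ 1 / 2 := by
      intro u hu
      calc ‖u‖ = ‖(u - w) + w‖ := by ring_nf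
        _ ≤ _ := norm_add_le _ _
        _ ≤ _ := by linarith
    refine Complex.norm_deriv_le_of_forall_mem_sphere_norm_le (by norm_num) ?_ ?_
    · refine (hgd.mono ?_).diffContOnCl
      rw [closure_ball _ (by norm_num)]
      intro u hu
      have := hsub u (by simpa [dist_eq_norm] using hu)
      rw [mem_ball_zero_iff]; linarith
    · intro u hu
      rw [hBd]
      exact hg.bound ha0 ha1 hM hj (by norm_num) (by norm_num) ha4
        (hsub u (by simpa [dist_eq_norm] using (mem_sphere.1 hu).le))
  have b4 : ‖g z - g (φ z)‖ ≤ B / (1 / 4) * ‖z - φ z‖ := by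
    refine Convex.norm_image_sub_le_of_norm_deriv_le (𝕜 := ℂ) (s := closedBall (0 : ℂ) (1 / 4)) ?_ hder
      (convex_closedBall _ _) ?_ (by simpa using hz)
    · intro w hw
      refine hgd.differentiableAt (isOpen_ball.mem_nhds ?_)
      have : ‖w‖ ≤ 1 / 4 := by simpa using hw
      rw [mem_ball_zero_iff]; linarith
    · simpa using (hφ.norm_le hz1).trans hz
  have e : g z - G z = (g z - g (φ z)) - (G z - g (φ z)) := by ring
  rw [e]
  refine (norm_sub_le _ _).trans ?_
  rw [norm_sub_rev z] at b4
  have b5 : B / (1 / 4) * ‖φ z - z‖ ≤ B / (1 / 4) * (1 - c ^ 2) :=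
    mul_le_mul_of_nonneg_left b3 (by positivity)
  have b6 : B / (1 / 4) * (1 - c ^ 2) = 4 * B * (1 - c ^ 2) := by ring
  linarith

/-- Every Taylor coefficient of the logarithm of `F z / z`, for bounded univalent `F`, is a limit
of coefficients of chains whose parameter tends to `1`. -/
lemma exists_chain_seq {F G : ℂ → ℂ} {M : ℝ} (hF : DifferentiableOn ℂ F (ball 0 1))
    (hi : Set.InjOn F (ball 0 1)) (hF0 : F 0 = 0) (hF1 : deriv F 0 = 1) (hM : 1 < M)
    (hb : ∀ z : ℂ, ‖z‖ < 1 → ‖F z‖ < M) (hG : DifferentiableOn ℂ G (ball 0 1)) (hG0 : G 0 = 0)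
    (hGe : ∀ z : ℂ, ‖z‖ < 1 → z ≠ 0 → Complex.exp (G z) = F z / z) :
    ∃ (a : ℕ → ℝ) (j : ℕ → ℕ) (g : ℕ → ℂ → ℂ), (∀ n, 0 < a n ∧ a n < 1) ∧
      Filter.Tendsto a Filter.atTop (nhds 1) ∧ (∀ n, Chain (a n) (j n) (g n)) ∧
      (∀ n, (1 / a n) ^ j n ≤ M) ∧
      ∀ k, Filter.Tendsto (fun n => co (g n) k) Filter.atTop (nhds (co G k)) := by
  obtain ⟨B, hB⟩ := approx_bound hF hi hF0 hF1 hM hb hG hG0 hGe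
  obtain ⟨c, hc⟩ : ∃ c : ℕ → ℝ, c = fun n : ℕ => 1 - 1 / ((n : ℝ) + 2) := ⟨_, rfl⟩
  have hc0 : ∀ n, 1 / 2 ≤ c n := by
    intro n
    have : 1 / ((n : ℝ) + 2) ≤ 1 / 2 := by
      apply one_div_le_one_div_of_le (by norm_num)
      have := Nat.cast_nonneg (α := ℝ) n
      linarith
    rw [hc]; simp only; linarith
  have hc1 : ∀ n, c n < 1 := by
    intro n
    have : 0 < 1 / ((n : ℝ) + 2) := by positivity
    rw [hc]; simp only; linarith
  have hct : Filter.Tendsto c Filter.atTop (nhds 1) := by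
    have h1 : Filter.Tendsto (fun n : ℕ => 1 / ((n : ℝ) + 2)) Filter.atTop (nhds 0) := by
      have := (Filter.tendsto_add_atTop_iff_nat 1).2 (tendsto_one_div_add_atTop_nhds_zero_nat (𝕜 := ℝ))
      refine this.congr fun n => ?_
      push_cast; ring
    have := (tendsto_const_nhds (x := (1 : ℝ))).sub h1
    rw [hc]; simpa using this
  choose j g h1 h2 h3 using fun n => hB (c n) (2 * c n / (1 + c n ^ 2)) (hc0 n) (hc1 n) rfl
  have hap : ∀ n, 0 < 2 * c n / (1 + c n ^ 2) ∧ 2 * c n / (1 + c n ^ 2) < 1 := by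
    intro n
    have := hc0 n
    have := hc1 n
    have : 0 < c n := by linarith
    refine ⟨by positivity, ?_⟩
    rw [div_lt_one (by positivity)]; nlinarith [sq_nonneg (1 - c n)]
  refine ⟨fun n => 2 * c n / (1 + c n ^ 2), j, g, hap, ?_, h1, h2, ?_⟩
  · have := (hct.const_mul 2).div ((hct.pow 2).const_add 1) (by norm_num)
    norm_num at this
    exact this
  · intro k
    rw [tendsto_iff_norm_sub_tendsto_zero]
    have hup : Filter.Tendsto (fun n => (2 * Real.log (1 / c n ^ 2) + B * (1 - c n ^ 2)) / (1 / 4) ^ k)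
        Filter.atTop (nhds 0) := by
      have e1 : Filter.Tendsto (fun n => 1 / c n ^ 2) Filter.atTop (nhds (1 / 1 ^ 2)) :=
        (tendsto_const_nhds).div (hct.pow 2) (by norm_num)
      have e2 := (e1.log (by norm_num)).const_mul 2
      have e3 := ((hct.pow 2).const_sub 1).const_mul B
      have := (e2.add e3).div_const ((1 / 4 : ℝ) ^ k)
      simpa using this
    refine squeeze_zero (fun n => norm_nonneg _) (fun n => ?_) hup
    obtain ⟨hgd, -, -⟩ := (h1 n).spec (hap n).1 (hap n).2
    have ha4 : 1 / 2 < 2 * c n / (1 + c n ^ 2) := by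
      have := hc0 n
      have := hc1 n
      rw [div_lt_div_iff₀ (by norm_num) (by positivity)]; nlinarith
    have d1 : DifferentiableOn ℂ (g n) (ball 0 (1 / 2)) := hgd.mono (ball_subset_ball ha4.le)
    have d2 : DifferentiableOn ℂ G (ball 0 (1 / 2)) := hG.mono (ball_subset_ball (by norm_num))
    have hco : co (g n) k - co G k = co (fun z => g n z + (-1) * G z) k := by
      rw [co_add (by norm_num : (0 : ℝ) < 1 / 2) d1 (d2.const_mul _), co_const_mul (by norm_num) d2]
      ring
    rw [hco]
    refine co_bound (d1.fun_add (d2.const_mul _)) (by norm_num) (by norm_num) (fun z hz => ?_) k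
    have := h3 n z hz
    rwa [neg_one_mul, ← sub_eq_add_neg]

/-! ### The first two coefficients -/

lemma co_one (g : ℂ → ℂ) : co g 1 = deriv g 0 := by
  simp [co, iteratedDeriv_one]

lemma co_two (g : ℂ → ℂ) : co g 2 = deriv (deriv g) 0 / 2 := by
  simp [co, iteratedDeriv_succ, iteratedDeriv_zero]

lemma bp_hasDerivAt {a : ℝ} (ha0 : 0 < a) (ha1 : a < 1) {z : ℂ} (hz : ‖z‖ < 1) :
    HasDerivAt (bp a) ((a - 2 * z + a * z ^ 2) / (1 - a * z) ^ 2) z := by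
  have hne := one_sub_mul_ne ha0 ha1 hz
  have h1 := (hasDerivAt_id z).mul ((hasDerivAt_id z).const_sub (a : ℂ))
  have h2 := ((hasDerivAt_id z).const_mul (a : ℂ)).const_sub (1 : ℂ)
  refine (h1.div h2 hne).congr_deriv ?_
  simp only [id]
  congr 1
  simp
  ring

/-- The action of one link of a chain on the first two Taylor coefficients. -/
lemma step_two {a : ℝ} (ha0 : 0 < a) (ha1 : a < 1) {g : ℂ → ℂ}
    (hg : DifferentiableOn ℂ g (ball 0 a)) {κ : ℂ} (hκ : ‖κ‖ = 1) :
    co (fun z => g (star κ * bp a (κ * z)) + bL a (κ * z)) 1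
        = a * co g 1 + κ * (a - 1 / a) ∧
      co (fun z => g (star κ * bp a (κ * z)) + bL a (κ * z)) 2
        = -(1 - a ^ 2) * κ * co g 1 + a ^ 2 * co g 2 + κ ^ 2 * (a ^ 2 - 1 / a ^ 2) / 2 := by
  have haC : (a : ℂ) ≠ 0 := by exact_mod_cast ha0.ne'
  have hκs : star κ * κ = 1 := by
    have : star κ * κ = ((‖κ‖ ^ 2 : ℝ) : ℂ) := by
      rw [← Complex.normSq_eq_norm_sq, Complex.normSq_eq_conj_mul_self]; rfl
    rw [this, hκ]; simp
  obtain ⟨D, hD⟩ : ∃ D : ℂ → ℂ, D = fun z => deriv g (star κ * bp a (κ * z)) *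
    ((a - 2 * (κ * z) + a * (κ * z) ^ 2) / (1 - a * (κ * z)) ^ 2) +
    (-(1 / (a - κ * z)) + a / (1 - a * (κ * z))) * κ := ⟨_, rfl⟩
  have hder : ∀ z : ℂ, ‖z‖ < a →
      HasDerivAt (fun z => g (star κ * bp a (κ * z)) + bL a (κ * z)) (D z) z := by
    intro z hz
    have hn : ‖κ * z‖ = ‖z‖ := by rw [norm_mul, hκ, one_mul]
    have hlin : HasDerivAt (fun z : ℂ => κ * z) κ z := by
      simpa using (hasDerivAt_id z).const_mul κ
    have h1 := (((bp_hasDerivAt ha0 ha1 (z := κ * z) (by rw [hn]; linarith)).comp z hlin).const_mul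
      (star κ))
    have h2 := (bL_hasDerivAt ha0 ha1 (z := κ * z) (by rw [hn]; exact hz)).comp z hlin
    have hin : star κ * bp a (κ * z) ∈ ball (0 : ℂ) a := by
      rw [mem_ball_zero_iff]
      exact (norm_step ha0 ha1 hκ (by linarith)).trans_lt hz
    have h3 := (hg.differentiableAt (isOpen_ball.mem_nhds hin)).hasDerivAt.comp z h1
    refine (h3.add h2).congr_deriv ?_
    rw [hD]
    simp only
    linear_combination (deriv g (star κ * bp a (κ * z)) *
      ((a - 2 * (κ * z) + a * (κ * z) ^ 2) / (1 - a * (κ * z)) ^ 2)) * hκs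
  have hev : deriv (fun z => g (star κ * bp a (κ * z)) + bL a (κ * z)) =ᶠ[nhds 0] D := by
    filter_upwards [isOpen_ball.mem_nhds (show (0 : ℂ) ∈ ball (0 : ℂ) a by simpa using ha0)]
      with z hz using (hder z (by simpa using hz)).deriv
  have hg1 : HasDerivAt (deriv g) (deriv (deriv g) 0) (star κ * bp a (κ * 0)) := by
    have e : star κ * bp a (κ * 0) = 0 := by simp [bp]
    rw [e]
    exact ((hg.deriv isOpen_ball).differentiableAt
      (isOpen_ball.mem_nhds (by simpa using ha0))).hasDerivAt
  have hlin : HasDerivAt (fun z : ℂ => κ * z) κ 0 := by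
    simpa using (hasDerivAt_id (0 : ℂ)).const_mul κ
  have hq : HasDerivAt (fun w : ℂ => ((a : ℂ) - 2 * w + a * w ^ 2) / (1 - a * w) ^ 2)
      (-2 + 2 * (a : ℂ) ^ 2) (κ * 0) := by
    rw [mul_zero]
    have n1 : HasDerivAt (fun w : ℂ => (a : ℂ) - 2 * w + a * w ^ 2) (-2) 0 := by
      have := (((hasDerivAt_id (0 : ℂ)).const_mul (2 : ℂ)).const_sub (a : ℂ)).add
        (((hasDerivAt_id (0 : ℂ)).pow 2).const_mul (a : ℂ))
      refine this.congr_deriv ?_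
      simp
    have n2 : HasDerivAt (fun w : ℂ => (1 - (a : ℂ) * w) ^ 2) (-2 * (a : ℂ)) 0 := by
      have := (((hasDerivAt_id (0 : ℂ)).const_mul (a : ℂ)).const_sub (1 : ℂ)).pow 2
      refine this.congr_deriv ?_
      simp
    refine (n1.div n2 (by simp)).congr_deriv ?_
    simp; ring
  have hb : HasDerivAt (fun w : ℂ => -(1 / ((a : ℂ) - w)) + a / (1 - a * w)) ((a : ℂ) ^ 2 - 1 / a ^ 2)
      (κ * 0) := by
    rw [mul_zero]
    have n1 : HasDerivAt (fun w : ℂ => (a : ℂ) - w) (-1) 0 :=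
      (hasDerivAt_id (0 : ℂ)).const_sub (a : ℂ)
    have n2 : HasDerivAt (fun w : ℂ => 1 - (a : ℂ) * w) (-a) 0 := by
      have := ((hasDerivAt_id (0 : ℂ)).const_mul (a : ℂ)).const_sub (1 : ℂ)
      refine this.congr_deriv ?_
      simp
    have := ((hasDerivAt_const (0 : ℂ) (1 : ℂ)).div n1 (by simpa using haC)).neg.add
      ((hasDerivAt_const (0 : ℂ) (a : ℂ)).div n2 (by simp))
    refine this.congr_deriv ?_
    simp; ring
  have hp : HasDerivAt (fun z => star κ * bp a (κ * z)) (a : ℂ) 0 := by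
    have h2 : HasDerivAt (bp a) (a : ℂ) (κ * 0) := by
      rw [mul_zero]; exact bp_hasDerivAt_zero a
    refine ((h2.comp (0 : ℂ) hlin).const_mul (star κ)).congr_deriv ?_
    linear_combination (a : ℂ) * hκs
  have hDd : HasDerivAt D (deriv (deriv g) 0 * a * a + deriv g 0 * ((-2 + 2 * (a : ℂ) ^ 2) * κ) +
      ((a : ℂ) ^ 2 - 1 / a ^ 2) * κ * κ) 0 := by
    have h1 := hg1.comp (0 : ℂ) hp
    have h2 := hq.comp (0 : ℂ) hlin
    have h3 := (hb.comp (0 : ℂ) hlin).mul_const κ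
    have := (h1.mul h2).add h3
    rw [hD]
    refine this.congr_deriv ?_
    simp [bp]
  constructor
  · rw [co_one, co_one, (hder 0 (by simpa using ha0)).deriv, hD]
    simp [bp]
    ring
  · rw [co_two, co_one, co_two, hev.deriv_eq, hDd.deriv]
    ring

/-- Bounds for the first two coefficients `-c₁` and `c₁ ^ 2 / 2 - c₂` of `exp (-g)` for a chain.
Both tend to the bounds valid in `𝒮` as `a → 1`, whatever the number of links. -/
lemma Chain.two_bound {a : ℝ} (ha0 : 0 < a) (ha1 : a < 1) {j : ℕ} {g : ℂ → ℂ} (h : Chain a j g) :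
    ‖co g 1‖ ≤ 1 + 1 / a ∧ ‖co g 1 ^ 2 / 2 - co g 2‖ ≤ 1 / a ^ 2 := by
  have haC : (a : ℂ) ≠ 0 := by exact_mod_cast ha0.ne'
  induction h with
  | zero =>
    have h1 : co (fun _ : ℂ => (0 : ℂ)) 1 = 0 := by rw [co_one]; simp
    have h2 : co (fun _ : ℂ => (0 : ℂ)) 2 = 0 := by rw [co_two]; simp
    rw [h1, h2]
    constructor
    · simp only [norm_zero]; positivity
    · simp
      positivity
  | @step j g κ h hκ ih =>
    obtain ⟨i1, i2⟩ := ih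
    obtain ⟨e1, e2⟩ := step_two ha0 ha1 (h.spec ha0 ha1).1 hκ
    rw [e1, e2]
    constructor
    · refine (norm_add_le _ _).trans ?_
      have r1 : (a : ℂ) - 1 / a = ((a - 1 / a : ℝ) : ℂ) := by push_cast; ring
      have r2 : a - 1 / a ≤ 0 := by
        have : 1 < 1 / a := by rw [lt_div_iff₀ ha0]; linarith
        linarith
      rw [norm_mul, norm_mul, hκ, one_mul, r1, Complex.norm_real, Complex.norm_real,
        Real.norm_of_nonneg ha0.le, Real.norm_of_nonpos r2]
      have : a * ‖co g 1‖ ≤ a * (1 + 1 / a) := mul_le_mul_of_nonneg_left i1 ha0.le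
      have e : a * (1 + 1 / a) = a + 1 := by field_simp
      linarith
    · have e : ((a : ℂ) * co g 1 + κ * (a - 1 / a)) ^ 2 / 2 -
          (-(1 - (a : ℂ) ^ 2) * κ * co g 1 + a ^ 2 * co g 2 + κ ^ 2 * (a ^ 2 - 1 / a ^ 2) / 2)
          = ((a ^ 2 : ℝ) : ℂ) * (co g 1 ^ 2 / 2 - co g 2) + κ ^ 2 * ((1 / a ^ 2 - 1 : ℝ) : ℂ) := by
        push_cast
        field_simp
        ring
      rw [e]
      refine (norm_add_le _ _).trans ?_
      have r2 : 0 ≤ 1 / a ^ 2 - 1 := by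
        have : 1 ≤ 1 / a ^ 2 := by rw [le_div_iff₀ (by positivity)]; nlinarith
        linarith
      rw [norm_mul, norm_mul, norm_pow, hκ, one_pow, one_mul, Complex.norm_real, Complex.norm_real,
        Real.norm_of_nonneg (by positivity), Real.norm_of_nonneg r2]
      have : a ^ 2 * ‖co g 1 ^ 2 / 2 - co g 2‖ ≤ a ^ 2 * (1 / a ^ 2) :=
        mul_le_mul_of_nonneg_left i2 (by positivity)
      have e : a ^ 2 * (1 / a ^ 2) = 1 := by field_simp
      linarith

/-! ### Passing to the class `𝒮` -/

/-- `g` is the analytic logarithm of `f z / z` on the unit disk that vanishes at the origin. -/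
structure IsLog (f g : ℂ → ℂ) : Prop where
  diff : DifferentiableOn ℂ g (ball 0 1)
  zero : g 0 = 0
  exp : ∀ z : ℂ, ‖z‖ < 1 → z ≠ 0 → Complex.exp (g z) = f z / z

lemma exists_isLog {f : ℂ → ℂ} (hf : InClassS f) : ∃ g, IsLog f g := by
  obtain ⟨hA, hi, h0, h1⟩ := hf
  have hm : ball (0 : ℂ) 1 ∈ nhds (0 : ℂ) := isOpen_ball.mem_nhds (by simp)
  have hd : DifferentiableOn ℂ (dslope f 0) (ball 0 1) :=
    (Complex.differentiableOn_dslope hm).2 hA.differentiableOn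
  have hv0 : dslope f 0 0 = 1 := by rw [dslope_same, h1]
  have hvz : ∀ z, z * dslope f 0 z = f z := by
    intro z
    have := sub_smul_dslope f 0 z
    rwa [h0, sub_zero, sub_zero, smul_eq_mul] at this
  have hne : ∀ z ∈ ball (0 : ℂ) 1, dslope f 0 z ≠ 0 := by
    intro z hz h
    by_cases hz0 : z = 0
    · rw [hz0, hv0] at h; exact one_ne_zero h
    · have := hvz z
      rw [h, mul_zero] at this
      exact hz0 (hi hz (by simp) (by rw [← this, h0]))
  obtain ⟨g, g1, g2, g3⟩ := exists_log hd hne 0 (by rw [hv0, Complex.exp_zero])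
  refine ⟨g, g1, g2, fun z hz hz0 => ?_⟩
  rw [g3 z (by simpa using hz), ← hvz z]
  field_simp

/-- For `f` in `𝒮` the function `f (s z) / s`, `0 < s < 1`, is bounded, so its logarithmic
coefficients are limits of coefficients of chains. -/
lemma dilate_seq {f g : ℂ → ℂ} (hf : InClassS f) (hg : IsLog f g) {s : ℝ} (hs0 : 0 < s)
    (hs1 : s < 1) :
    ∃ (M : ℝ) (a : ℕ → ℝ) (j : ℕ → ℕ) (G : ℕ → ℂ → ℂ), 1 < M ∧ (∀ n, 0 < a n ∧ a n < 1) ∧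
      Filter.Tendsto a Filter.atTop (nhds 1) ∧ (∀ n, Chain (a n) (j n) (G n)) ∧
      (∀ n, (1 / a n) ^ j n ≤ M) ∧
      ∀ k, Filter.Tendsto (fun n => co (G n) k) Filter.atTop (nhds ((s : ℂ) ^ k * co g k)) := by
  obtain ⟨hA, hi, h0, h1⟩ := hf
  have hsC : (s : ℂ) ≠ 0 := by exact_mod_cast hs0.ne'
  have hsn : ∀ z : ℂ, ‖z‖ < 1 → ‖(s : ℂ) * z‖ < s := by
    intro z hz
    rw [norm_mul, Complex.norm_real, Real.norm_of_nonneg hs0.le]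
    exact mul_lt_of_lt_one_right hs0 hz
  have hmt : Set.MapsTo (fun z : ℂ => (s : ℂ) * z) (ball 0 1) (ball 0 1) := fun z hz => by
    rw [mem_ball_zero_iff]; exact (hsn z (by simpa using hz)).trans hs1
  have hlin : DifferentiableOn ℂ (fun z : ℂ => (s : ℂ) * z) (ball 0 1) :=
    differentiableOn_id.const_mul _
  obtain ⟨C, hC⟩ := (isCompact_closedBall (0 : ℂ) s).exists_bound_of_continuousOn
    (hA.continuousOn.mono (closedBall_subset_ball hs1))
  have hF : DifferentiableOn ℂ (fun z => f (s * z) / s) (ball 0 1) :=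
    (hA.differentiableOn.comp hlin hmt).div_const _
  have hM : 1 < C / s + 2 := by
    have : 0 ≤ C := (norm_nonneg _).trans (hC 0 (by simpa using hs0.le))
    have : 0 ≤ C / s := by positivity
    linarith
  have hd0 : HasDerivAt (fun z => f (s * z) / s) 1 0 := by
    have e1 : HasDerivAt f 1 ((s : ℂ) * 0) := by
      rw [mul_zero, ← h1]; exact (hA 0 (by simp)).differentiableAt.hasDerivAt
    have e2 : HasDerivAt (fun z : ℂ => (s : ℂ) * z) (s : ℂ) 0 := by
      simpa using (hasDerivAt_id (0 : ℂ)).const_mul (s : ℂ)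
    refine ((e1.comp (0 : ℂ) e2).div_const (s : ℂ)).congr_deriv ?_
    rw [one_mul, div_self hsC]
  obtain ⟨a, j, G, r1, r2, r3, r4, r5⟩ := exists_chain_seq (F := fun z => f (s * z) / s)
    (G := fun z => g (s * z)) hF (by
      intro z hz w hw hzw
      have h2 : f (s * z) = f (s * w) := by
        simp only at hzw
        field_simp at hzw
        exact hzw
      exact mul_left_cancel₀ hsC (hi (hmt hz) (hmt hw) h2)) (by simp [h0]) hd0.deriv hM
    (by
      intro z hz
      rw [norm_div, Complex.norm_real, Real.norm_of_nonneg hs0.le]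
      have := hC (s * z) (by simpa using (hsn z hz).le)
      have : ‖f (s * z)‖ / s ≤ C / s := by gcongr
      linarith)
    (hg.diff.comp hlin hmt) (by simp [hg.zero])
    (by
      intro z hz hz0
      rw [hg.exp _ ((hsn z hz).trans hs1) (mul_ne_zero hsC hz0)]
      field_simp)
  refine ⟨_, a, j, G, hM, r1, r2, r3, r4, fun k => ?_⟩
  have := r5 k
  rwa [co_rot one_pos hg.diff (by
    rw [Complex.norm_real, Real.norm_of_nonneg hs0.le]; exact hs1.le)] at this

lemma tendsto_dilate (c : ℂ) (k : ℕ) :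
    Filter.Tendsto (fun s : ℝ => (s : ℂ) ^ k * c) (nhdsWithin 1 (Set.Iio 1)) (nhds c) := by
  have : Continuous (fun s : ℝ => (s : ℂ) ^ k * c) := by fun_prop
  have h := this.tendsto 1
  simp only [Complex.ofReal_one, one_pow, one_mul] at h
  exact h.mono_left nhdsWithin_le_nhds

lemma eventually_dilate : ∀ᶠ s : ℝ in nhdsWithin 1 (Set.Iio 1), 0 < s ∧ s < 1 := by
  filter_upwards [self_mem_nhdsWithin, nhdsWithin_le_nhds (lt_mem_nhds (zero_lt_one (α := ℝ)))]
    with s h1 h2 using ⟨h2, h1⟩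

/-- The weighted Milin-type inequality for `𝒮`, for every admissible family of weights. -/
lemma energy_S {f g : ℂ → ℂ} (hf : InClassS f) (hg : IsLog f g) {ρ y A : ℝ} {T d : ℝ → ℕ → ℝ}
    (hW : Weights ρ y A T d) (hρ0 : 0 < ρ) (hρ1 : ρ < 1) (hy0 : 0 < y) (hy1 : y < 1)
    (hA : 0 ≤ A) (N : ℕ) :
    ∑ k ∈ Finset.range N, T ρ k * (((k : ℝ) + 1) * ‖co g (k + 1)‖ ^ 2) ≤
      ∑' k : ℕ, T ρ k * (4 / ((k : ℝ) + 1)) := by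
  have hs : ∀ s : ℝ, 0 < s → s < 1 →
      ∑ k ∈ Finset.range N, T ρ k * (((k : ℝ) + 1) * ‖(s : ℂ) ^ (k + 1) * co g (k + 1)‖ ^ 2) ≤
        ∑' k : ℕ, T ρ k * (4 / ((k : ℝ) + 1)) := by
    intro s hs0 hs1
    obtain ⟨M, a, j, G, hM, ha, hat, hG, hj, hco⟩ := dilate_seq hf hg hs0 hs1
    obtain ⟨K, a₀, hK, h0, h1, hE⟩ := chain_energy hW hρ0 hρ1 hy0 hy1 hA hM
    have hlim : Filter.Tendsto (fun n => ∑ k ∈ Finset.range N,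
        T ρ k * (((k : ℝ) + 1) * ‖co (G n) (k + 1)‖ ^ 2)) Filter.atTop
        (nhds (∑ k ∈ Finset.range N,
          T ρ k * (((k : ℝ) + 1) * ‖(s : ℂ) ^ (k + 1) * co g (k + 1)‖ ^ 2))) :=
      tendsto_finsetSum _ fun k _ => (((hco (k + 1)).norm.pow 2).const_mul _).const_mul _
    -- the number `j n` of links is of order `1 / (1 - a n)`, so the accumulated error vanishes
    have hub : Filter.Tendsto (fun n => ∑' k : ℕ, T ρ k * (4 / ((k : ℝ) + 1)) +
        Real.log M * (K * (1 - a n))) Filter.atTop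
        (nhds (∑' k : ℕ, T ρ k * (4 / ((k : ℝ) + 1)))) := by
      have := (((hat.const_sub 1).const_mul K).const_mul (Real.log M)).const_add
        (∑' k : ℕ, T ρ k * (4 / ((k : ℝ) + 1)))
      simpa using this
    refine le_of_tendsto_of_tendsto hlim hub ?_
    filter_upwards [hat.eventually (lt_mem_nhds h1)] with n hn
    refine (hE (a n) hn (ha n).2 (j n) (G n) (hG n) (hj n) N).trans ?_
    have hap := (ha n).1
    have e1 : (j n : ℝ) * (1 - a n) ≤ Real.log M := by
      have l1 : Real.log ((1 / a n) ^ j n) ≤ Real.log M :=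
        Real.log_le_log (by positivity) (hj n)
      rw [Real.log_pow, one_div, Real.log_inv] at l1
      have l2 : 1 - a n ≤ -Real.log (a n) := by
        have := Real.log_le_sub_one_of_pos hap
        linarith
      have := mul_le_mul_of_nonneg_left l2 (Nat.cast_nonneg (α := ℝ) (j n))
      linarith
    have e2 : (j n : ℝ) * (1 - a n) * (K * (1 - a n)) ≤ Real.log M * (K * (1 - a n)) :=
      mul_le_mul_of_nonneg_right e1 (mul_nonneg hK (by linarith [(ha n).2]))
    have e3 : (j n : ℝ) * (K * (1 - a n) ^ 2) = (j n : ℝ) * (1 - a n) * (K * (1 - a n)) := by ring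
    linarith
  have hlim : Filter.Tendsto (fun s : ℝ => ∑ k ∈ Finset.range N,
      T ρ k * (((k : ℝ) + 1) * ‖(s : ℂ) ^ (k + 1) * co g (k + 1)‖ ^ 2))
      (nhdsWithin 1 (Set.Iio 1))
      (nhds (∑ k ∈ Finset.range N, T ρ k * (((k : ℝ) + 1) * ‖co g (k + 1)‖ ^ 2))) :=
    tendsto_finsetSum _ fun k _ =>
      (((tendsto_dilate (co g (k + 1)) (k + 1)).norm.pow 2).const_mul _).const_mul _
  refine le_of_tendsto hlim ?_
  filter_upwards [eventually_dilate] with s h using hs s h.1 h.2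

/-- Bieberbach's bound and the bound for the second coefficient of `z / f z` (equivalently, the
Schwarzian derivative at the origin), in terms of the logarithm. -/
lemma two_bound_S {f g : ℂ → ℂ} (hf : InClassS f) (hg : IsLog f g) :
    ‖co g 1‖ ≤ 2 ∧ ‖co g 1 ^ 2 / 2 - co g 2‖ ≤ 1 := by
  have hs : ∀ s : ℝ, 0 < s → s < 1 → ‖(s : ℂ) ^ 1 * co g 1‖ ≤ 2 ∧
      ‖((s : ℂ) ^ 1 * co g 1) ^ 2 / 2 - (s : ℂ) ^ 2 * co g 2‖ ≤ 1 := by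
    intro s hs0 hs1
    obtain ⟨M, a, j, G, hM, ha, hat, hG, hj, hco⟩ := dilate_seq hf hg hs0 hs1
    have u1 : Filter.Tendsto (fun n => 1 + 1 / a n) Filter.atTop (nhds 2) := by
      have := (hat.inv₀ one_ne_zero).const_add 1
      norm_num at this
      simpa using this
    have u2 : Filter.Tendsto (fun n => 1 / a n ^ 2) Filter.atTop (nhds 1) := by
      have := ((hat.pow 2).inv₀ (by norm_num))
      simpa using this
    exact ⟨le_of_tendsto_of_tendsto' (hco 1).norm u1 fun n =>
        ((hG n).two_bound (ha n).1 (ha n).2).1,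
      le_of_tendsto_of_tendsto' ((((hco 1).pow 2).div_const 2).sub (hco 2)).norm u2 fun n =>
        ((hG n).two_bound (ha n).1 (ha n).2).2⟩
  have l1 := tendsto_dilate (co g 1) 1
  have l2 := tendsto_dilate (co g 2) 2
  constructor
  · refine le_of_tendsto l1.norm ?_
    filter_upwards [eventually_dilate] with s h using (hs s h.1 h.2).1
  · refine le_of_tendsto (((l1.pow 2).div_const 2).sub l2).norm ?_
    filter_upwards [eventually_dilate] with s h using (hs s h.1 h.2).2

/-! ### The equality case of Bieberbach's inequality -/

/-- The pre-Schwarzian derivative, that is, the logarithmic derivative of `deriv f`. -/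
noncomputable def pre (f : ℂ → ℂ) (z : ℂ) : ℂ := deriv (deriv f) z / deriv f z

lemma eq_of_deriv_zero {h : ℂ → ℂ} (hd : ∀ z ∈ ball (0 : ℂ) 1, HasDerivAt h 0 z) {z : ℂ}
    (hz : z ∈ ball (0 : ℂ) 1) : h z = h 0 :=
  (convex_ball (0 : ℂ) 1).is_const_of_fderivWithin_eq_zero (𝕜 := ℂ)
    (fun w hw => (hd w hw).differentiableAt.differentiableWithinAt)
    (fun w hw => by
      rw [((hd w hw).hasFDerivAt.hasFDerivWithinAt).fderivWithin
        (isOpen_ball.uniqueDiffWithinAt hw)]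
      ext; simp) hz (by simp)

lemma InClassS.deriv_ne {f : ℂ → ℂ} (hf : InClassS f) {z : ℂ} (hz : z ∈ ball (0 : ℂ) 1) :
    deriv f z ≠ 0 :=
  deriv_ne_zero_of_injOn isOpen_ball hf.1.differentiableOn hf.2.1 hz

lemma pre_of_log {f g : ℂ → ℂ} (hf : InClassS f) (hg : IsLog f g) :
    pre f 0 = 2 * co g 1 ∧ HasDerivAt (pre f) (6 * co g 2 - co g 1 ^ 2) 0 := by
  have hm0 : (0 : ℂ) ∈ ball (0 : ℂ) 1 := by simp
  have hm : ball (0 : ℂ) 1 ∈ nhds (0 : ℂ) := isOpen_ball.mem_nhds hm0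
  have hfz : ∀ z ∈ ball (0 : ℂ) 1, f z = z * Complex.exp (g z) := by
    intro z hz
    by_cases h0 : z = 0
    · rw [h0, hf.2.2.1, zero_mul]
    · rw [hg.exp z (by simpa using hz) h0]; field_simp
  have g1 : ∀ z ∈ ball (0 : ℂ) 1, HasDerivAt g (deriv g z) z := fun z hz =>
    (hg.diff.differentiableAt (isOpen_ball.mem_nhds hz)).hasDerivAt
  have hg' := hg.diff.deriv isOpen_ball
  have g2 : ∀ z ∈ ball (0 : ℂ) 1, HasDerivAt (deriv g) (deriv (deriv g) z) z := fun z hz =>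
    (hg'.differentiableAt (isOpen_ball.mem_nhds hz)).hasDerivAt
  have g3 : HasDerivAt (deriv (deriv g)) (deriv (deriv (deriv g)) 0) 0 :=
    ((hg'.deriv isOpen_ball).differentiableAt hm).hasDerivAt
  have f1 : ∀ z ∈ ball (0 : ℂ) 1, deriv f z = Complex.exp (g z) * (1 + z * deriv g z) := by
    intro z hz
    have h1 := (hasDerivAt_id z).mul (g1 z hz).cexp
    have h2 : HasDerivAt f (Complex.exp (g z) * (1 + z * deriv g z)) z := by
      refine (h1.congr_of_eventuallyEq ?_).congr_deriv ?_
      · filter_upwards [isOpen_ball.mem_nhds hz] with w hw using hfz w hw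
      · simp only [id]; ring
    exact h2.deriv
  have f2 : ∀ z ∈ ball (0 : ℂ) 1, deriv (deriv f) z = Complex.exp (g z) *
      (deriv g z * (1 + z * deriv g z) + (deriv g z + z * deriv (deriv g) z)) := by
    intro z hz
    have h1 := (g1 z hz).cexp.mul (((hasDerivAt_id z).mul (g2 z hz)).const_add 1)
    have h2 : HasDerivAt (deriv f) (Complex.exp (g z) *
      (deriv g z * (1 + z * deriv g z) + (deriv g z + z * deriv (deriv g) z))) z := by
      refine (h1.congr_of_eventuallyEq ?_).congr_deriv ?_
      · filter_upwards [isOpen_ball.mem_nhds hz] with w hw using f1 w hw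
      · simp only [id, Pi.mul_apply]; ring
    exact h2.deriv
  have hP : ∀ z ∈ ball (0 : ℂ) 1, pre f z =
      deriv g z + (deriv g z + z * deriv (deriv g) z) / (1 + z * deriv g z) := by
    intro z hz
    have h1 := InClassS.deriv_ne hf hz
    rw [f1 z hz] at h1
    have h2 := (mul_ne_zero_iff.1 h1).2
    have h3 := (mul_ne_zero_iff.1 h1).1
    rw [pre, f1 z hz, f2 z hz, mul_div_mul_left _ _ h3, add_div, mul_div_cancel_right₀ _ h2]
  refine ⟨?_, ?_⟩
  · rw [hP 0 hm0, co_one]; simp; ring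
  · have h1 := (g2 0 hm0).add (((g2 0 hm0).add ((hasDerivAt_id (0 : ℂ)).mul g3)).div
      (((hasDerivAt_id (0 : ℂ)).mul (g2 0 hm0)).const_add 1) (by simp))
    refine (h1.congr_of_eventuallyEq ?_).congr_deriv ?_
    · filter_upwards [hm] with w hw using hP w hw
    · rw [co_one, co_two]; simp; ring

/-- Bieberbach's bound for the second coefficient and Nehari's bound for the Schwarzian derivative,
both at the origin. -/
lemma pre_bound {f : ℂ → ℂ} (hf : InClassS f) :
    ‖pre f 0‖ ≤ 4 ∧ ‖deriv (pre f) 0 - pre f 0 ^ 2 / 2‖ ≤ 6 := by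
  obtain ⟨g, hg⟩ := exists_isLog hf
  obtain ⟨h1, h2⟩ := pre_of_log hf hg
  obtain ⟨b1, b2⟩ := two_bound_S hf hg
  rw [h2.deriv, h1]
  constructor
  · rw [norm_mul]; norm_num; linarith
  · have e : 6 * co g 2 - co g 1 ^ 2 - (2 * co g 1) ^ 2 / 2 =
      (-6) * (co g 1 ^ 2 / 2 - co g 2) := by ring
    rw [e, norm_mul]; norm_num; linarith

lemma pre_hasDerivAt {f : ℂ → ℂ} (hf : InClassS f) {z : ℂ} (hz : z ∈ ball (0 : ℂ) 1) :
    HasDerivAt (pre f) (deriv (pre f) z) z := by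
  have h1 := hf.1.differentiableOn.deriv isOpen_ball
  have h2 := h1.deriv isOpen_ball
  have hn := isOpen_ball.mem_nhds hz
  exact ((h2.differentiableAt hn).div (h1.differentiableAt hn) (InClassS.deriv_ne hf hz)).hasDerivAt

/-- The Koebe transform moves the bounds of `pre_bound` to a point `x` of `(-1, 1)`. -/
lemma pre_bound_at {f : ℂ → ℂ} (hf : InClassS f) {x : ℝ} (hx : |x| < 1) :
    ‖(1 - (x : ℂ) ^ 2) * pre f x - 2 * x‖ ≤ 4 ∧
      ‖((1 - (x : ℂ) ^ 2) ^ 2 * deriv (pre f) x - 2 * x * (1 - (x : ℂ) ^ 2) * pre f x + 2 * x ^ 2) -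
        ((1 - (x : ℂ) ^ 2) * pre f x - 2 * x) ^ 2 / 2‖ ≤ 6 := by
  have hm0 : (0 : ℂ) ∈ ball (0 : ℂ) 1 := by simp
  have hm : ball (0 : ℂ) 1 ∈ nhds (0 : ℂ) := isOpen_ball.mem_nhds hm0
  have hxn : ‖(x : ℂ)‖ < 1 := by rw [Complex.norm_real]; exact hx
  have hxm : (x : ℂ) ∈ ball (0 : ℂ) 1 := by simpa using hxn
  have hx2 : 0 < 1 - x ^ 2 := by
    have := (sq_lt_one_iff_abs_lt_one x).2 hx
    linarith
  have hxC : (1 : ℂ) - x ^ 2 ≠ 0 := by exact_mod_cast hx2.ne'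
  have hden : ∀ z : ℂ, z ∈ ball (0 : ℂ) 1 → 1 + x * z ≠ 0 := by
    intro z hz h
    have hz' : ‖z‖ < 1 := by simpa using hz
    have h1 : x * z = -1 := by linear_combination h
    have h2 := congrArg norm h1
    rw [norm_mul, norm_neg, norm_one] at h2
    nlinarith [norm_nonneg z, norm_nonneg (x : ℂ)]
  obtain ⟨m, hmd⟩ : ∃ m : ℂ → ℂ, m = fun z : ℂ => (z + (x : ℂ)) / (1 + x * z) := ⟨_, rfl⟩
  have hm00 : m 0 = x := by simp [hmd]
  have hmm : ∀ z ∈ ball (0 : ℂ) 1, m z ∈ ball (0 : ℂ) 1 := by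
    intro z hz
    have hz' : ‖z‖ < 1 := by simpa using hz
    rw [mem_ball_zero_iff, hmd]
    simp only
    rw [norm_div, div_lt_one (norm_pos_iff.2 (hden z hz))]
    refine lt_of_pow_lt_pow_left₀ 2 (norm_nonneg _) ?_
    rw [← Complex.normSq_eq_norm_sq, ← Complex.normSq_eq_norm_sq]
    have hz2 : Complex.normSq z < 1 := by
      rw [Complex.normSq_eq_norm_sq]; nlinarith [norm_nonneg z]
    simp only [Complex.normSq_apply, Complex.add_re, Complex.add_im, Complex.ofReal_re,
      Complex.ofReal_im, Complex.mul_re, Complex.mul_im, Complex.one_re, Complex.one_im] at hz2 ⊢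
    have : 0 < (1 - x ^ 2) * (1 - (z.re * z.re + z.im * z.im)) := mul_pos hx2 (by linarith)
    nlinarith
  have mder : ∀ z ∈ ball (0 : ℂ) 1, HasDerivAt m ((1 - (x : ℂ) ^ 2) / (1 + x * z) ^ 2) z := by
    intro z hz
    have h1 := ((hasDerivAt_id z).add_const (x : ℂ)).div
      (((hasDerivAt_id z).const_mul (x : ℂ)).const_add 1) (hden z hz)
    rw [hmd]
    refine h1.congr_deriv ?_
    simp only [id]
    congr 1
    ring
  have minj : Set.InjOn m (ball 0 1) := by
    intro z hz w hw h
    rw [hmd] at h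
    simp only at h
    rw [div_eq_div_iff (hden z hz) (hden w hw)] at h
    have : (1 - (x : ℂ) ^ 2) * (z - w) = 0 := by linear_combination h
    exact sub_eq_zero.1 ((mul_eq_zero.1 this).resolve_left hxC)
  have hfx := InClassS.deriv_ne hf hxm
  have hDne : (1 - (x : ℂ) ^ 2) * deriv f x ≠ 0 := mul_ne_zero hxC hfx
  have hf1 : ∀ z ∈ ball (0 : ℂ) 1, HasDerivAt f (deriv f z) z := fun z hz =>
    (hf.1 z hz).differentiableAt.hasDerivAt
  have hf2 : ∀ z ∈ ball (0 : ℂ) 1, HasDerivAt (deriv f) (deriv (deriv f) z) z := fun z hz =>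
    ((hf.1.differentiableOn.deriv isOpen_ball).differentiableAt
      (isOpen_ball.mem_nhds hz)).hasDerivAt
  obtain ⟨F, hF⟩ : ∃ F : ℂ → ℂ, F = fun z => (f (m z) - f x) / ((1 - (x : ℂ) ^ 2) * deriv f x) :=
    ⟨_, rfl⟩
  have F1 : ∀ z ∈ ball (0 : ℂ) 1, HasDerivAt F
      (deriv f (m z) / (deriv f x * (1 + x * z) ^ 2)) z := by
    intro z hz
    have h1 := (((hf1 _ (hmm z hz)).comp z (mder z hz)).sub_const (f x)).div_const
      ((1 - (x : ℂ) ^ 2) * deriv f x)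
    rw [hF]
    refine h1.congr_deriv ?_
    have := hden z hz
    field_simp
  have FS : InClassS F := by
    refine ⟨?_, ?_, ?_, ?_⟩
    · exact DifferentiableOn.analyticOnNhd
        (fun z hz => (F1 z hz).differentiableAt.differentiableWithinAt) isOpen_ball
    · intro z hz w hw h
      rw [hF] at h
      simp only at h
      rw [div_left_inj' hDne, sub_left_inj] at h
      exact minj hz hw (hf.2.1 (hmm z hz) (hmm w hw) h)
    · rw [hF]; simp [hm00]
    · rw [(F1 0 hm0).deriv, hm00]; simp [hfx]
  have F2 : ∀ z ∈ ball (0 : ℂ) 1, HasDerivAt (deriv F)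
      ((deriv (deriv f) (m z) * (1 - (x : ℂ) ^ 2) / (1 + x * z) ^ 4 -
        2 * x * deriv f (m z) / (1 + x * z) ^ 3) / deriv f x) z := by
    intro z hz
    have hd := hden z hz
    have n1 := (hf2 _ (hmm z hz)).comp z (mder z hz)
    have n2 := ((((hasDerivAt_id z).const_mul (x : ℂ)).const_add 1).pow 2).const_mul (deriv f x)
    have h1 := n1.div n2 (mul_ne_zero hfx (pow_ne_zero 2 hd))
    refine (h1.congr_of_eventuallyEq ?_).congr_deriv ?_
    · filter_upwards [isOpen_ball.mem_nhds hz] with w hw using (F1 w hw).deriv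
    · simp
      field_simp
  have hP : ∀ z ∈ ball (0 : ℂ) 1, pre F z =
      pre f (m z) * ((1 - (x : ℂ) ^ 2) / (1 + x * z) ^ 2) - 2 * x / (1 + x * z) := by
    intro z hz
    have hd := hden z hz
    have hn := InClassS.deriv_ne hf (hmm z hz)
    rw [pre, (F2 z hz).deriv, (F1 z hz).deriv, pre]
    field_simp
  have hP0 : pre F 0 = (1 - (x : ℂ) ^ 2) * pre f x - 2 * x := by
    rw [hP 0 hm0, hm00]; simp; ring
  have hPd : HasDerivAt (pre F) ((1 - (x : ℂ) ^ 2) ^ 2 * deriv (pre f) x -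
      2 * x * (1 - (x : ℂ) ^ 2) * pre f x + 2 * x ^ 2) 0 := by
    have p1 : HasDerivAt (pre f) (deriv (pre f) x) (m 0) := by
      rw [hm00]; exact pre_hasDerivAt hf hxm
    have p2 := p1.comp (0 : ℂ) (mder 0 hm0)
    have q : HasDerivAt (fun z : ℂ => 1 + (x : ℂ) * z) x 0 := by
      simpa using ((hasDerivAt_id (0 : ℂ)).const_mul (x : ℂ)).const_add 1
    have p3 := (hasDerivAt_const (0 : ℂ) (1 - (x : ℂ) ^ 2)).div (q.pow 2) (by simp)
    have p4 := (hasDerivAt_const (0 : ℂ) (2 * (x : ℂ))).div q (by simp)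
    have h1 := (p2.mul p3).sub p4
    refine (h1.congr_of_eventuallyEq ?_).congr_deriv ?_
    · filter_upwards [hm] with w hw using hP w hw
    · simp [hm00]; ring
  have := pre_bound FS
  rwa [hPd.deriv, hP0] at this

/-- If `pre f 0 = 4`, then `B x = (1 - x ^ 2) * pre f x / 2 - x` equals `2` on `[0, 1 / 2]`: the bounds
on the Koebe transforms make `y = 2 - re B` a nonnegative solution of `y' ≤ 11 y`, `y (0) = 0`. -/
lemma pre_rigid {f : ℂ → ℂ} (hf : InClassS f) (h4 : pre f 0 = 4) {x : ℝ} (hx0 : 0 ≤ x)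
    (hx1 : x ≤ 1 / 2) : (1 - (x : ℂ) ^ 2) * pre f x - 2 * x = 4 := by
  obtain ⟨B, hB⟩ : ∃ B : ℝ → ℂ, B = fun t : ℝ => ((1 - (t : ℂ) ^ 2) * pre f t - 2 * t) / 2 :=
    ⟨_, rfl⟩
  have hB2 : ∀ t : ℝ, |t| < 1 → ‖B t‖ ≤ 2 := by
    intro t ht
    have := (pre_bound_at hf ht).1
    rw [hB]
    simp only
    rw [norm_div]; norm_num; linarith
  have hBd : ∀ t : ℝ, |t| < 1 → HasDerivAt B
      ((-(2 * t) * pre f t + (1 - (t : ℂ) ^ 2) * deriv (pre f) t - 2) / 2) t := by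
    intro t ht
    have hm : (t : ℂ) ∈ ball (0 : ℂ) 1 := by simpa using ht
    have c1 : HasDerivAt (fun z : ℂ => 1 - z ^ 2) (-(2 * (t : ℂ))) (t : ℂ) := by
      simpa using ((hasDerivAt_id (t : ℂ)).pow 2).const_sub 1
    have h1 : HasDerivAt (fun z : ℂ => ((1 - z ^ 2) * pre f z - 2 * z) / 2)
        ((-(2 * t) * pre f t + (1 - (t : ℂ) ^ 2) * deriv (pre f) t - 2) / 2) (t : ℂ) := by
      refine (((c1.mul (pre_hasDerivAt hf hm)).sub
        ((hasDerivAt_id (t : ℂ)).const_mul 2)).div_const 2).congr_deriv ?_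
      simp
    rw [hB]
    exact h1.comp_ofReal
  obtain ⟨y, hy⟩ : ∃ y : ℝ → ℝ, y = fun t => 2 - (B t).re := ⟨_, rfl⟩
  have hy0 : ∀ t : ℝ, |t| < 1 → 0 ≤ y t := by
    intro t ht
    have := (Complex.re_le_norm (B t)).trans (hB2 t ht)
    rw [hy]; simp only; linarith
  obtain ⟨y', hy'⟩ : ∃ y' : ℝ → ℝ, y' = fun t : ℝ =>
    -((-(2 * t) * pre f t + (1 - (t : ℂ) ^ 2) * deriv (pre f) t - 2) / 2).re := ⟨_, rfl⟩
  have hyd : ∀ t : ℝ, |t| < 1 → HasDerivAt y (y' t) t := by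
    intro t ht
    have h1 : HasDerivAt (fun s => (B s).re) _ t := 
      Complex.reCLM.hasFDerivAt.comp_hasDerivAt t (hBd t ht)
    rw [hy, hy']
    exact h1.const_sub 2
  have hineq : ∀ t : ℝ, |t| ≤ 1 / 2 → y' t ≤ 11 * y t := by
    intro t ht
    have ht1 : |t| < 1 := by linarith
    have hyn := hy0 t ht1
    have ht2 : t ^ 2 ≤ 1 / 4 := by
      have := sq_abs t
      nlinarith [abs_nonneg t]
    have b2 := (pre_bound_at hf ht1).2
    obtain ⟨S, hS⟩ : ∃ S, S = ((1 - (t : ℂ) ^ 2) ^ 2 * deriv (pre f) t -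
      2 * t * (1 - (t : ℂ) ^ 2) * pre f t + 2 * t ^ 2) -
        ((1 - (t : ℂ) ^ 2) * pre f t - 2 * t) ^ 2 / 2 := ⟨_, rfl⟩
    rw [← hS] at b2
    have e : ((1 - t ^ 2 : ℝ) : ℂ) *
        ((-(2 * t) * pre f t + (1 - (t : ℂ) ^ 2) * deriv (pre f) t - 2) / 2) =
        S / 2 + B t ^ 2 - 1 := by
      rw [hS, hB]; push_cast; ring
    have er := congrArg Complex.re e
    rw [Complex.re_ofReal_mul] at er
    have hyt : y' t = -((-(2 * t) * pre f t + (1 - (t : ℂ) ^ 2) * deriv (pre f) t - 2) / 2).re := by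
      rw [hy']
    have er2 : (1 - t ^ 2) * y' t = -(S / 2 + B t ^ 2 - 1).re := by rw [← er, hyt]; ring
    have sre : -6 ≤ S.re := by
      have := (abs_le.1 ((Complex.abs_re_le_norm S).trans b2)).1
      exact this
    have expand : (S / 2 + B t ^ 2 - 1).re = S.re / 2 + ((B t).re ^ 2 - (B t).im ^ 2) - 1 := by
      rw [sq (B t)]
      simp
      ring
    have hBn : (B t).re ^ 2 + (B t).im ^ 2 ≤ 4 := by
      have h1 := hB2 t ht1
      have h2 : (B t).re ^ 2 + (B t).im ^ 2 = ‖B t‖ ^ 2 := by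
        rw [← Complex.normSq_eq_norm_sq, Complex.normSq_apply]; ring
      rw [h2]
      nlinarith [norm_nonneg (B t)]
    have hyB : y t = 2 - (B t).re := by rw [hy]
    have hre : (B t).re ≤ 2 := by linarith
    have k1 : (1 - t ^ 2) * y' t ≤ 8 * y t := by
      rw [er2, expand, hyB]
      nlinarith [sq_nonneg (2 - (B t).re)]
    have k2 : 8 * y t ≤ (1 - t ^ 2) * (11 * y t) := by nlinarith
    exact le_of_mul_le_mul_left (k1.trans k2) (by linarith)
  have hE : ∀ t : ℝ, |t| < 1 → HasDerivAt (fun t => y t * Real.exp (-11 * t))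
      ((y' t - 11 * y t) * Real.exp (-11 * t)) t := by
    intro t ht
    have h1 : HasDerivAt (fun t : ℝ => Real.exp (-11 * t)) (Real.exp (-11 * t) * -11) t := by
      have := ((hasDerivAt_id t).const_mul (-11 : ℝ)).exp
      simpa using this
    refine ((hyd t ht).mul h1).congr_deriv ?_
    ring
  have habs : ∀ t ∈ Set.Icc (0 : ℝ) (1 / 2), |t| ≤ 1 / 2 := fun t ht => by
    rw [abs_of_nonneg ht.1]; exact ht.2
  have hanti : AntitoneOn (fun t => y t * Real.exp (-11 * t)) (Set.Icc 0 (1 / 2)) := by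
    refine antitoneOn_of_deriv_nonpos (convex_Icc _ _) ?_ ?_ ?_
    · intro t ht
      exact (hE t (by linarith [habs t ht])).continuousAt.continuousWithinAt
    · intro t ht
      have := habs t (interior_subset ht)
      exact (hE t (by linarith)).differentiableAt.differentiableWithinAt
    · intro t ht
      have := habs t (interior_subset ht)
      rw [(hE t (by linarith)).deriv]
      exact mul_nonpos_of_nonpos_of_nonneg (by linarith [hineq t this]) (Real.exp_pos _).le
  have hxa : |x| < 1 := by rw [abs_of_nonneg hx0]; linarith
  have hfin := hanti (Set.mem_Icc.2 ⟨le_rfl, by norm_num⟩) (Set.mem_Icc.2 ⟨hx0, hx1⟩) hx0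
  have hy00 : y 0 = 0 := by rw [hy, hB]; simp [h4]; norm_num
  simp only [hy00, zero_mul] at hfin
  have hyx : y x = 0 := by
    refine le_antisymm ?_ (hy0 x hxa)
    by_contra hc
    push Not at hc
    exact absurd hfin (not_le.2 (mul_pos hc (Real.exp_pos _)))
  have hre : (B x).re = 2 := by
    have : y x = 2 - (B x).re := by rw [hy]
    linarith
  have him : (B x).im = 0 := by
    have h1 := hB2 x hxa
    have h2 : (B x).re ^ 2 + (B x).im ^ 2 = ‖B x‖ ^ 2 := by
      rw [← Complex.normSq_eq_norm_sq, Complex.normSq_apply]; ring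
    rw [hre] at h2
    have : (B x).im ^ 2 ≤ 0 := by nlinarith [norm_nonneg (B x)]
    exact pow_eq_zero_iff (two_ne_zero) |>.1 (le_antisymm this (sq_nonneg _))
  have hBx : B x = 2 := Complex.ext (by simpa using hre) (by simpa using him)
  have : B x = ((1 - (x : ℂ) ^ 2) * pre f x - 2 * x) / 2 := by rw [hB]
  rw [hBx] at this
  linear_combination (-2 : ℂ) * this

/-- By `pre_rigid` and the identity theorem, `deriv f` solves a linear equation of first order,
whose solution is the derivative of the Koebe function. -/
lemma koebe_of_pre {f : ℂ → ℂ} (hf : InClassS f) (h4 : pre f 0 = 4) :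
    ∀ z ∈ ball (0 : ℂ) 1, f z = z / (1 - z) ^ 2 := by
  have hm0 : (0 : ℂ) ∈ ball (0 : ℂ) 1 := by simp
  have hA : AnalyticOnNhd ℂ (fun z : ℂ => (1 - z ^ 2) * pre f z - 2 * z) (ball 0 1) := by
    refine DifferentiableOn.analyticOnNhd (fun z hz => ?_) isOpen_ball
    have h1 := (pre_hasDerivAt hf hz).differentiableAt
    refine DifferentiableAt.differentiableWithinAt ?_
    fun_prop
  have hpre : Set.EqOn (fun z : ℂ => (1 - z ^ 2) * pre f z - 2 * z) (fun _ => 4) (ball 0 1) := by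
    refine hA.eqOn_of_preconnected_of_frequently_eq analyticOnNhd_const
      (convex_ball (0 : ℂ) 1).isPreconnected hm0 ?_
    have hc : Filter.Tendsto (fun n : ℕ => ((1 / ((n : ℝ) + 2) : ℝ) : ℂ)) Filter.atTop
        (nhdsWithin 0 {0}ᶜ) := by
      rw [tendsto_nhdsWithin_iff]
      constructor
      · have h1 : Filter.Tendsto (fun n : ℕ => 1 / ((n : ℝ) + 2)) Filter.atTop (nhds 0) := by
          have := (Filter.tendsto_add_atTop_iff_nat 1).2
            (tendsto_one_div_add_atTop_nhds_zero_nat (𝕜 := ℝ))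
          refine this.congr fun n => ?_
          push_cast; ring
        have := (Complex.continuous_ofReal.tendsto 0).comp h1
        rw [Complex.ofReal_zero] at this
        exact this
      · refine Filter.Eventually.of_forall fun n => ?_
        have : (1 / ((n : ℝ) + 2) : ℝ) ≠ 0 := by positivity
        simpa only [Set.mem_compl_iff, Set.mem_singleton_iff, Complex.ofReal_eq_zero] using this
    refine hc.frequently (Filter.Frequently.of_forall fun n => ?_)
    refine pre_rigid hf h4 (by positivity) ?_
    apply one_div_le_one_div_of_le (by norm_num)
    have := Nat.cast_nonneg (α := ℝ) n
    linarith
  have hplus : ∀ z ∈ ball (0 : ℂ) 1, 1 + z ≠ 0 := fun z hz => by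
    have := one_sub_ne (z := -z) (by simpa using hz)
    simpa using this
  have hminus : ∀ z ∈ ball (0 : ℂ) 1, 1 - z ≠ 0 := fun z hz => one_sub_ne (by simpa using hz)
  have hf1 : ∀ z ∈ ball (0 : ℂ) 1, HasDerivAt f (deriv f z) z := fun z hz =>
    (hf.1 z hz).differentiableAt.hasDerivAt
  have hf2 : ∀ z ∈ ball (0 : ℂ) 1, HasDerivAt (deriv f) (deriv (deriv f) z) z := fun z hz =>
    ((hf.1.differentiableOn.deriv isOpen_ball).differentiableAt
      (isOpen_ball.mem_nhds hz)).hasDerivAt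
  have hode : ∀ z ∈ ball (0 : ℂ) 1, (1 - z ^ 2) * deriv (deriv f) z = (4 + 2 * z) * deriv f z := by
    intro z hz
    have h1 := hpre hz
    have h2 := InClassS.deriv_ne hf hz
    simp only [pre] at h1
    field_simp at h1
    linear_combination h1
  have hd : ∀ z ∈ ball (0 : ℂ) 1, deriv f z = (1 + z) / (1 - z) ^ 3 := by
    intro z hz
    have hc : ∀ w ∈ ball (0 : ℂ) 1,
        HasDerivAt (fun w => deriv f w * (1 - w) ^ 3 / (1 + w)) 0 w := by
      intro w hw
      have n1 := (hf2 w hw).mul (((hasDerivAt_id w).const_sub 1).pow 3)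
      have n2 := (hasDerivAt_id w).const_add 1
      refine (n1.div n2 (hplus w hw)).congr_deriv ?_
      have := hplus w hw
      rw [div_eq_zero_iff]
      left
      simp
      linear_combination (1 - w) ^ 2 * hode w hw
    have := eq_of_deriv_zero hc hz
    simp only [hf.2.2.2, sub_zero, one_pow, mul_one, add_zero, div_one] at this
    have p1 := hplus z hz
    have p2 := hminus z hz
    rw [div_eq_iff p1] at this
    rw [eq_div_iff (pow_ne_zero 3 p2), this, one_mul]
  intro z hz
  have hc : ∀ w ∈ ball (0 : ℂ) 1, HasDerivAt (fun w => f w - w / (1 - w) ^ 2) 0 w := by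
    intro w hw
    have p2 := hminus w hw
    have n1 := (hasDerivAt_id w).div (((hasDerivAt_id w).const_sub 1).pow 2) (pow_ne_zero 2 p2)
    refine ((hf1 w hw).sub n1).congr_deriv ?_
    rw [hd w hw]
    simp
    field_simp
    ring
  have := eq_of_deriv_zero hc hz
  simp only [hf.2.2.1, zero_div, sub_zero] at this
  exact sub_eq_zero.1 this

/-- Equality in Bieberbach's inequality characterizes the rotations of the Koebe function. -/
lemma koebe_of_co_one {f g : ℂ → ℂ} (hf : InClassS f) (hg : IsLog f g) (h2 : ‖co g 1‖ = 2) :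
    IsKoebeRotation f := by
  obtain ⟨θ, hθ⟩ : ∃ θ : ℝ, co g 1 = 2 * Complex.exp (θ * I) := by
    refine ⟨(co g 1).arg, ?_⟩
    have := Complex.norm_mul_exp_arg_mul_I (co g 1)
    rw [h2] at this
    exact_mod_cast this.symm
  refine ⟨θ, ?_⟩
  obtain ⟨u, hu⟩ : ∃ u, u = Complex.exp (θ * I) := ⟨_, rfl⟩
  rw [← hu] at hθ ⊢
  have hun : ‖u‖ = 1 := by rw [hu]; exact Complex.norm_exp_ofReal_mul_I θ
  have hu0 : u ≠ 0 := by rw [hu]; exact Complex.exp_ne_zero _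
  have hm0 : (0 : ℂ) ∈ ball (0 : ℂ) 1 := by simp
  have hin : ‖u⁻¹‖ = 1 := by rw [norm_inv, hun, inv_one]
  have hmt : ∀ z ∈ ball (0 : ℂ) 1, u⁻¹ * z ∈ ball (0 : ℂ) 1 := fun z hz => by
    rw [mem_ball_zero_iff, norm_mul, hin, one_mul]; simpa using hz
  have hlin : ∀ z : ℂ, HasDerivAt (fun z : ℂ => u⁻¹ * z) u⁻¹ z := fun z => by
    simpa using (hasDerivAt_id z).const_mul u⁻¹
  have F1 : ∀ z ∈ ball (0 : ℂ) 1, HasDerivAt (fun z => u * f (u⁻¹ * z)) (deriv f (u⁻¹ * z)) z := by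
    intro z hz
    have h1 := ((hf.1 _ (hmt z hz)).differentiableAt.hasDerivAt.comp z (hlin z)).const_mul u
    refine h1.congr_deriv ?_
    field_simp
  have FS : InClassS (fun z => u * f (u⁻¹ * z)) := by
    refine ⟨?_, ?_, ?_, ?_⟩
    · exact DifferentiableOn.analyticOnNhd
        (fun z hz => (F1 z hz).differentiableAt.differentiableWithinAt) isOpen_ball
    · intro z hz w hw h
      have := hf.2.1 (hmt z hz) (hmt w hw) (mul_left_cancel₀ hu0 h)
      exact mul_left_cancel₀ (inv_ne_zero hu0) this
    · simp [hf.2.2.1]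
    · rw [(F1 0 hm0).deriv, mul_zero, hf.2.2.2]
  have F2 : HasDerivAt (deriv (fun z => u * f (u⁻¹ * z))) (u⁻¹ * deriv (deriv f) 0) 0 := by
    have h1 : HasDerivAt (deriv f) (deriv (deriv f) 0) (u⁻¹ * 0) := by
      rw [mul_zero]
      exact ((hf.1.differentiableOn.deriv isOpen_ball).differentiableAt
        (isOpen_ball.mem_nhds hm0)).hasDerivAt
    refine ((h1.comp (0 : ℂ) (hlin 0)).congr_of_eventuallyEq ?_).congr_deriv (mul_comm _ _)
    filter_upwards [isOpen_ball.mem_nhds hm0] with w hw using (F1 w hw).deriv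
  have hp : pre (fun z => u * f (u⁻¹ * z)) 0 = 4 := by
    have h1 := (pre_of_log hf hg).1
    rw [pre, hf.2.2.2, div_one, hθ] at h1
    rw [pre, F2.deriv, FS.2.2.2, h1]
    field_simp
    norm_num
  intro z hz
  have huz : u * z ∈ ball (0 : ℂ) 1 := by
    rw [mem_ball_zero_iff, norm_mul, hun, one_mul]; simpa using hz
  have := koebe_of_pre FS hp (u * z) huz
  rw [inv_mul_cancel_left₀ hu0, mul_div_assoc] at this
  exact mul_left_cancel₀ hu0 this

/-! ### The inequality with a gain in the first coefficient -/

/-- The partial sums stay below the bound by at least a positive multiple of `4 - ‖co g 1‖ ^ 2`. Here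
`co g n` is twice the logarithmic coefficient of index `n`, hence the factor `4`. -/
lemma sum_le_with_gain {α r : ℝ} (hr0 : 0 < r) (hr1 : r < 1)
    (hcond : 1 ≤ (α + 1) * Real.log (1 / r)) {f g : ℂ → ℂ} (hf : InClassS f) (hg : IsLog f g) :
    ∃ κ : ℝ, 0 < κ ∧ ∀ N : ℕ, ∑ k ∈ Finset.range (N + 1),
      ((k : ℝ) + 1) * (((k : ℝ) + 1) + α) * ‖co g (k + 1)‖ ^ 2 * r ^ (2 * (k + 1)) ≤
        4 * (r ^ 2 / (1 - r ^ 2) + α * Real.log (1 / (1 - r ^ 2))) -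
          κ * (4 - ‖co g 1‖ ^ 2) := by
  have hρ0 : 0 < r ^ 2 := by positivity
  have hρ1 : r ^ 2 < 1 := by nlinarith
  obtain ⟨η, y, A, T, d, hη, hy0, hy1, hA, hW, hT⟩ :=
    exists_weights hρ0 hρ1 (cond_rho hr0 hr1 hcond)
  have hpos : 0 < 1 - r ^ 2 := by linarith
  refine ⟨η * (r ^ 2 / (1 - r ^ 2) ^ 2), by positivity, fun N => ?_⟩
  obtain ⟨κ, hκ⟩ : ∃ κ, κ = η * (r ^ 2 / (1 - r ^ 2) ^ 2) := ⟨_, rfl⟩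
  have hE := energy_S hf hg hW hρ0 hρ1 hy0 hy1 hA (N + 1)
  have s1 : HasSum (fun k : ℕ => (r ^ 2) ^ (k + 1)) (r ^ 2 / (1 - r ^ 2)) := by
    have := (hasSum_geometric_of_lt_one hρ0.le hρ1).mul_left (r ^ 2)
    rw [← div_eq_mul_inv] at this
    exact this.congr_fun fun k => by ring
  have s2 : HasSum (fun k : ℕ => (r ^ 2) ^ (k + 1) / ((k : ℝ) + 1))
      (Real.log (1 / (1 - r ^ 2))) := by
    have := Real.hasSum_pow_div_log_of_abs_lt_one (x := r ^ 2) (by rwa [abs_of_pos hρ0])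
    rwa [one_div, Real.log_inv]
  have s3 : HasSum (fun k : ℕ => if k = 0 then 4 * κ else 0) (4 * κ) := hasSum_ite_eq 0 _
  have s4 := (((s1.add (s2.mul_left α)).mul_left 4).sub s3)
  have hsum : ∑' k : ℕ, T (r ^ 2) k * (4 / ((k : ℝ) + 1)) =
      4 * (r ^ 2 / (1 - r ^ 2) + α * Real.log (1 / (1 - r ^ 2))) - 4 * κ := by
    refine (s4.congr_fun fun k => ?_).tsum_eq
    have hk : (k : ℝ) + 1 ≠ 0 := by positivity
    rw [hT k]
    rcases eq_or_ne k 0 with rfl | h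
    · simp [hκ]; ring
    · simp only [h, if_false]; field_simp; ring
  have hleft : ∑ k ∈ Finset.range (N + 1), T (r ^ 2) k * (((k : ℝ) + 1) * ‖co g (k + 1)‖ ^ 2) =
      ∑ k ∈ Finset.range (N + 1),
        ((k : ℝ) + 1) * (((k : ℝ) + 1) + α) * ‖co g (k + 1)‖ ^ 2 * r ^ (2 * (k + 1)) -
          κ * ‖co g 1‖ ^ 2 := by
    have h0 : ∑ k ∈ Finset.range (N + 1), (if k = 0 then κ * ‖co g 1‖ ^ 2 else 0) =
        κ * ‖co g 1‖ ^ 2 := by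
      simp
    rw [← h0, ← Finset.sum_sub_distrib]
    refine Finset.sum_congr rfl fun k _ => ?_
    rw [hT k, pow_mul]
    rcases eq_or_ne k 0 with rfl | h
    · simp [hκ]; ring
    · simp only [h, if_false]; ring
  rw [hleft, hsum] at hE
  rw [← hκ]
  linarith

end LogCoeff

theorem logcoeff_weighted_geometric
    (α : ℝ) (hα : α > -1) (r : ℝ) (hr0 : 0 < r) (hr1 : r < 1)
    (hcond : 1 ≤ (α + 1) * Real.log (1 / r)) (f : ℂ → ℂ) (γ : ℕ → ℂ) (hf : InClassS f) (hγ : IsLogCoeffs f γ) :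
    (∑' n : ℕ, ((n : ℝ) + 1) * (((n : ℝ) + 1) + α) * ‖γ (n + 1)‖ ^ 2 * r ^ (2 * (n + 1)) ≤ r ^ 2 / (1 - r ^ 2) + α * Real.log (1 / (1 - r ^ 2))) ∧
    (∑' n : ℕ, ((n : ℝ) + 1) * (((n : ℝ) + 1) + α) * ‖γ (n + 1)‖ ^ 2 * r ^ (2 * (n + 1)) = r ^ 2 / (1 - r ^ 2) + α * Real.log (1 / (1 - r ^ 2)) → IsKoebeRotation f) := by
  obtain ⟨g, hga, hg0, hge, hgc⟩ := hγ
  have hg : LogCoeff.IsLog f g :=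
    ⟨hga.differentiableOn, hg0, fun z hz hz0 => hge z (by simpa using hz) hz0⟩
  have hco : ∀ n : ℕ, ‖LogCoeff.co g (n + 1)‖ ^ 2 = 4 * ‖γ (n + 1)‖ ^ 2 := by
    intro n
    have hn : ((n + 1).factorial : ℂ) ≠ 0 := by exact_mod_cast (n + 1).factorial_ne_zero
    rw [LogCoeff.co, hgc (n + 1) (by omega), mul_div_cancel_left₀ _ hn, norm_mul,
      Complex.norm_ofNat]
    ring
  obtain ⟨κ, hκ, hN⟩ := LogCoeff.sum_le_with_gain hr0 hr1 hcond hf hg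
  have h1 := (LogCoeff.two_bound_S hf hg).1
  have hnn : ∀ n : ℕ,
      0 ≤ ((n : ℝ) + 1) * (((n : ℝ) + 1) + α) * ‖γ (n + 1)‖ ^ 2 * r ^ (2 * (n + 1)) := by
    intro n
    have : 0 ≤ (n : ℝ) + 1 + α := by linarith [Nat.cast_nonneg (α := ℝ) n]
    positivity
  have hle : ∑' n : ℕ,
      ((n : ℝ) + 1) * (((n : ℝ) + 1) + α) * ‖γ (n + 1)‖ ^ 2 * r ^ (2 * (n + 1)) ≤
        r ^ 2 / (1 - r ^ 2) + α * Real.log (1 / (1 - r ^ 2)) -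
          κ / 4 * (4 - ‖LogCoeff.co g 1‖ ^ 2) := by
    refine Real.tsum_le_of_sum_range_le hnn fun N => ?_
    refine (Finset.sum_le_sum_of_subset_of_nonneg
      (Finset.range_mono (Nat.le_succ N)) fun n _ _ => hnn n).trans ?_
    have h4 := hN N
    have e : ∀ n : ℕ, ((n : ℝ) + 1) * (((n : ℝ) + 1) + α) * ‖LogCoeff.co g (n + 1)‖ ^ 2 *
        r ^ (2 * (n + 1)) =
        4 * (((n : ℝ) + 1) * (((n : ℝ) + 1) + α) * ‖γ (n + 1)‖ ^ 2 * r ^ (2 * (n + 1))) := by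
      intro n
      rw [hco n]; ring
    rw [Finset.sum_congr rfl fun n _ => e n, ← Finset.mul_sum] at h4
    linarith
  have hsq : 0 ≤ 4 - ‖LogCoeff.co g 1‖ ^ 2 := by nlinarith [norm_nonneg (LogCoeff.co g 1)]
  refine ⟨hle.trans (by linarith [mul_nonneg hκ.le hsq]), fun heq => ?_⟩
  rw [heq] at hle
  have hzero : 4 - ‖LogCoeff.co g 1‖ ^ 2 ≤ 0 := by
    by_contra hc
    linarith [mul_pos hκ (not_le.1 hc)]
  refine LogCoeff.koebe_of_co_one hf hg (le_antisymm h1 ?_)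
  nlinarith [norm_nonneg (LogCoeff.co g 1)]
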